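/- arXiv:1407.4339 — 4 statements merged into one kernel-verified Lean document; each statement's English description precedes it below -/
import Mathlib

section
/- Let G be a multigraph with maximum degree Δ, let k ≥ 1, and take the palette K = {1, …, ⌊(3Δ+k)/2⌋}. If G is properly precoloured so that every vertex is incident with at most k precoloured edges, then the precolouring extends to a proper edge-colouring of all of G using colours from K. -/
variable {V E : Type*}

/-- Edges `e` and `f` of a multigraph (given by its endpoint map `ends`) are adjacent:
they are distinct and share an endpoint. -/
def MAdj (ends : E → Sym2 V) (e f : E) : Prop :=
  e ≠ f ∧ ∃ v : V, v ∈ ends e ∧ v ∈ ends f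

/-- `c` is a proper edge-colouring of the multigraph: adjacent edges get distinct colours. -/
def MProper (ends : E → Sym2 V) (c : E → ℕ) : Prop :=
  ∀ e f : E, MAdj ends e f → c e ≠ c f

/-- The degree of a vertex `v`: the number of edges incident with it. -/
noncomputable def mdeg (ends : E → Sym2 V) (v : V) : ℕ :=
  {e : E | v ∈ ends e}.ncard


open Classical in
/-- Kernel (stable matching) lemma. -/
lemma bkw_kernel {E A B : Type*} (l : E → A) (r : E → B) (c : E → ℤ) :
    ∀ (n : ℕ) (F : Finset E), F.card = n →
    (∀ e ∈ F, ∀ f ∈ F, l e = l f → c e = c f → e = f) →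
    (∀ e ∈ F, ∀ f ∈ F, r e = r f → c e = c f → e = f) →
    ∃ M ⊆ F, (∀ e ∈ M, ∀ f ∈ M, (l e = l f ∨ r e = r f) → e = f) ∧
      ∀ e ∈ F, e ∉ M → ∃ f ∈ M, (l f = l e ∧ c e < c f) ∨ (r f = r e ∧ c f < c e) := by
  intro n
  induction n with
  | zero =>
    intro F hF _ _
    rw [Finset.card_eq_zero] at hF
    subst hF
    exact ⟨∅, by simp, by simp, by simp⟩
  | succ n ih =>
    intro F hF hl hr
    set T := F.filter (fun e => ∀ f ∈ F, l f = l e → c f ≤ c e) with hT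
    by_cases h : ∀ e ∈ T, ∀ f ∈ T, r e = r f → e = f
    · refine ⟨T, Finset.filter_subset _ _, ?_, ?_⟩
      · intro e he f hf hor
        rcases hor with h1 | h1
        · simp only [hT, Finset.mem_filter] at he hf
          exact hl e he.1 f hf.1 h1 (le_antisymm (hf.2 e he.1 h1) (he.2 f hf.1 h1.symm))
        · exact h e he f hf h1
      · intro e he heT
        obtain ⟨f, hf, hmax⟩ := Finset.exists_max_image (F.filter (fun f => l f = l e)) c
          ⟨e, by simp [he]⟩
        simp only [Finset.mem_filter] at hf hmax
        have hfT : f ∈ T := by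
          simp only [hT, Finset.mem_filter]
          exact ⟨hf.1, fun g hg hgl => hmax g ⟨hg, hgl.trans hf.2⟩⟩
        refine ⟨f, hfT, Or.inl ⟨hf.2, ?_⟩⟩
        refine lt_of_le_of_ne (hmax e ⟨he, rfl⟩) ?_
        intro hce
        have := hl e he f hf.1 hf.2.symm hce
        subst this
        exact heT hfT
    · push Not at h
      obtain ⟨e₀, he₀, f₀, hf₀, hr₀, hne₀⟩ := h
      have key : ∃ e ∈ T, ∃ f ∈ T, r e = r f ∧ c e < c f := by
        have hc : c e₀ ≠ c f₀ := fun hc => hne₀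
          (hr e₀ (Finset.mem_filter.1 he₀).1 f₀ (Finset.mem_filter.1 hf₀).1 hr₀ hc)
        rcases lt_or_gt_of_ne hc with h1 | h1
        · exact ⟨e₀, he₀, f₀, hf₀, hr₀, h1⟩
        · exact ⟨f₀, hf₀, e₀, he₀, hr₀.symm, h1⟩
      obtain ⟨e, he, f, hf, hef, hc⟩ := key
      have heF := (Finset.mem_filter.1 he).1
      have hfF := (Finset.mem_filter.1 hf).1
      have hne : e ≠ f := by rintro rfl; exact lt_irrefl _ hc
      obtain ⟨M, hMF, hM1, hM2⟩ := ih (F.erase f) (by rw [Finset.card_erase_of_mem hfF, hF]; rfl)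
        (fun a ha b hb => hl a (Finset.mem_of_mem_erase ha) b (Finset.mem_of_mem_erase hb))
        (fun a ha b hb => hr a (Finset.mem_of_mem_erase ha) b (Finset.mem_of_mem_erase hb))
      refine ⟨M, hMF.trans (Finset.erase_subset _ _), hM1, ?_⟩
      intro g hg hgM
      by_cases hgf : g = f
      · subst hgf
        by_cases heM : e ∈ M
        · exact ⟨e, heM, Or.inr ⟨hef, hc⟩⟩
        · obtain ⟨x, hx, h1 | h1⟩ := hM2 e (Finset.mem_erase.2 ⟨hne, heF⟩) heM
          · have := (Finset.mem_filter.1 he).2 x (Finset.mem_of_mem_erase (hMF hx)) h1.1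
            omega
          · exact ⟨x, hx, Or.inr ⟨h1.1.trans hef, h1.2.trans hc⟩⟩
      · exact hM2 g (Finset.mem_erase.2 ⟨hgf, hg⟩) hgM

open Classical in
/-- Galvin's argument. -/
lemma bkw_galvin {E A B : Type*} (l : E → A) (r : E → B) (c : E → ℤ) :
    ∀ (n : ℕ) (F : Finset E) (L : E → Finset ℕ), F.card = n →
    (∀ e ∈ F, ∀ f ∈ F, l e = l f → c e = c f → e = f) →
    (∀ e ∈ F, ∀ f ∈ F, r e = r f → c e = c f → e = f) →
    (∀ e ∈ F, (F.filter (fun f => l f = l e ∧ c e < c f)).card +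
      (F.filter (fun f => r f = r e ∧ c f < c e)).card < (L e).card) →
    ∃ col : E → ℕ, (∀ e ∈ F, col e ∈ L e) ∧
      ∀ e ∈ F, ∀ f ∈ F, e ≠ f → (l e = l f ∨ r e = r f) → col e ≠ col f := by
  intro n
  induction n using Nat.strong_induction_on with
  | _ n ih =>
  intro F L hF hl hr hL
  rcases F.eq_empty_or_nonempty with h0 | ⟨e₀, he₀⟩
  · subst h0
    exact ⟨fun _ => 0, by simp, by simp⟩
  obtain ⟨α, hα⟩ : (L e₀).Nonempty := Finset.card_pos.1 (lt_of_le_of_lt (Nat.zero_le _) (hL e₀ he₀))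
  obtain ⟨M, hMF, hM1, hM2⟩ := bkw_kernel l r c _ (F.filter (fun e => α ∈ L e)) rfl
    (fun a ha b hb => hl a (Finset.mem_filter.1 ha).1 b (Finset.mem_filter.1 hb).1)
    (fun a ha b hb => hr a (Finset.mem_filter.1 ha).1 b (Finset.mem_filter.1 hb).1)
  have hMF' : M ⊆ F := hMF.trans (Finset.filter_subset _ _)
  have hMne : M.Nonempty := by
    by_cases h : e₀ ∈ M
    · exact ⟨_, h⟩
    · obtain ⟨f, hf, _⟩ := hM2 e₀ (Finset.mem_filter.2 ⟨he₀, hα⟩) h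
      exact ⟨f, hf⟩
  have hlt : (F \ M).card < n := by
    rw [Finset.card_sdiff_of_subset hMF', hF]
    have := hMne.card_pos
    have := Finset.card_le_card hMF'
    omega
  obtain ⟨col, hc1, hc2⟩ := ih _ hlt (F \ M) (fun e => (L e).erase α) rfl
    (fun a ha b hb => hl a (Finset.mem_sdiff.1 ha).1 b (Finset.mem_sdiff.1 hb).1)
    (fun a ha b hb => hr a (Finset.mem_sdiff.1 ha).1 b (Finset.mem_sdiff.1 hb).1) (by
      intro e he
      rw [Finset.mem_sdiff] at he
      have h := hL e he.1
      have s1 : (F \ M).filter (fun f => l f = l e ∧ c e < c f) ⊆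
        F.filter (fun f => l f = l e ∧ c e < c f) :=
        Finset.filter_subset_filter _ Finset.sdiff_subset
      have s2 : (F \ M).filter (fun f => r f = r e ∧ c f < c e) ⊆
        F.filter (fun f => r f = r e ∧ c f < c e) :=
        Finset.filter_subset_filter _ Finset.sdiff_subset
      by_cases hαe : α ∈ L e
      · rw [Finset.card_erase_of_mem hαe]
        obtain ⟨f, hf, h1 | h1⟩ := hM2 e (Finset.mem_filter.2 ⟨he.1, hαe⟩) he.2
        · have : ((F \ M).filter (fun f => l f = l e ∧ c e < c f)).card <
              (F.filter (fun f => l f = l e ∧ c e < c f)).card :=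
            Finset.card_lt_card (Finset.ssubset_iff_subset_ne.2 ⟨s1, fun heq => by
              have : f ∈ (F \ M).filter (fun f => l f = l e ∧ c e < c f) := by
                rw [heq]; exact Finset.mem_filter.2 ⟨hMF' hf, h1⟩
              simp [hf] at this⟩)
          have := Finset.card_le_card s2
          omega
        · have : ((F \ M).filter (fun f => r f = r e ∧ c f < c e)).card <
              (F.filter (fun f => r f = r e ∧ c f < c e)).card :=
            Finset.card_lt_card (Finset.ssubset_iff_subset_ne.2 ⟨s2, fun heq => by
              have : f ∈ (F \ M).filter (fun f => r f = r e ∧ c f < c e) := by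
                rw [heq]; exact Finset.mem_filter.2 ⟨hMF' hf, h1⟩
              simp [hf] at this⟩)
          have := Finset.card_le_card s1
          omega
      · rw [Finset.erase_eq_of_notMem hαe]
        have := Finset.card_le_card s1
        have := Finset.card_le_card s2
        omega)
  refine ⟨fun e => if e ∈ M then α else col e, ?_, ?_⟩
  · intro e he
    by_cases heM : e ∈ M
    · simp only [heM, if_true]
      exact (Finset.mem_filter.1 (hMF heM)).2
    · simp only [heM, if_false]
      exact Finset.mem_of_mem_erase (hc1 e (Finset.mem_sdiff.2 ⟨he, heM⟩))
  · intro e he f hf hne hor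
    by_cases heM : e ∈ M <;> by_cases hfM : f ∈ M <;> simp only [heM, hfM, if_true, if_false]
    · exact fun _ => hne (hM1 e heM f hfM hor)
    · exact (Finset.ne_of_mem_erase (hc1 f (Finset.mem_sdiff.2 ⟨hf, hfM⟩))).symm
    · exact Finset.ne_of_mem_erase (hc1 e (Finset.mem_sdiff.2 ⟨he, heM⟩))
    · exact hc2 e (Finset.mem_sdiff.2 ⟨he, heM⟩) f (Finset.mem_sdiff.2 ⟨hf, hfM⟩) hne hor

open Classical in
lemma bkw_count {E A B : Type*} (l : E → A) (r : E → B) (F : Finset E) (Δ : ℕ) (hΔ : 0 < Δ)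
    (X : Finset A) (Y : Finset B)
    (hX : ∀ a ∈ X, (F.filter (fun e => l e = a)).card = Δ)
    (hY : ∀ b ∈ Y, (F.filter (fun e => r e = b)).card ≤ Δ)
    (hXY : ∀ e ∈ F, l e ∈ X → r e ∈ Y) : X.card ≤ Y.card := by
  have h1 : (F.filter (fun e => l e ∈ X)).card = X.card * Δ := by
    rw [Finset.card_eq_sum_card_fiberwise (s := F.filter (fun e => l e ∈ X)) (f := l) (t := X)
      (fun e he => (Finset.mem_filter.1 he).2)]
    rw [← smul_eq_mul, ← Finset.sum_const]
    refine Finset.sum_congr rfl fun a ha => ?_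
    rw [← hX a ha, Finset.filter_filter]
    congr 1
    ext e
    simp only [Finset.mem_filter]
    constructor
    · rintro ⟨h1, h2, h3⟩; exact ⟨h1, h3⟩
    · rintro ⟨h1, h2⟩; exact ⟨h1, h2 ▸ ha, h2⟩
  have h2 : (F.filter (fun e => r e ∈ Y)).card ≤ Y.card * Δ := by
    rw [Finset.card_eq_sum_card_fiberwise (s := F.filter (fun e => r e ∈ Y)) (f := r) (t := Y)
      (fun e he => (Finset.mem_filter.1 he).2)]
    rw [← smul_eq_mul, ← Finset.sum_const]
    refine Finset.sum_le_sum fun b hb => le_trans (Finset.card_le_card ?_) (hY b hb)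
    exact Finset.filter_subset_filter _ (Finset.filter_subset _ _)
  have h3 : F.filter (fun e => l e ∈ X) ⊆ F.filter (fun e => r e ∈ Y) := by
    intro e he
    rw [Finset.mem_filter] at he ⊢
    exact ⟨he.1, hXY e he.1 he.2⟩
  have h4 := Finset.card_le_card h3
  exact Nat.le_of_mul_le_mul_right (by omega) hΔ

open Classical in
/-- Matching saturating `X` on the left and `T` on the right. -/
lemma bkw_match {E A B : Type*} (l : E → A) (r : E → B) (F : Finset E) (Δ : ℕ) (hΔ : 0 < Δ)
    (hB : ∀ b, (F.filter (fun e => r e = b)).card ≤ Δ)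
    (X : Finset A) (T : Finset B)
    (hX : ∀ a ∈ X, (F.filter (fun e => l e = a)).card = Δ)
    (hTF : T ⊆ F.image r)
    (hT : ∀ Y ⊆ T, Y.card ≤ (X.filter (fun a => ∃ e ∈ F, l e = a ∧ r e ∈ Y)).card) :
    ∃ φ : X → E, (∀ a, φ a ∈ F ∧ l (φ a) = a) ∧ (∀ a b, r (φ a) = r (φ b) → a = b) ∧
      ∀ b ∈ T, ∃ a, r (φ a) = b := by
  set Bs := F.image r with hBs
  have hle : X.card ≤ Bs.card := bkw_count l r F Δ hΔ X Bs hX (fun b _ => hB b)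
    (fun e he _ => Finset.mem_image_of_mem _ he)
  set m := Bs.card - X.card with hm
  let t : Bs → Finset (A ⊕ ℕ) := fun b =>
    (X.filter (fun a => ∃ e ∈ F, l e = a ∧ r e = b)).disjSum
      (if (b : B) ∈ T then ∅ else Finset.range m)
  have hall : ∀ s : Finset Bs, s.card ≤ (s.biUnion t).card := by
    intro s
    have hsc : (s.map (Function.Embedding.subtype _)).card = s.card := Finset.card_map _
    by_cases hs : ∀ b ∈ s, (b : B) ∈ T
    · have h1 := hT (s.map (Function.Embedding.subtype _)) (by
        intro b hb
        rw [Finset.mem_map] at hb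
        obtain ⟨b', hb', rfl⟩ := hb
        exact hs b' hb')
      rw [hsc] at h1
      refine h1.trans ?_
      rw [← Finset.card_map Function.Embedding.inl]
      apply Finset.card_le_card
      intro x hx
      simp only [Finset.mem_map, Finset.mem_filter] at hx
      obtain ⟨a, ⟨haX, e, heF, hea, b, hb, hbe⟩, rfl⟩ := hx
      rw [Finset.mem_biUnion]
      refine ⟨b, hb, ?_⟩
      simp only [t, Function.Embedding.inl_apply, Finset.inl_mem_disjSum, Finset.mem_filter]
      exact ⟨haX, e, heF, hea, hbe.symm⟩
    · push Not at hs
      obtain ⟨b₀, hb₀, hb₀T⟩ := hs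
      set N := X.filter (fun a => ∃ e ∈ F, l e = a ∧ r e ∈ s.map (Function.Embedding.subtype _))
        with hN
      have hsub : N.disjSum (Finset.range m) ⊆ s.biUnion t := by
        intro x hx
        rw [Finset.mem_biUnion]
        rcases x with a | i
        · rw [Finset.inl_mem_disjSum, hN] at hx
          simp only [Finset.mem_map, Finset.mem_filter] at hx
          obtain ⟨haX, e, heF, hea, b, hb, hbe⟩ := hx
          refine ⟨b, hb, ?_⟩
          simp only [t, Finset.inl_mem_disjSum, Finset.mem_filter]
          exact ⟨haX, e, heF, hea, hbe.symm⟩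
        · rw [Finset.inr_mem_disjSum] at hx
          refine ⟨b₀, hb₀, ?_⟩
          simp only [t, Finset.inr_mem_disjSum, hb₀T, if_false]
          exact hx
      have h1 := Finset.card_le_card hsub
      rw [Finset.card_disjSum, Finset.card_range] at h1
      have h2 := bkw_count l r F Δ hΔ (X \ N) (Bs \ s.map (Function.Embedding.subtype _))
        (fun a ha => hX a (Finset.mem_sdiff.1 ha).1) (fun b _ => hB b) (by
          intro e he hle
          rw [Finset.mem_sdiff] at hle ⊢
          refine ⟨Finset.mem_image_of_mem _ he, fun h => hle.2 ?_⟩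
          rw [hN, Finset.mem_filter]
          exact ⟨hle.1, e, he, rfl, h⟩)
      have hNX : N ⊆ X := Finset.filter_subset _ _
      have hsB : s.map (Function.Embedding.subtype _) ⊆ Bs := by
        intro b hb
        rw [Finset.mem_map] at hb
        obtain ⟨b', _, rfl⟩ := hb
        exact b'.2
      rw [Finset.card_sdiff_of_subset hNX, Finset.card_sdiff_of_subset hsB, hsc] at h2
      have := Finset.card_le_card hNX
      have := Finset.card_le_card hsB
      omega
  obtain ⟨g, hg, hgt⟩ := (Finset.all_card_le_biUnion_card_iff_exists_injective t).1 hall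
  have himg : Finset.univ.image g = X.disjSum (Finset.range m) := by
    apply Finset.eq_of_subset_of_card_le
    · intro x hx
      rw [Finset.mem_image] at hx
      obtain ⟨b, _, rfl⟩ := hx
      have := hgt b
      rcases hgb : g b with a | i
      · rw [hgb] at this
        simp only [t, Finset.inl_mem_disjSum, Finset.mem_filter] at this
        simpa using this.1
      · rw [hgb] at this
        simp only [t, Finset.inr_mem_disjSum] at this
        split_ifs at this
        · simp at this
        · simpa using this
    · rw [Finset.card_image_of_injective _ hg, Finset.card_disjSum, Finset.card_range,
        Finset.card_univ, Fintype.card_coe]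
      omega
  have hex : ∀ a : X, ∃ e, e ∈ F ∧ l e = a ∧ ∃ b : Bs, g b = Sum.inl (a : A) ∧ r e = b := by
    intro a
    have : (Sum.inl (a : A) : A ⊕ ℕ) ∈ Finset.univ.image g := by
      rw [himg]; simp
    rw [Finset.mem_image] at this
    obtain ⟨b, _, hb⟩ := this
    have h := hgt b
    rw [hb] at h
    simp only [t, Finset.inl_mem_disjSum, Finset.mem_filter] at h
    obtain ⟨_, e, he, h1, h2⟩ := h
    exact ⟨e, he, h1, b, hb, h2⟩
  choose φ h1 h2 β h3 h4 using hex
  refine ⟨φ, fun a => ⟨h1 a, h2 a⟩, ?_, ?_⟩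
  · intro a b hab
    rw [h4, h4] at hab
    have h5 := h3 a
    rw [Subtype.ext hab, h3 b] at h5
    exact Subtype.ext (Sum.inl.inj h5).symm
  · intro b hb
    have h := hgt ⟨b, hTF hb⟩
    rcases hgb : g ⟨b, hTF hb⟩ with a | i
    · rw [hgb] at h
      simp only [t, Finset.inl_mem_disjSum, Finset.mem_filter] at h
      refine ⟨⟨a, h.1⟩, ?_⟩
      rw [h4]
      have := hg ((h3 ⟨a, h.1⟩).trans hgb.symm)
      rw [this]
    · rw [hgb] at h
      simp [t, hb] at h

open Classical in
/-- Existence of a Galvin-type ordering of the edges in `F`. -/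
def BkwRank {E A B : Type*} (l : E → A) (r : E → B) (F : Finset E) : Prop :=
  ∃ c : E → ℤ,
    (∀ e ∈ F, ∀ f ∈ F, l e = l f → c e = c f → e = f) ∧
    (∀ e ∈ F, ∀ f ∈ F, r e = r f → c e = c f → e = f) ∧
    (∀ e ∈ F, (F.filter (fun f => l f = l e ∧ c e < c f)).card +
      (F.filter (fun f => r f = r e ∧ c f < c e)).card <
        max (F.filter (fun f => l f = l e)).card (F.filter (fun f => r f = r e)).card)

lemma BkwRank.swap {E A B : Type*} {l : E → A} {r : E → B} {F : Finset E}
    (h : BkwRank r l F) : BkwRank l r F := by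
  obtain ⟨c, h1, h2, h3⟩ := h
  refine ⟨fun e => - c e, ?_, ?_, ?_⟩
  · intro e he f hf hl hc
    exact h2 e he f hf hl (neg_injective hc)
  · intro e he f hf hl hc
    exact h1 e he f hf hl (neg_injective hc)
  · intro e he
    have := h3 e he
    rw [add_comm, max_comm]
    refine lt_of_eq_of_lt ?_ this
    congr 2
    · ext f; simp
    · ext f; simp

open Classical in
lemma bkw_step {E A B : Type*} (l : E → A) (r : E → B) (F M : Finset E)
    (hM : ∀ e ∈ M, ∀ f ∈ M, (l e = l f ∨ r e = r f) → e = f)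
    (hdrop : ∀ e ∈ F, e ∉ M → (∃ f ∈ M, l f = l e) →
      max ((F \ M).filter (fun f => l f = l e)).card ((F \ M).filter (fun f => r f = r e)).card <
      max (F.filter (fun f => l f = l e)).card (F.filter (fun f => r f = r e)).card)
    (h : BkwRank l r (F \ M)) : BkwRank l r F := by
  obtain ⟨c, h1, h2, h3⟩ := h
  obtain ⟨b, hb⟩ : ∃ b : ℤ, ∀ e ∈ F, c e < b := by
    obtain ⟨b, hb⟩ := Finset.exists_le (F.image c)
    exact ⟨b + 1, fun e he => Int.lt_add_one_of_le (hb _ (Finset.mem_image_of_mem _ he))⟩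
  have cM : ∀ e ∈ M, (if e ∈ M then b else c e) = b := fun e he => if_pos he
  have cN : ∀ e ∉ M, (if e ∈ M then b else c e) = c e := fun e he => if_neg he
  refine ⟨fun e => if e ∈ M then b else c e, ?_, ?_, ?_⟩
  · intro e he f hf hl hc
    by_cases heM : e ∈ M <;> by_cases hfM : f ∈ M <;>
      simp only [heM, hfM, if_true, if_false] at hc
    · exact hM e heM f hfM (Or.inl hl)
    · have := hb f hf; omega
    · have := hb e he; omega
    · exact h1 e (Finset.mem_sdiff.2 ⟨he, heM⟩) f (Finset.mem_sdiff.2 ⟨hf, hfM⟩) hl hc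
  · intro e he f hf hl hc
    by_cases heM : e ∈ M <;> by_cases hfM : f ∈ M <;>
      simp only [heM, hfM, if_true, if_false] at hc
    · exact hM e heM f hfM (Or.inr hl)
    · have := hb f hf; omega
    · have := hb e he; omega
    · exact h2 e (Finset.mem_sdiff.2 ⟨he, heM⟩) f (Finset.mem_sdiff.2 ⟨hf, hfM⟩) hl hc
  · intro e he
    by_cases heM : e ∈ M
    · simp only [heM, if_true]
      have e1 : F.filter (fun f => l f = l e ∧ b < if f ∈ M then b else c f) = ∅ := by
        rw [Finset.filter_eq_empty_iff]
        rintro f hf ⟨_, hlt⟩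
        have := hb f hf
        split_ifs at hlt <;> omega
      have e2 : (F.filter (fun f => r f = r e ∧ (if f ∈ M then b else c f) < b)).card <
          (F.filter (fun f => r f = r e)).card := by
        apply Finset.card_lt_card
        rw [Finset.ssubset_iff_of_subset]
        · exact ⟨e, by simp [he], by simp [heM]⟩
        · intro f hf
          rw [Finset.mem_filter] at hf ⊢
          exact ⟨hf.1, hf.2.1⟩
      rw [e1, Finset.card_empty, zero_add]
      exact lt_of_lt_of_le e2 (le_max_right _ _)
    · simp only [heM, if_false]
      have h := h3 e (Finset.mem_sdiff.2 ⟨he, heM⟩)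
      have e2 : (F.filter (fun f => r f = r e ∧ (if f ∈ M then b else c f) < c e)).card ≤
          ((F \ M).filter (fun f => r f = r e ∧ c f < c e)).card := by
        apply Finset.card_le_card
        intro f hf
        rw [Finset.mem_filter] at hf ⊢
        obtain ⟨hf1, hf2, hf3⟩ := hf
        have := hb e he
        by_cases hfM : f ∈ M
        · rw [if_pos hfM] at hf3; omega
        · rw [if_neg hfM] at hf3
          exact ⟨Finset.mem_sdiff.2 ⟨hf1, hfM⟩, hf2, hf3⟩
      have e1 : (F.filter (fun f => l f = l e ∧ c e < if f ∈ M then b else c f)).card ≤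
          ((F \ M).filter (fun f => l f = l e ∧ c e < c f)).card +
            (M.filter (fun f => l f = l e)).card := by
        refine le_trans (Finset.card_le_card ?_) (Finset.card_union_le _ _)
        intro f hf
        rw [Finset.mem_union, Finset.mem_filter, Finset.mem_filter]
        rw [Finset.mem_filter] at hf
        obtain ⟨hf1, hf2, hf3⟩ := hf
        by_cases hfM : f ∈ M
        · exact Or.inr ⟨hfM, hf2⟩
        · rw [if_neg hfM] at hf3
          exact Or.inl ⟨Finset.mem_sdiff.2 ⟨hf1, hfM⟩, hf2, hf3⟩
      by_cases hex : ∃ f ∈ M, l f = l e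
      · have hd := hdrop e he heM hex
        have : (M.filter (fun f => l f = l e)).card ≤ 1 := by
          rw [Finset.card_le_one]
          intro x hx y hy
          rw [Finset.mem_filter] at hx hy
          exact hM x hx.1 y hy.1 (Or.inl (hx.2.trans hy.2.symm))
        omega
      · have e3 : (M.filter (fun f => l f = l e)) = ∅ := by
          rw [Finset.filter_eq_empty_iff]
          intro f hf hl
          exact hex ⟨f, hf, hl⟩
        rw [e3, Finset.card_empty] at e1
        have m1 : ((F \ M).filter (fun f => l f = l e)).card ≤
            (F.filter (fun f => l f = l e)).card :=
          Finset.card_le_card (Finset.filter_subset_filter _ Finset.sdiff_subset)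
        have m2 : ((F \ M).filter (fun f => r f = r e)).card ≤
            (F.filter (fun f => r f = r e)).card :=
          Finset.card_le_card (Finset.filter_subset_filter _ Finset.sdiff_subset)
        have m3 := max_le_max m1 m2
        omega

open Classical in
lemma bkw_side {E A B : Type*} (l : E → A) (r : E → B) (F : Finset E) (Δ : ℕ) (hΔ : 0 < Δ)
    (hB : ∀ b, (F.filter (fun e => r e = b)).card ≤ Δ)
    (CA : Finset A) (CB : Finset B)
    (hCA : ∀ a ∈ CA, (F.filter (fun e => l e = a)).card = Δ)
    (hCB : ∀ b ∈ CB, (F.filter (fun e => r e = b)).card = Δ)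
    (hcov : ∀ e ∈ F, (F.filter (fun f => l f = l e)).card = Δ →
      (F.filter (fun f => r f = r e)).card = Δ → l e ∈ CA ∨ r e ∈ CB)
    (hmin : ∀ (CA' : Finset A) (CB' : Finset B),
      (∀ a ∈ CA', (F.filter (fun e => l e = a)).card = Δ) →
      (∀ b ∈ CB', (F.filter (fun e => r e = b)).card = Δ) →
      (∀ e ∈ F, (F.filter (fun f => l f = l e)).card = Δ →
        (F.filter (fun f => r f = r e)).card = Δ → l e ∈ CA' ∨ r e ∈ CB') →
      CA.card + CB.card ≤ CA'.card + CB'.card)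
    (a₀ : A) (ha₀ : (F.filter (fun e => l e = a₀)).card = Δ) (ha₀C : a₀ ∉ CA)
    (ih : ∀ F' : Finset E, F'.card < F.card → BkwRank l r F') : BkwRank l r F := by
  set X := (F.image l).filter (fun a => (F.filter (fun e => l e = a)).card = Δ ∧ a ∉ CA) with hXdef
  have hX : ∀ a ∈ X, (F.filter (fun e => l e = a)).card = Δ := by
    intro a ha
    rw [hXdef, Finset.mem_filter] at ha
    exact ha.2.1
  have memX : ∀ a, (F.filter (fun e => l e = a)).card = Δ → a ∉ CA → a ∈ X := by
    intro a ha haC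
    rw [hXdef, Finset.mem_filter]
    refine ⟨?_, ha, haC⟩
    obtain ⟨e, he⟩ : (F.filter (fun e => l e = a)).Nonempty := Finset.card_pos.1 (by omega)
    rw [Finset.mem_filter] at he
    exact Finset.mem_image.2 ⟨e, he⟩
  have hTF : CB ⊆ F.image r := by
    intro b hb
    obtain ⟨e, he⟩ : (F.filter (fun e => r e = b)).Nonempty :=
      Finset.card_pos.1 (by rw [hCB b hb]; exact hΔ)
    rw [Finset.mem_filter] at he
    exact Finset.mem_image.2 ⟨e, he⟩
  obtain ⟨φ, hφ1, hφ2, hφ3⟩ := bkw_match l r F Δ hΔ hB X CB hX hTF (by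
    intro Y hY
    set N := X.filter (fun a => ∃ e ∈ F, l e = a ∧ r e ∈ Y) with hN
    have h := hmin (CA ∪ N) (CB \ Y)
      (by
        intro a ha
        rcases Finset.mem_union.1 ha with h | h
        · exact hCA a h
        · exact hX a (Finset.mem_filter.1 h).1)
      (fun b hb => hCB b (Finset.mem_sdiff.1 hb).1)
      (by
        intro e he h1 h2
        by_cases hA : l e ∈ CA
        · exact Or.inl (Finset.mem_union_left _ hA)
        · have hBm := (hcov e he h1 h2).resolve_left hA
          by_cases hYm : r e ∈ Y
          · left
            apply Finset.mem_union_right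
            rw [hN, Finset.mem_filter]
            exact ⟨memX _ h1 hA, e, he, rfl, hYm⟩
          · exact Or.inr (Finset.mem_sdiff.2 ⟨hBm, hYm⟩))
    rw [Finset.card_sdiff_of_subset hY] at h
    have := Finset.card_union_le CA N
    have := Finset.card_le_card hY
    omega)
  set M := Finset.univ.image φ with hMdef
  have hMF : M ⊆ F := by
    intro e he
    rw [hMdef, Finset.mem_image] at he
    obtain ⟨a, _, rfl⟩ := he
    exact (hφ1 a).1
  have hMne : M.Nonempty := ⟨φ ⟨a₀, memX a₀ ha₀ ha₀C⟩, Finset.mem_image_of_mem _ (Finset.mem_univ _)⟩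
  refine bkw_step l r F M ?_ ?_ (ih _ ?_)
  · intro e he f hf h
    rw [hMdef, Finset.mem_image] at he hf
    obtain ⟨a, _, rfl⟩ := he
    obtain ⟨a', _, rfl⟩ := hf
    rcases h with h | h
    · rw [(hφ1 a).2, (hφ1 a').2] at h
      rw [Subtype.ext h]
    · rw [hφ2 a a' h]
  · rintro e he heM ⟨f, hf, hfe⟩
    have hlX : l e ∈ X := by
      rw [hMdef, Finset.mem_image] at hf
      obtain ⟨a, _, rfl⟩ := hf
      rw [← hfe, (hφ1 a).2]
      exact a.2
    have hd := hX _ hlX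
    have gen : ∀ (P : E → Prop), (∃ g ∈ M, P g) →
        ((F \ M).filter P).card < (F.filter P).card := by
      rintro P ⟨g, hg, hPg⟩
      apply Finset.card_lt_card
      rw [Finset.ssubset_iff_of_subset (Finset.filter_subset_filter _ Finset.sdiff_subset)]
      exact ⟨g, Finset.mem_filter.2 ⟨hMF hg, hPg⟩, by simp [hg]⟩
    have g1 := gen (fun f => l f = l e) ⟨f, hf, hfe⟩
    have g2 : ((F \ M).filter (fun f => r f = r e)).card < Δ := by
      by_cases hr : (F.filter (fun f => r f = r e)).card = Δ
      · have hnc : l e ∉ CA := by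
          rw [hXdef, Finset.mem_filter] at hlX
          exact hlX.2.2
        obtain ⟨a, ha⟩ := hφ3 (r e) ((hcov e he hd hr).resolve_left hnc)
        have := gen (fun f => r f = r e) ⟨φ a, Finset.mem_image_of_mem _ (Finset.mem_univ _), ha⟩
        rw [← hr]; exact this
      · have h1 := hB (r e)
        have m2 : ((F \ M).filter (fun f => r f = r e)).card ≤
            (F.filter (fun f => r f = r e)).card :=
          Finset.card_le_card (Finset.filter_subset_filter _ Finset.sdiff_subset)
        omega
    rw [hd] at g1 ⊢
    exact lt_of_lt_of_le (max_lt g1 g2) (le_max_left _ _)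
  · rw [Finset.card_sdiff_of_subset hMF]
    have := hMne.card_pos
    have := Finset.card_le_card hMF
    omega

open Classical in
lemma bkw_rank {E A B : Type*} (l : E → A) (r : E → B) :
    ∀ (n : ℕ) (F : Finset E), F.card = n → BkwRank l r F := by
  intro n
  induction n using Nat.strong_induction_on with
  | _ n ih =>
  intro F hF
  have ih' : ∀ F' : Finset E, F'.card < F.card → BkwRank l r F' :=
    fun F' h => ih _ (hF ▸ h) F' rfl
  rcases F.eq_empty_or_nonempty with h0 | hne
  · subst h0
    exact ⟨fun _ => 0, by simp, by simp, by simp⟩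
  obtain ⟨e₀, he₀, hmax⟩ := Finset.exists_max_image F (fun e =>
    max (F.filter (fun f => l f = l e)).card (F.filter (fun f => r f = r e)).card) hne
  set Δ := max (F.filter (fun f => l f = l e₀)).card (F.filter (fun f => r f = r e₀)).card with hΔdef
  have hΔ : 0 < Δ := lt_of_lt_of_le (Finset.card_pos.2 ⟨e₀, by simp [he₀]⟩) (le_max_left _ _)
  have hA : ∀ a, (F.filter (fun e => l e = a)).card ≤ Δ := by
    intro a
    rcases (F.filter (fun e => l e = a)).eq_empty_or_nonempty with h | ⟨e, he⟩
    · rw [h]; simp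
    · rw [Finset.mem_filter] at he
      have := hmax e he.1
      rw [he.2] at this
      exact le_trans (le_max_left _ _) this
  have hB : ∀ b, (F.filter (fun e => r e = b)).card ≤ Δ := by
    intro a
    rcases (F.filter (fun e => r e = a)).eq_empty_or_nonempty with h | ⟨e, he⟩
    · rw [h]; simp
    · rw [Finset.mem_filter] at he
      have := hmax e he.1
      rw [he.2] at this
      exact le_trans (le_max_right _ _) this
  let P : Finset A → Finset B → Prop := fun CA CB =>
    (∀ a ∈ CA, (F.filter (fun e => l e = a)).card = Δ) ∧
    (∀ b ∈ CB, (F.filter (fun e => r e = b)).card = Δ) ∧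
    (∀ e ∈ F, (F.filter (fun f => l f = l e)).card = Δ →
      (F.filter (fun f => r f = r e)).card = Δ → l e ∈ CA ∨ r e ∈ CB)
  set AΔ := (F.image l).filter (fun a => (F.filter (fun e => l e = a)).card = Δ) with hAΔ
  set BΔ := (F.image r).filter (fun a => (F.filter (fun e => r e = a)).card = Δ) with hBΔ
  have PA : P AΔ ∅ := by
    refine ⟨fun a ha => (Finset.mem_filter.1 ha).2, by simp, fun e he h1 _ => Or.inl ?_⟩
    exact Finset.mem_filter.2 ⟨Finset.mem_image_of_mem _ he, h1⟩
  have PB : P ∅ BΔ := by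
    refine ⟨by simp, fun a ha => (Finset.mem_filter.1 ha).2, fun e he _ h1 => Or.inr ?_⟩
    exact Finset.mem_filter.2 ⟨Finset.mem_image_of_mem _ he, h1⟩
  have hexn : ∃ n, ∃ CA CB, P CA CB ∧ CA.card + CB.card = n := ⟨_, AΔ, ∅, PA, rfl⟩
  obtain ⟨CA, CB, hP, hn⟩ := Nat.find_spec hexn
  have hmin : ∀ CA' CB', P CA' CB' → CA.card + CB.card ≤ CA'.card + CB'.card := by
    intro CA' CB' h
    rw [hn]
    exact Nat.find_min' hexn ⟨CA', CB', h, rfl⟩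
  by_cases c1 : ∃ a, (F.filter (fun e => l e = a)).card = Δ ∧ a ∉ CA
  · obtain ⟨a, ha, haC⟩ := c1
    exact bkw_side l r F Δ hΔ hB CA CB hP.1 hP.2.1 hP.2.2
      (fun CA' CB' h1 h2 h3 => hmin CA' CB' ⟨h1, h2, h3⟩) a ha haC ih'
  by_cases c2 : ∃ b, (F.filter (fun e => r e = b)).card = Δ ∧ b ∉ CB
  · obtain ⟨a, ha, haC⟩ := c2
    refine (bkw_side r l F Δ hΔ hA CB CA hP.2.1 hP.1 (fun e he h1 h2 => (hP.2.2 e he h2 h1).symm)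
      (fun CA' CB' h1 h2 h3 => ?_) a ha haC (fun F' h => (ih' F' h).swap)).swap
    have := hmin CB' CA' ⟨h2, h1, fun e he h4 h5 => (h3 e he h5 h4).symm⟩
    omega
  exfalso
  push Not at c1 c2
  have s1 : AΔ.card ≤ CA.card := Finset.card_le_card
    (fun a ha => c1 a (Finset.mem_filter.1 ha).2)
  have s2 : BΔ.card ≤ CB.card := Finset.card_le_card
    (fun a ha => c2 a (Finset.mem_filter.1 ha).2)
  have m1 := hmin _ _ PA
  have m2 := hmin _ _ PB
  rw [Finset.card_empty] at m1 m2
  rcases max_choice (F.filter (fun f => l f = l e₀)).card (F.filter (fun f => r f = r e₀)).card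
    with h | h
  · have : 0 < CA.card := Finset.card_pos.2 ⟨_, c1 (l e₀) h.symm⟩
    omega
  · have : 0 < CB.card := Finset.card_pos.2 ⟨_, c2 (r e₀) h.symm⟩
    omega

open Classical in
/-- Borodin–Kostochka–Woodall for bipartite multigraphs. -/
lemma bkw_bip {E A B : Type*} (l : E → A) (r : E → B) (F : Finset E) (L : E → Finset ℕ)
    (hL : ∀ e ∈ F, (F.filter (fun f => l f = l e)).card ≤ (L e).card ∧
      (F.filter (fun f => r f = r e)).card ≤ (L e).card) :
    ∃ col : E → ℕ, (∀ e ∈ F, col e ∈ L e) ∧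
      ∀ e ∈ F, ∀ f ∈ F, e ≠ f → (l e = l f ∨ r e = r f) → col e ≠ col f := by
  obtain ⟨c, h1, h2, h3⟩ := bkw_rank l r _ F rfl
  exact bkw_galvin l r c _ F L rfl h1 h2
    (fun e he => lt_of_lt_of_le (h3 e he) (max_le (hL e he).1 (hL e he).2))

open Classical in
/-- A vertex partition in which every vertex has at least half of its `U`-edges crossing. -/
lemma bkw_cut {V E : Type*} (x y : E → V) (hxy : ∀ e, x e ≠ y e) (U : Finset E) :
    ∃ σ : V → Bool, ∀ v,
      ((U.filter (fun e => σ (x e) = σ (y e))).filter (fun e => v = x e ∨ v = y e)).card ≤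
      ((U.filter (fun e => σ (x e) ≠ σ (y e))).filter (fun e => v = x e ∨ v = y e)).card := by
  have hex : ∃ n, ∃ σ : V → Bool, (U.filter (fun e => σ (x e) = σ (y e))).card = n :=
    ⟨_, fun _ => true, rfl⟩
  obtain ⟨σ, hσ⟩ := Nat.find_spec hex
  refine ⟨σ, fun v => ?_⟩
  have hmin := Nat.find_min' hex ⟨Function.update σ v (!σ v), rfl⟩
  rw [← hσ] at hmin
  set σ' := Function.update σ v (!σ v) with hσ'
  rw [← Finset.card_filter_add_card_filter_not (s := U.filter (fun e => σ (x e) = σ (y e)))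
      (fun e => v = x e ∨ v = y e),
    ← Finset.card_filter_add_card_filter_not (s := U.filter (fun e => σ' (x e) = σ' (y e)))
      (fun e => v = x e ∨ v = y e)] at hmin
  have h1 : (U.filter (fun e => σ' (x e) = σ' (y e))).filter (fun e => v = x e ∨ v = y e) =
      (U.filter (fun e => σ (x e) ≠ σ (y e))).filter (fun e => v = x e ∨ v = y e) := by
    ext e
    simp only [Finset.mem_filter, and_assoc]
    refine and_congr_right fun _ => and_congr_left fun h => ?_
    have hne := hxy e
    rcases h with h | h
    · rw [hσ', ← h, Function.update_self, Function.update_of_ne (by rw [h]; exact hne.symm)]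
      cases σ v <;> cases σ (y e) <;> simp
    · rw [hσ', ← h, Function.update_self, Function.update_of_ne (by rw [h]; exact hne)]
      cases σ v <;> cases σ (x e) <;> simp
  have h2 : (U.filter (fun e => σ' (x e) = σ' (y e))).filter (fun e => ¬ (v = x e ∨ v = y e)) =
      (U.filter (fun e => σ (x e) = σ (y e))).filter (fun e => ¬ (v = x e ∨ v = y e)) := by
    ext e
    simp only [Finset.mem_filter, and_assoc]
    refine and_congr_right fun _ => and_congr_left fun h => ?_
    push Not at h
    rw [hσ', Function.update_of_ne h.1.symm, Function.update_of_ne h.2.symm]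
  rw [h1, h2] at hmin
  omega

/-- Theorem 9 (Shannon-type bound, precoloured degree at most `k`,
palette `⌊(3Δ + k)/2⌋`). -/
theorem shannon_extend_predegree [Fintype E] (ends : E → Sym2 V)
    (hloop : ∀ e, ¬ (ends e).IsDiag)
    (Δ k : ℕ) (hk : 1 ≤ k)
    (hΔ : IsGreatest (Set.range (mdeg ends)) Δ)
    (S : Set E) (pre : E → ℕ)
    (hpal : ∀ e ∈ S, pre e ∈ Finset.Icc 1 ((3 * Δ + k) / 2))
    (hproper : ∀ e ∈ S, ∀ f ∈ S, MAdj ends e f → pre e ≠ pre f)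
    (hpredeg : ∀ v : V, {e ∈ S | v ∈ ends e}.ncard ≤ k) :
    ∃ c : E → ℕ, MProper ends c ∧ (∀ e, c e ∈ Finset.Icc 1 ((3 * Δ + k) / 2)) ∧
      ∀ e ∈ S, c e = pre e := by
  classical
  have hends : ∀ e, ∃ a b, ends e = s(a, b) := fun e => by
    induction h : ends e with | _ a b => exact ⟨a, b, rfl⟩
  choose x y hxy using hends
  have hne : ∀ e, x e ≠ y e := fun e h => hloop e (by rw [hxy, h]; simp)
  have hmem : ∀ v e, v ∈ ends e ↔ v = x e ∨ v = y e := fun v e => by rw [hxy, Sym2.mem_iff]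
  set K := (3 * Δ + k) / 2 with hK
  set Sf : Finset E := Finset.univ.filter (fun e => e ∈ S) with hSf
  have memS : ∀ e, e ∈ Sf ↔ e ∈ S := fun e => by simp [hSf]
  set U : Finset E := Finset.univ.filter (fun e => e ∉ S) with hU
  obtain ⟨σ, hσ⟩ := bkw_cut x y hne U
  set N := U.filter (fun e => σ (x e) = σ (y e)) with hN
  set H := U.filter (fun e => σ (x e) ≠ σ (y e)) with hH
  let dg : Finset E → V → ℕ := fun Q v => (Q.filter (fun e => v = x e ∨ v = y e)).card
  have hNH : ∀ v, dg N v ≤ dg H v := hσ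
  have hSk : ∀ v, dg Sf v ≤ k := by
    intro v
    refine le_trans (le_of_eq ?_) (hpredeg v)
    simp only [dg]
    rw [← Set.ncard_coe_finset]
    congr 1
    ext e
    simp [hSf, hmem]
  have hdeg : ∀ v, dg Sf v + dg N v + dg H v ≤ Δ := by
    intro v
    have h1 : mdeg ends v ≤ Δ := hΔ.2 ⟨v, rfl⟩
    have h2 : mdeg ends v = dg Finset.univ v := by
      unfold mdeg
      simp only [dg]
      rw [← Set.ncard_coe_finset]
      congr 1
      ext e
      simp [hmem]
    have d1 : Disjoint Sf N := by
      rw [Finset.disjoint_left]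
      intro e he heN
      simp only [hSf, hN, hU, Finset.mem_filter] at he heN
      exact heN.1.2 he.2
    have d2 : Disjoint (Sf ∪ N) H := by
      rw [Finset.disjoint_left]
      intro e he heN
      simp only [hSf, hN, hU, hH, Finset.mem_union, Finset.mem_filter] at he heN
      tauto
    have h3 : dg (Sf ∪ N ∪ H) v = dg Sf v + dg N v + dg H v := by
      simp only [dg]
      rw [Finset.filter_union, Finset.card_union_of_disjoint (Finset.disjoint_filter_filter d2),
        Finset.filter_union, Finset.card_union_of_disjoint (Finset.disjoint_filter_filter d1)]
    have h4 : dg (Sf ∪ N ∪ H) v ≤ dg Finset.univ v :=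
      Finset.card_le_card (Finset.filter_subset_filter _ (Finset.subset_univ _))
    omega
  have hdgu : ∀ P Q v, dg (P ∪ Q) v ≤ dg P v + dg Q v := by
    intro P Q v
    simp only [dg]
    rw [Finset.filter_union]
    exact Finset.card_union_le _ _
  -- forbidden colours
  let forb : Finset E → (E → ℕ) → E → Finset ℕ := fun Q c e =>
    (Q.filter (fun f => x e = x f ∨ x e = y f)).image c ∪
    (Q.filter (fun f => y e = x f ∨ y e = y f)).image c
  have hforb : ∀ Q c e, (forb Q c e).card ≤ dg Q (x e) + dg Q (y e) := by
    intro Q c e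
    exact (Finset.card_union_le _ _).trans (add_le_add Finset.card_image_le Finset.card_image_le)
  have hforbm : ∀ Q c e f, f ∈ Q → MAdj ends e f → c f ∈ forb Q c e := by
    rintro Q c e f hf ⟨_, v, hv1, hv2⟩
    rw [hmem] at hv1 hv2
    rw [Finset.mem_union]
    rcases hv1 with h | h
    · exact Or.inl (Finset.mem_image_of_mem _ (Finset.mem_filter.2 ⟨hf, h ▸ hv2⟩))
    · exact Or.inr (Finset.mem_image_of_mem _ (Finset.mem_filter.2 ⟨hf, h ▸ hv2⟩))
  have hsymm : ∀ e f, MAdj ends e f → MAdj ends f e := by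
    rintro e f ⟨h, v, h1, h2⟩
    exact ⟨h.symm, v, h2, h1⟩
  have greedy : ∀ N' : Finset E, N' ⊆ N → ∃ c : E → ℕ, (∀ e ∈ Sf ∪ N', c e ∈ Finset.Icc 1 K) ∧
      (∀ e ∈ Sf ∪ N', ∀ f ∈ Sf ∪ N', MAdj ends e f → c e ≠ c f) ∧ ∀ e ∈ S, c e = pre e := by
    intro N'
    induction N' using Finset.induction_on with
    | empty =>
      intro _
      refine ⟨pre, ?_, ?_, fun _ _ => rfl⟩
      · intro e he
        rw [Finset.union_empty, memS] at he
        exact hpal e he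
      · intro e he f hf
        rw [Finset.union_empty, memS] at he hf
        exact hproper e he f hf
    | insert e N' heN' ih =>
      intro hsub
      obtain ⟨c, c1, c2, c3⟩ := ih ((Finset.subset_insert _ _).trans hsub)
      have heN : e ∈ N := hsub (Finset.mem_insert_self _ _)
      have heS : e ∉ S := by
        simp only [hN, hU, Finset.mem_filter] at heN
        exact heN.1.2
      have hlt : ∀ v, (v = x e ∨ v = y e) → dg N' v < dg N v := by
        intro v hv
        apply Finset.card_lt_card
        rw [Finset.ssubset_iff_of_subset (Finset.filter_subset_filter _
          ((Finset.subset_insert _ _).trans hsub))]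
        exact ⟨e, Finset.mem_filter.2 ⟨heN, hv⟩, by simp [heN']⟩
      obtain ⟨α, hα, hαf⟩ : ∃ α ∈ Finset.Icc 1 K, α ∉ forb (Sf ∪ N') c e := by
        apply Finset.exists_mem_notMem_of_card_lt_card
        rw [Nat.card_Icc]
        have := hforb (Sf ∪ N') c e
        have := hdgu Sf N' (x e)
        have := hdgu Sf N' (y e)
        have := hlt (x e) (Or.inl rfl)
        have := hlt (y e) (Or.inr rfl)
        have := hdeg (x e)
        have := hdeg (y e)
        have := hNH (x e)
        have := hNH (y e)
        have := hSk (x e)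
        have := hSk (y e)
        omega
      have hmem' : ∀ f ∈ Sf ∪ insert e N', f ≠ e → f ∈ Sf ∪ N' := by
        intro f hf hfe
        rw [Finset.mem_union, Finset.mem_insert] at hf
        rw [Finset.mem_union]
        tauto
      refine ⟨Function.update c e α, ?_, ?_, ?_⟩
      · intro f hf
        by_cases hfe : f = e
        · rw [hfe, Function.update_self]; exact hα
        · rw [Function.update_of_ne hfe]; exact c1 f (hmem' f hf hfe)
      · intro f hf g hg hfg
        by_cases hfe : f = e
        · have hge : g ≠ e := fun h => hfg.1 (hfe.trans h.symm)
          subst hfe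
          rw [Function.update_self, Function.update_of_ne hge]
          intro h
          exact hαf (h ▸ hforbm _ c f g (hmem' g hg hge) hfg)
        · by_cases hge : g = e
          · subst hge
            rw [Function.update_self, Function.update_of_ne hfe]
            intro h
            exact hαf (h ▸ hforbm _ c g f (hmem' f hf hfe) (hsymm _ _ hfg))
          · rw [Function.update_of_ne hge, Function.update_of_ne hfe]
            exact c2 f (hmem' f hf hfe) g (hmem' g hg hge) hfg
      · intro f hf
        rw [Function.update_of_ne (show f ≠ e from fun h => heS (h ▸ hf))]
        exact c3 f hf
  obtain ⟨c, c1, c2, c3⟩ := greedy N subset_rfl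
  let l : E → V := fun e => if σ (x e) = true then x e else y e
  let r : E → V := fun e => if σ (x e) = true then y e else x e
  have hl : ∀ e ∈ H, σ (l e) = true ∧ σ (r e) = false ∧
      ∀ v, (v = x e ∨ v = y e) ↔ (v = l e ∨ v = r e) := by
    intro e he
    have h := (Finset.mem_filter.1 he).2
    by_cases h1 : σ (x e) = true
    · simp only [l, r, h1, if_true]
      refine ⟨trivial, ?_, fun v => trivial⟩
      rw [h1] at h
      simpa using h.symm
    · simp only [l, r, h1]
      refine ⟨?_, ?_, fun v => or_comm⟩
      · simp only [Bool.not_eq_true] at h1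
        rw [h1] at h
        simpa using h.symm
      · simpa using h1
  have hdl : ∀ e ∈ H, (H.filter (fun f => l f = l e)).card ≤ dg H (l e) := by
    intro e he
    apply Finset.card_le_card
    intro f hf
    rw [Finset.mem_filter] at hf ⊢
    exact ⟨hf.1, ((hl f hf.1).2.2 _).2 (Or.inl hf.2.symm)⟩
  have hdr : ∀ e ∈ H, (H.filter (fun f => r f = r e)).card ≤ dg H (r e) := by
    intro e he
    apply Finset.card_le_card
    intro f hf
    rw [Finset.mem_filter] at hf ⊢
    exact ⟨hf.1, ((hl f hf.1).2.2 _).2 (Or.inr hf.2.symm)⟩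
  have hxl : ∀ e, (l e = x e ∧ r e = y e) ∨ (l e = y e ∧ r e = x e) := by
    intro e
    by_cases h1 : σ (x e) = true <;> simp [l, r, h1]
  obtain ⟨col, hcol1, hcol2⟩ := bkw_bip l r H
    (fun e => Finset.Icc 1 K \ forb (Sf ∪ N) c e) (by
      intro e he
      have h1 := Finset.le_card_sdiff (forb (Sf ∪ N) c e) (Finset.Icc 1 K)
      rw [Nat.card_Icc] at h1
      have h2 := hforb (Sf ∪ N) c e
      have h3 := hdl e he
      have h4 := hdr e he
      have := hdgu Sf N (x e)
      have := hdgu Sf N (y e)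
      have := hdeg (x e)
      have := hdeg (y e)
      have := hNH (x e)
      have := hNH (y e)
      have := hSk (x e)
      have := hSk (y e)
      rcases hxl e with ⟨e1, e2⟩ | ⟨e1, e2⟩
      · have e3 : dg H (l e) = dg H (x e) := by rw [e1]
        have e4 : dg H (r e) = dg H (y e) := by rw [e2]
        constructor <;> omega
      · have e3 : dg H (l e) = dg H (y e) := by rw [e1]
        have e4 : dg H (r e) = dg H (x e) := by rw [e2]
        constructor <;> omega)
  have hcompl : ∀ e, e ∉ H → e ∈ Sf ∪ N := by
    intro e he
    simp only [hSf, hN, hU, hH, Finset.mem_union, Finset.mem_filter, Finset.mem_univ,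
      true_and] at he ⊢
    tauto
  refine ⟨fun e => if e ∈ H then col e else c e, ?_, ?_, ?_⟩
  · intro e f hef
    by_cases he : e ∈ H <;> by_cases hf : f ∈ H <;> simp only [he, hf, if_true, if_false]
    · refine hcol2 e he f hf hef.1 ?_
      obtain ⟨_, v, hv1, hv2⟩ := hef
      rw [hmem, (hl _ he).2.2] at hv1
      rw [hmem, (hl _ hf).2.2] at hv2
      have a1 := (hl e he).1
      have a2 := (hl e he).2.1
      have b1 := (hl f hf).1
      have b2 := (hl f hf).2.1
      rcases hv1 with h1 | h1 <;> rcases hv2 with h2 | h2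
      · exact Or.inl (h1.symm.trans h2)
      · rw [← h1] at a1; rw [← h2, a1] at b2; cases b2
      · rw [← h1] at a2; rw [← h2, a2] at b1; cases b1
      · exact Or.inr (h1.symm.trans h2)
    · intro h
      have := (Finset.mem_sdiff.1 (hcol1 e he)).2
      exact this (h ▸ hforbm _ c e f (hcompl f hf) hef)
    · intro h
      have := (Finset.mem_sdiff.1 (hcol1 f hf)).2
      exact this (h ▸ hforbm _ c f e (hcompl e he) (hsymm _ _ hef))
    · exact c2 e (hcompl e he) f (hcompl f hf) hef
  · intro e
    by_cases he : e ∈ H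
    · simp only [he, if_true]
      exact (Finset.mem_sdiff.1 (hcol1 e he)).1
    · simp only [he, if_false]
      exact c1 e (hcompl e he)
  · intro e he
    have : e ∉ H := by
      intro h
      simp only [hH, hU, Finset.mem_filter] at h
      exact h.1.2 he
    simp only [this, if_false]
    exact c3 e he
end

section
/- Let G be a multigraph with maximum degree Δ. Using the palette {1, …, ⌊3Δ/2 + 1/2⌋}, any precoloured matching can be extended to a proper edge-colouring of all of G. -/
variable {V E : Type*}

section Aux

open Classical

/-- number of edges in `S` whose `a`-end is `x`. -/
noncomputable def sdeg {E X : Type*} (S : Finset E) (a : E → X) (x : X) : ℕ :=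
  (S.filter (fun f => a f = x)).card

/-- number of edges of `S` at the `a`-end of `e` that are preferred to `e`. -/
noncomputable def better {E X : Type*} (S : Finset E) (a : E → X) (p : E → ℤ) (e : E) : ℕ :=
  (S.filter (fun f => a f = a e ∧ p f < p e)).card

/-- locally injective preferences -/
def LocInj {E X : Type*} (S : Finset E) (a : E → X) (p : E → ℤ) : Prop :=
  ∀ e ∈ S, ∀ f ∈ S, a e = a f → p e = p f → e = f

def GoodMatch {E X Y : Type*} (S : Finset E) (a : E → X) (b : E → Y) (N : Finset E) : Prop :=
  N ⊆ S ∧ N.Nonempty ∧ (∀ e ∈ N, ∀ f ∈ N, a e = a f → e = f) ∧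
  (∀ e ∈ N, ∀ f ∈ N, b e = b f → e = f) ∧
  ∀ e ∈ S, ∀ n ∈ N, a n = a e → (∃ m ∈ N, b m = b e) ∨ sdeg S b (b e) < sdeg S a (a e)

/-- Gale-Shapley kernel. -/
theorem kernel_exists {E X Y : Type*} (a : E → X) (b : E → Y) (p q : E → ℤ) :
    ∀ (n : ℕ) (S : Finset E), S.card = n → LocInj S a p → LocInj S b q →
      ∃ K ⊆ S, (∀ e ∈ K, ∀ f ∈ K, a e = a f → e = f) ∧ (∀ e ∈ K, ∀ f ∈ K, b e = b f → e = f) ∧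
        ∀ e ∈ S, e ∉ K → ∃ f ∈ K, (a f = a e ∧ p f < p e) ∨ (b f = b e ∧ q f < q e) := by
  intro n
  induction n with
  | zero =>
    intro S hS _ _
    rw [Finset.card_eq_zero] at hS
    subst hS
    exact ⟨∅, by simp⟩
  | succ n ih =>
    intro S hS hp hq
    set P := S.filter (fun e => ∀ f ∈ S, a f = a e → p e ≤ p f) with hP
    have hPa : ∀ e ∈ P, ∀ f ∈ P, a e = a f → e = f := by
      intro e he f hf hef
      simp only [hP, Finset.mem_filter] at he hf
      exact hp e he.1 f hf.1 hef (le_antisymm (he.2 f hf.1 hef.symm) (hf.2 e he.1 hef))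
    by_cases hPb : ∀ e ∈ P, ∀ f ∈ P, b e = b f → e = f
    · refine ⟨P, Finset.filter_subset _ _, hPa, hPb, ?_⟩
      intro e he _heP
      obtain ⟨f, hf, hmin⟩ := Finset.exists_min_image (S.filter (fun f => a f = a e)) p
        ⟨e, by simp [he]⟩
      simp only [Finset.mem_filter] at hf hmin
      have hfP : f ∈ P := by
        simp only [hP, Finset.mem_filter]
        exact ⟨hf.1, fun g hg hgf => hmin g ⟨hg, hgf.trans hf.2⟩⟩
      refine ⟨f, hfP, Or.inl ⟨hf.2, ?_⟩⟩
      refine lt_of_le_of_ne (hmin e ⟨he, rfl⟩) ?_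
      intro h
      have := hp f hf.1 e he hf.2 h
      subst this
      exact _heP hfP
    · push Not at hPb
      have : ∃ f ∈ P, ∃ g ∈ P, b f = b g ∧ q f < q g := by
        obtain ⟨f, hf, g, hg, hfg, hne⟩ := hPb
        have hfS := (Finset.mem_filter.1 hf).1
        have hgS := (Finset.mem_filter.1 hg).1
        rcases lt_trichotomy (q f) (q g) with h | h | h
        · exact ⟨f, hf, g, hg, hfg, h⟩
        · exact absurd (hq f hfS g hgS hfg h) hne
        · exact ⟨g, hg, f, hf, hfg.symm, h⟩
      obtain ⟨f, hf, g, hg, hfg, hlt⟩ := this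
      have hfS := (Finset.mem_filter.1 hf).1
      have hgS := (Finset.mem_filter.1 hg).1
      have hfne : f ≠ g := by rintro rfl; exact lt_irrefl _ hlt
      obtain ⟨K, hKS, hKa, hKb, hK⟩ := ih (S.erase g) (by rw [Finset.card_erase_of_mem hgS, hS]; rfl)
        (fun e he f hf => hp e (Finset.mem_of_mem_erase he) f (Finset.mem_of_mem_erase hf))
        (fun e he f hf => hq e (Finset.mem_of_mem_erase he) f (Finset.mem_of_mem_erase hf))
      refine ⟨K, hKS.trans (Finset.erase_subset _ _), hKa, hKb, ?_⟩
      intro e he heK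
      by_cases heg : e = g
      · subst heg
        by_cases hfK : f ∈ K
        · exact ⟨f, hfK, Or.inr ⟨hfg, hlt⟩⟩
        · obtain ⟨h, hh, h1 | h1⟩ := hK f (by simp [hfne, hfS]) hfK
          · have := (Finset.mem_filter.1 hf).2 h (Finset.mem_of_mem_erase (hKS hh)) h1.1
            omega
          · exact ⟨h, hh, Or.inr ⟨h1.1.trans hfg, h1.2.trans hlt⟩⟩
      · exact hK e (by simp [heg, he]) heK

theorem list_colour {E X Y : Type*} (a : E → X) (b : E → Y) (p q : E → ℤ) :
    ∀ (n : ℕ) (S : Finset E), S.card = n → LocInj S a p → LocInj S b q →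
      ∀ L : E → Finset ℕ, (∀ e ∈ S, better S a p e + better S b q e < (L e).card) →
      ∃ c : E → ℕ, (∀ e ∈ S, c e ∈ L e) ∧
        ∀ e ∈ S, ∀ f ∈ S, e ≠ f → (a e = a f ∨ b e = b f) → c e ≠ c f := by
  intro n
  induction n using Nat.strong_induction_on with
  | _ n ih =>
  intro S hS hp hq L hL
  by_cases hne : S.Nonempty
  swap
  · rw [Finset.not_nonempty_iff_eq_empty] at hne
    subst hne
    exact ⟨fun _ => 0, by simp⟩
  obtain ⟨e0, he0⟩ := hne
  obtain ⟨α, hα⟩ : (L e0).Nonempty := Finset.card_pos.1 (by have := hL e0 he0; omega)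
  set S' := S.filter (fun e => α ∈ L e) with hS'
  have hS'S : S' ⊆ S := Finset.filter_subset _ _
  obtain ⟨K, hKS, hKa, hKb, hK⟩ := kernel_exists a b p q _ S' rfl
    (fun e he f hf => hp e (hS'S he) f (hS'S hf)) (fun e he f hf => hq e (hS'S he) f (hS'S hf))
  have hKne : K.Nonempty := by
    by_contra h
    rw [Finset.not_nonempty_iff_eq_empty] at h
    subst h
    obtain ⟨f, hf, _⟩ := hK e0 (by simp [hS', he0, hα]) (by simp)
    simp at hf
  have hlt : (S \ K).card < n := by
    rw [← hS]
    apply Finset.card_lt_card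
    refine ⟨Finset.sdiff_subset, fun h => ?_⟩
    obtain ⟨k, hk⟩ := hKne
    have := h (hS'S (hKS hk))
    simp [hk] at this
  have hsub : S \ K ⊆ S := Finset.sdiff_subset
  obtain ⟨c, hc1, hc2⟩ := ih _ hlt (S \ K) rfl
    (fun e he f hf => hp e (hsub he) f (hsub hf)) (fun e he f hf => hq e (hsub he) f (hsub hf))
    (fun e => (L e).erase α) (by
      intro e he
      have heS := hsub he
      have heK : e ∉ K := (Finset.mem_sdiff.1 he).2
      have h0 := hL e heS
      have hba : better (S \ K) a p e ≤ better S a p e :=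
        Finset.card_le_card (Finset.filter_subset_filter _ hsub)
      have hbb : better (S \ K) b q e ≤ better S b q e :=
        Finset.card_le_card (Finset.filter_subset_filter _ hsub)
      by_cases hαe : α ∈ L e
      · rw [Finset.card_erase_of_mem hαe]
        obtain ⟨f, hf, h1 | h1⟩ := hK e (by simp [hS', heS, hαe]) heK
        · have : better (S \ K) a p e < better S a p e := by
            apply Finset.card_lt_card
            refine ⟨Finset.filter_subset_filter _ hsub, fun h => ?_⟩
            have := h (Finset.mem_filter.2 ⟨hS'S (hKS hf), h1⟩)
            simp [hf] at this
          omega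
        · have : better (S \ K) b q e < better S b q e := by
            apply Finset.card_lt_card
            refine ⟨Finset.filter_subset_filter _ hsub, fun h => ?_⟩
            have := h (Finset.mem_filter.2 ⟨hS'S (hKS hf), h1⟩)
            simp [hf] at this
          omega
      · rw [Finset.erase_eq_of_notMem hαe]
        omega)
  refine ⟨fun e => if e ∈ K then α else c e, ?_, ?_⟩
  · intro e he
    by_cases heK : e ∈ K
    · have := hKS heK
      simp only [hS', Finset.mem_filter] at this
      simp [heK, this.2]
    · have := hc1 e (by simp [he, heK])
      simp [heK, Finset.mem_of_mem_erase this]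
  · intro e he f hf hef hadj
    by_cases heK : e ∈ K <;> by_cases hfK : f ∈ K
    · rcases hadj with h | h
      · exact absurd (hKa e heK f hfK h) hef
      · exact absurd (hKb e heK f hfK h) hef
    · have := Finset.ne_of_mem_erase (hc1 f (by simp [hf, hfK]))
      simp [heK, hfK, this.symm]
    · have := Finset.ne_of_mem_erase (hc1 e (by simp [he, heK]))
      simp [heK, hfK, this]
    · have := hc2 e (by simp [he, heK]) f (by simp [hf, hfK]) hef hadj
      simpa [heK, hfK] using this

theorem good_half {E X Y : Type*} (S : Finset E) (a : E → X) (b : E → Y) (D : ℕ) (hD : 0 < D)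
    (hb : ∀ e ∈ S, sdeg S b (b e) ≤ D)
    (XD : Finset X) (hXD : ∀ x ∈ XD, sdeg S a x = D) (hne : XD.Nonempty)
    (YD : Finset Y) (hYD : ∀ e ∈ S, sdeg S b (b e) = D → b e ∈ YD)
    (hcard : YD.card ≤ XD.card) : ∃ N, GoodMatch S a b N := by
  by_cases hcase : ∃ x ∈ XD, ∀ e ∈ S, a e = x → sdeg S b (b e) ≠ D
  · obtain ⟨x, hx, hxe⟩ := hcase
    have hdx := hXD x hx
    obtain ⟨e, he⟩ : (S.filter (fun f => a f = x)).Nonempty := by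
      apply Finset.card_pos.1
      unfold sdeg at hdx; omega
    rw [Finset.mem_filter] at he
    refine ⟨{e}, by simpa using he.1, by simp, by simp, by simp, ?_⟩
    intro f hf n hn hnf
    rw [Finset.mem_singleton] at hn
    subst hn
    right
    have h1 : a f = x := hnf.symm.trans he.2
    rw [h1, hdx]
    exact lt_of_le_of_ne (hb f hf) (hxe f hf h1)
  · push Not at hcase
    set nb : Finset X → Finset Y :=
      fun T => (S.filter (fun e => a e ∈ T ∧ sdeg S b (b e) = D)).image b with hnb
    have hmono : ∀ T U, T ⊆ U → nb T ⊆ nb U := by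
      intro T U h
      apply Finset.image_subset_image
      intro e he
      rw [Finset.mem_filter] at he ⊢
      exact ⟨he.1, h he.2.1, he.2.2⟩
    obtain ⟨T, hT, hTmin⟩ := Finset.exists_min_image
      (XD.powerset.filter (fun T => T.Nonempty ∧ (nb T).card ≤ T.card)) Finset.card
      ⟨XD, by
        simp only [Finset.mem_filter, Finset.mem_powerset, Finset.Subset.refl, true_and]
        refine ⟨hne, le_trans (Finset.card_le_card ?_) hcard⟩
        intro y hy
        simp only [hnb, Finset.mem_image, Finset.mem_filter] at hy
        obtain ⟨e, ⟨he, _, h2⟩, rfl⟩ := hy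
        exact hYD e he h2⟩
    simp only [Finset.mem_filter, Finset.mem_powerset] at hT hTmin
    obtain ⟨hTX, hTne, hTc⟩ := hT
    have hprop : ∀ U, U ⊆ T → U.Nonempty → U ≠ T → U.card < (nb U).card := by
      intro U hU hUne hUT
      by_contra h
      have h1 := hTmin U ⟨hU.trans hTX, hUne, by omega⟩
      exact hUT (Finset.eq_of_subset_of_card_le hU h1)
    have hTle : T.card ≤ (nb T).card := by
      obtain ⟨t, ht⟩ := hTne
      by_cases h1 : (T.erase t).Nonempty
      · have h2 := hprop _ (Finset.erase_subset t T) h1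
          (fun h => by have := h ▸ ht; simp at this)
        have h3 := Finset.card_le_card (hmono _ _ (Finset.erase_subset t T))
        rw [Finset.card_erase_of_mem ht] at h2
        omega
      · rw [Finset.not_nonempty_iff_eq_empty] at h1
        have h2 : T.card = 1 := by
          have := Finset.card_erase_add_one ht
          rw [h1] at this
          simpa using this.symm
        obtain ⟨e, he, h3, h4⟩ := hcase t (hTX ht)
        rw [h2]
        apply Finset.card_pos.2
        exact ⟨b e, Finset.mem_image.2 ⟨e, by simp [he, h3, h4, ht], rfl⟩⟩
    have hall : ∀ U, U ⊆ T → U.card ≤ (nb U).card := by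
      intro U hU
      by_cases h1 : U.Nonempty
      · by_cases h2 : U = T
        · rw [h2]; exact hTle
        · exact (hprop U hU h1 h2).le
      · rw [Finset.not_nonempty_iff_eq_empty] at h1
        simp [h1]
    obtain ⟨f, hfinj, hf⟩ := (Finset.all_card_le_biUnion_card_iff_exists_injective
      (fun x : T => nb {x.1})).1 (by
        intro s
        have h1 := hall (s.map (Function.Embedding.subtype _)) (by
          intro x hx
          simp only [Finset.mem_map, Function.Embedding.subtype_apply] at hx
          obtain ⟨y, _, rfl⟩ := hx
          exact y.2)
        rw [Finset.card_map] at h1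
        refine h1.trans (Finset.card_le_card ?_)
        intro y hy
        simp only [hnb, Finset.mem_image, Finset.mem_filter, Finset.mem_map,
          Function.Embedding.subtype_apply] at hy
        obtain ⟨e, ⟨he, ⟨z, hz, hze⟩, h2⟩, rfl⟩ := hy
        simp only [hnb, Finset.mem_biUnion]
        exact ⟨z, hz, Finset.mem_image.2 ⟨e, by simp [he, hze, h2], rfl⟩⟩)
    have hg : ∀ x : T, ∃ e ∈ S, a e = x.1 ∧ b e = f x := by
      intro x
      have := hf x
      simp only [hnb, Finset.mem_image, Finset.mem_filter, Finset.mem_singleton] at this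
      obtain ⟨e, ⟨he, h1, _⟩, h2⟩ := this
      exact ⟨e, he, h1, h2⟩
    choose g hgS hga hgb using hg
    have hfT : Finset.univ.image f = nb T := by
      apply Finset.eq_of_subset_of_card_le
      · intro y hy
        simp only [Finset.mem_image, Finset.mem_univ, true_and] at hy
        obtain ⟨x, rfl⟩ := hy
        exact hmono _ _ (by simp) (hf x)
      · rw [Finset.card_image_of_injective _ hfinj]
        simpa using hTc
    refine ⟨Finset.univ.image g, ?_, ?_, ?_, ?_, ?_⟩
    · intro e he
      simp only [Finset.mem_image, Finset.mem_univ, true_and] at he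
      obtain ⟨x, rfl⟩ := he
      exact hgS x
    · obtain ⟨t, ht⟩ := hTne
      exact ⟨g ⟨t, ht⟩, Finset.mem_image_of_mem _ (Finset.mem_univ _)⟩
    · intro e he e' he' h
      simp only [Finset.mem_image, Finset.mem_univ, true_and] at he he'
      obtain ⟨x, rfl⟩ := he
      obtain ⟨y, rfl⟩ := he'
      rw [hga, hga] at h
      rw [Subtype.ext h]
    · intro e he e' he' h
      simp only [Finset.mem_image, Finset.mem_univ, true_and] at he he'
      obtain ⟨x, rfl⟩ := he
      obtain ⟨y, rfl⟩ := he'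
      rw [hgb, hgb] at h
      rw [hfinj h]
    · intro e he n hn hne'
      simp only [Finset.mem_image, Finset.mem_univ, true_and] at hn
      obtain ⟨x, rfl⟩ := hn
      rw [hga] at hne'
      have hdeg : sdeg S a (a e) = D := by rw [← hne']; exact hXD _ (hTX x.2)
      by_cases hbe : sdeg S b (b e) = D
      · left
        have : b e ∈ nb T := Finset.mem_image.2 ⟨e, by
          simp only [Finset.mem_filter]
          exact ⟨he, hne' ▸ x.2, hbe⟩, rfl⟩
        rw [← hfT] at this
        simp only [Finset.mem_image, Finset.mem_univ, true_and] at this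
        obtain ⟨y, hy⟩ := this
        exact ⟨g y, Finset.mem_image_of_mem _ (Finset.mem_univ _), by rw [hgb, hy]⟩
      · right
        rw [hdeg]
        exact lt_of_le_of_ne (hb e he) hbe

theorem good_exists {E X Y : Type*} (S : Finset E) (a : E → X) (b : E → Y) (hS : S.Nonempty) :
    (∃ N, GoodMatch S a b N) ∨ (∃ N, GoodMatch S b a N) := by
  obtain ⟨e, he, hmax⟩ := Finset.exists_max_image S
    (fun e => max (sdeg S a (a e)) (sdeg S b (b e))) hS
  set D := max (sdeg S a (a e)) (sdeg S b (b e)) with hD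
  have hpos : 0 < D := by
    apply lt_of_lt_of_le _ (le_max_left _ _)
    exact Finset.card_pos.2 ⟨e, by simp [he]⟩
  have ha : ∀ f ∈ S, sdeg S a (a f) ≤ D := fun f hf => (le_max_left _ _).trans (hmax f hf)
  have hb : ∀ f ∈ S, sdeg S b (b f) ≤ D := fun f hf => (le_max_right _ _).trans (hmax f hf)
  set XD := (S.filter (fun e => sdeg S a (a e) = D)).image a with hXD
  set YD := (S.filter (fun e => sdeg S b (b e) = D)).image b with hYD
  have hX1 : ∀ x ∈ XD, sdeg S a x = D := by
    intro x hx
    simp only [hXD, Finset.mem_image, Finset.mem_filter] at hx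
    obtain ⟨f, ⟨_, h⟩, rfl⟩ := hx
    exact h
  have hY1 : ∀ x ∈ YD, sdeg S b x = D := by
    intro x hx
    simp only [hYD, Finset.mem_image, Finset.mem_filter] at hx
    obtain ⟨f, ⟨_, h⟩, rfl⟩ := hx
    exact h
  have hX2 : ∀ f ∈ S, sdeg S a (a f) = D → a f ∈ XD := fun f hf h =>
    Finset.mem_image_of_mem _ (by simp [hf, h])
  have hY2 : ∀ f ∈ S, sdeg S b (b f) = D → b f ∈ YD := fun f hf h =>
    Finset.mem_image_of_mem _ (by simp [hf, h])
  have hne : XD.Nonempty ∨ YD.Nonempty := by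
    rcases max_choice (sdeg S a (a e)) (sdeg S b (b e)) with h | h
    · exact Or.inl ⟨_, hX2 e he (by rw [hD, h])⟩
    · exact Or.inr ⟨_, hY2 e he (by rw [hD, h])⟩
  rw [← Finset.card_pos, ← Finset.card_pos] at hne
  by_cases h : YD.card ≤ XD.card
  · left
    exact good_half S a b D hpos hb XD hX1 (Finset.card_pos.1 (by omega)) YD hY2 h
  · right
    exact good_half S b a D hpos ha YD hY1 (Finset.card_pos.1 (by omega)) XD hX2 (by omega)

def HasOrders {E X Y : Type*} (S : Finset E) (a : E → X) (b : E → Y) : Prop :=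
  ∃ p q : E → ℤ, LocInj S a p ∧ LocInj S b q ∧
    ∀ e ∈ S, better S a p e + better S b q e < max (sdeg S a (a e)) (sdeg S b (b e))

theorem HasOrders.swap {E X Y : Type*} {S : Finset E} {a : E → X} {b : E → Y}
    (h : HasOrders S a b) : HasOrders S b a := by
  obtain ⟨p, q, h1, h2, h3⟩ := h
  refine ⟨q, p, h2, h1, fun e he => ?_⟩
  rw [add_comm, max_comm]
  exact h3 e he

theorem sdeg_sdiff {E X : Type*} {S N : Finset E} (a : E → X) (hN : N ⊆ S)
    (hinj : ∀ e ∈ N, ∀ f ∈ N, a e = a f → e = f) (x : X) :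
    sdeg (S \ N) a x + (if ∃ n ∈ N, a n = x then 1 else 0) = sdeg S a x := by
  have h1 : sdeg N a x = if ∃ n ∈ N, a n = x then 1 else 0 := by
    unfold sdeg
    split_ifs with h
    · obtain ⟨n, hn, rfl⟩ := h
      rw [Finset.card_eq_one]
      refine ⟨n, ?_⟩
      ext f
      simp only [Finset.mem_filter, Finset.mem_singleton]
      constructor
      · rintro ⟨h1, h2⟩
        exact hinj f h1 n hn h2
      · rintro rfl
        exact ⟨hn, rfl⟩
    · rw [Finset.card_eq_zero]
      ext f
      simp only [Finset.mem_filter, Finset.notMem_empty, iff_false]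
      rintro ⟨h1, h2⟩
      exact h ⟨f, h1, h2⟩
  rw [← h1]
  unfold sdeg
  rw [← Finset.card_union_of_disjoint]
  · rw [← Finset.filter_union, Finset.sdiff_union_of_subset hN]
  · exact Finset.disjoint_filter_filter Finset.sdiff_disjoint

theorem orders_extend {E X Y : Type*} {S N : Finset E} {a : E → X} {b : E → Y}
    (hN : GoodMatch S a b N) (h : HasOrders (S \ N) a b) : HasOrders S a b := by
  obtain ⟨hNS, _, hNa, hNb, hgood⟩ := hN
  obtain ⟨p, q, hp, hq, hpq⟩ := h
  have hbd : ∃ B : ℤ, ∀ e ∈ S, -B < p e ∧ q e < B := by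
    refine ⟨∑ e ∈ S, (|p e| + |q e|) + 1, fun e he => ?_⟩
    have h1 := Finset.single_le_sum (f := fun e => |p e| + |q e|)
      (fun i _ => add_nonneg (abs_nonneg _) (abs_nonneg _)) he
    have h2 := neg_abs_le (p e)
    have h3 := le_abs_self (q e)
    have h4 := abs_nonneg (p e)
    have h5 := abs_nonneg (q e)
    constructor <;> linarith
  obtain ⟨B, hB⟩ := hbd
  refine ⟨fun e => if e ∈ N then -B else p e, fun e => if e ∈ N then B else q e, ?_, ?_, ?_⟩
  · intro e he f hf hef hpe
    by_cases h1 : e ∈ N <;> by_cases h2 : f ∈ N <;> simp only [h1, h2, if_true, if_false] at hpe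
    · exact hNa e h1 f h2 hef
    · have := hB f hf; omega
    · have := hB e he; omega
    · exact hp e (by simp [he, h1]) f (by simp [hf, h2]) hef hpe
  · intro e he f hf hef hpe
    by_cases h1 : e ∈ N <;> by_cases h2 : f ∈ N <;> simp only [h1, h2, if_true, if_false] at hpe
    · exact hNb e h1 f h2 hef
    · have := hB f hf; omega
    · have := hB e he; omega
    · exact hq e (by simp [he, h1]) f (by simp [hf, h2]) hef hpe
  · intro e he
    by_cases heN : e ∈ N
    · have h1 : better S a (fun e => if e ∈ N then -B else p e) e = 0 := by
        unfold better
        rw [Finset.card_eq_zero, Finset.filter_eq_empty_iff]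
        rintro f hf ⟨_, h2⟩
        by_cases hfN : f ∈ N <;> simp only [heN, hfN, if_true, if_false] at h2
        · omega
        · have := hB f hf; omega
      have h2 : better S b (fun e => if e ∈ N then B else q e) e < sdeg S b (b e) := by
        apply Finset.card_lt_card
        rw [Finset.ssubset_iff_of_subset]
        · exact ⟨e, by simp [he], by simp⟩
        · intro f hf
          rw [Finset.mem_filter] at hf ⊢
          exact ⟨hf.1, hf.2.1⟩
      rw [h1, zero_add]
      exact lt_of_lt_of_le h2 (le_max_right _ _)
    · have h0 := hpq e (by simp [he, heN])
      have hda := sdeg_sdiff a hNS hNa (a e)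
      have hdb := sdeg_sdiff b hNS hNb (b e)
      have h1 : better S a (fun e => if e ∈ N then -B else p e) e ≤
          better (S \ N) a p e + (if ∃ n ∈ N, a n = a e then 1 else 0) := by
        have hN1 : (if ∃ n ∈ N, a n = a e then 1 else 0) = sdeg N a (a e) := by
          have := sdeg_sdiff a (Finset.Subset.refl N) hNa (a e)
          simpa [sdeg] using this
        rw [hN1]
        unfold better sdeg
        refine le_trans (Finset.card_le_card ?_) (Finset.card_union_le _ _)
        intro f hf
        simp only [Finset.mem_filter, heN, if_false] at hf
        simp only [Finset.mem_union, Finset.mem_filter, Finset.mem_sdiff]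
        by_cases hfN : f ∈ N
        · exact Or.inr ⟨hfN, hf.2.1⟩
        · simp only [hfN, if_false] at hf
          exact Or.inl ⟨⟨hf.1, hfN⟩, hf.2⟩
      have h2 : better S b (fun e => if e ∈ N then B else q e) e ≤ better (S \ N) b q e := by
        apply Finset.card_le_card
        intro f hf
        simp only [Finset.mem_filter, heN, if_false] at hf
        simp only [Finset.mem_filter, Finset.mem_sdiff]
        by_cases hfN : f ∈ N
        · simp only [hfN, if_true] at hf
          have := hB e he
          omega
        · simp only [hfN, if_false] at hf
          exact ⟨⟨hf.1, hfN⟩, hf.2⟩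
      by_cases hc : ∃ n ∈ N, a n = a e
      · obtain ⟨n, hn, hne⟩ := hc
        have hg := hgood e he n hn hne
        rw [if_pos ⟨n, hn, hne⟩] at h1 hda
        by_cases hc2 : ∃ n ∈ N, b n = b e
        · rw [if_pos hc2] at hdb
          omega
        · have := hg.resolve_left hc2
          rw [if_neg hc2] at hdb
          omega
      · rw [if_neg hc] at h1 hda
        omega

theorem orders_exist {E X Y : Type*} (a : E → X) (b : E → Y) :
    ∀ (n : ℕ) (S : Finset E), S.card = n → HasOrders S a b := by
  intro n
  induction n using Nat.strong_induction_on with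
  | _ n ih =>
  intro S hS
  by_cases hne : S.Nonempty
  swap
  · rw [Finset.not_nonempty_iff_eq_empty] at hne
    subst hne
    exact ⟨fun _ => 0, fun _ => 0, by simp [LocInj], by simp [LocInj], by simp⟩
  have key : ∀ N : Finset E, N ⊆ S → N.Nonempty → HasOrders (S \ N) a b := by
    intro N hN hN'
    refine ih _ ?_ _ rfl
    rw [← hS]
    exact Finset.card_lt_card (Finset.sdiff_ssubset hN hN')
  rcases good_exists S a b hne with ⟨N, hN⟩ | ⟨N, hN⟩
  · exact orders_extend hN (key N hN.1 hN.2.1)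
  · exact (orders_extend hN (key N hN.1 hN.2.1).swap).swap

/-- Borodin, Kostochka and Woodall: local version of Galvin's theorem. -/
theorem bipartite_list {E X Y : Type*} (S : Finset E) (a : E → X) (b : E → Y)
    (L : E → Finset ℕ) (hL : ∀ e ∈ S, max (sdeg S a (a e)) (sdeg S b (b e)) ≤ (L e).card) :
    ∃ c : E → ℕ, (∀ e ∈ S, c e ∈ L e) ∧
        ∀ e ∈ S, ∀ f ∈ S, e ≠ f → (a e = a f ∨ b e = b f) → c e ≠ c f := by
  obtain ⟨p, q, hp, hq, h⟩ := orders_exist a b _ S rfl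
  exact list_colour a b p q _ S rfl hp hq L (fun e he => (h e he).trans_le (hL e he))

/-- degree inside a finite set of edges. -/
noncomputable def fdeg {V E : Type*} (ends : E → Sym2 V) (S : Finset E) (v : V) : ℕ :=
  (S.filter (fun e => v ∈ ends e)).card

/-- The number of colours used around an edge. -/
theorem around_card {V E : Type*} (ends : E → Sym2 V) (S : Finset E) (u v : V) (e : E)
    (he : ends e = s(u, v)) (c : E → ℕ) :
    ((S.filter (fun f => MAdj ends e f)).image c).card ≤ fdeg ends S u + fdeg ends S v := by
  refine Finset.card_image_le.trans ((Finset.card_le_card ?_).trans (Finset.card_union_le _ _))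
  intro f hf
  simp only [Finset.mem_filter, MAdj, he, Sym2.mem_iff] at hf
  simp only [Finset.mem_union, Finset.mem_filter]
  obtain ⟨h1, _, w, rfl | rfl, h2⟩ := hf
  · exact Or.inl ⟨h1, h2⟩
  · exact Or.inr ⟨h1, h2⟩

theorem around_card' {V E : Type*} (ends : E → Sym2 V) (S : Finset E) (u v : V) (e : E)
    (heS : e ∉ S) (he : ends e = s(u, v)) (c : E → ℕ) :
    ((S.filter (fun f => MAdj ends e f)).image c).card + 2 ≤
      fdeg ends (insert e S) u + fdeg ends (insert e S) v := by
  have h := around_card ends S u v e he c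
  have h1 : fdeg ends (insert e S) u = fdeg ends S u + 1 := by
    unfold fdeg
    rw [Finset.filter_insert, if_pos (by simp [he]), Finset.card_insert_of_notMem (by simp [heS])]
  have h2 : fdeg ends (insert e S) v = fdeg ends S v + 1 := by
    unfold fdeg
    rw [Finset.filter_insert, if_pos (by simp [he]), Finset.card_insert_of_notMem (by simp [heS])]
  omega

theorem fdeg_mono {V E : Type*} (ends : E → Sym2 V) {S T : Finset E} (h : S ⊆ T) (v : V) :
    fdeg ends S v ≤ fdeg ends T v :=
  Finset.card_le_card (Finset.filter_subset_filter _ h)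

theorem greedy {V E : Type*} (ends : E → Sym2 V) (M C : Finset E) (k : ℕ) (pre : E → ℕ)
    (hM : ∀ e ∈ M, ∀ f ∈ M, ¬ MAdj ends e f) (hpre : ∀ e ∈ M, pre e ∈ Finset.Icc 1 k)
    (hC : ∀ e ∈ C, ∀ u v, ends e = s(u, v) → fdeg ends C u + fdeg ends C v < k + 2) (hMC : M ⊆ C) :
    ∃ c : E → ℕ, (∀ e ∈ C, ∀ f ∈ C, MAdj ends e f → c e ≠ c f) ∧
      (∀ e ∈ C, c e ∈ Finset.Icc 1 k) ∧ ∀ e ∈ M, c e = pre e := by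
  have key : ∀ R : Finset E, M ∪ R ⊆ C →
    ∃ c : E → ℕ, (∀ e ∈ M ∪ R, ∀ f ∈ M ∪ R, MAdj ends e f → c e ≠ c f) ∧
      (∀ e ∈ M ∪ R, c e ∈ Finset.Icc 1 k) ∧ ∀ e ∈ M, c e = pre e := by
    intro R
    induction R using Finset.induction_on with
    | empty =>
      intro _
      refine ⟨pre, ?_, ?_, fun _ _ => rfl⟩
      · intro e he f hf h
        rw [Finset.union_empty] at he hf
        exact absurd h (hM e he f hf)
      · intro e he
        rw [Finset.union_empty] at he
        exact hpre e he
    | insert e R heR ih =>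
      intro hsub
      rw [Finset.union_insert] at hsub ⊢
      obtain ⟨c, h1, h2, h3⟩ := ih ((Finset.subset_insert _ _).trans hsub)
      by_cases heM : e ∈ M ∪ R
      · rw [Finset.insert_eq_of_mem heM]
        exact ⟨c, h1, h2, h3⟩
      obtain ⟨u, v, huv⟩ : ∃ u v, ends e = s(u, v) := by
        induction h : ends e using Sym2.ind with
        | _ x y => exact ⟨x, y, rfl⟩
      have h4 := around_card' ends (M ∪ R) u v e heM huv c
      have h5 := hC e (hsub (Finset.mem_insert_self _ _)) u v huv
      have h6 := fdeg_mono ends hsub u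
      have h7 := fdeg_mono ends hsub v
      obtain ⟨α, hα, hα'⟩ := Finset.exists_mem_notMem_of_card_lt_card
        (s := ((M ∪ R).filter (fun f => MAdj ends e f)).image c) (t := Finset.Icc 1 k)
        (by rw [Nat.card_Icc]; omega)
      have hα2 : ∀ f ∈ M ∪ R, MAdj ends e f → c f ≠ α := by
        intro f hf h h'
        exact hα' (Finset.mem_image.2 ⟨f, by simp only [Finset.mem_filter]; exact ⟨hf, h⟩, h'⟩)
      refine ⟨Function.update c e α, ?_, ?_, ?_⟩
      · intro f hf g hg hfg
        have hne := hfg.1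
        by_cases hfe : f = e
        · subst hfe
          rw [Function.update_self, Function.update_of_ne (Ne.symm hne)]
          rw [Finset.mem_insert] at hg
          exact (hα2 g (hg.resolve_left (Ne.symm hne)) hfg).symm
        · by_cases hge : g = e
          · subst hge
            rw [Function.update_self, Function.update_of_ne hne]
            rw [Finset.mem_insert] at hf
            obtain ⟨_, w, hw1, hw2⟩ := hfg
            exact hα2 f (hf.resolve_left hne) ⟨Ne.symm hne, w, hw2, hw1⟩
          · rw [Function.update_of_ne hfe, Function.update_of_ne hge]
            rw [Finset.mem_insert] at hf hg
            exact h1 f (hf.resolve_left hfe) g (hg.resolve_left hge) hfg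
      · intro f hf
        by_cases hfe : f = e
        · subst hfe
          rw [Function.update_self]; exact hα
        · rw [Function.update_of_ne hfe]
          rw [Finset.mem_insert] at hf
          exact h2 f (hf.resolve_left hfe)
      · intro f hf
        have : f ≠ e := by
          rintro rfl
          exact heM (Finset.mem_union_left _ hf)
        rw [Function.update_of_ne this]
        exact h3 f hf
  have := key C (by rw [Finset.union_eq_right.2 hMC])
  rwa [Finset.union_eq_right.2 hMC] at this

/-- `e` crosses the cut given by `A`. -/
def Crosses {V E : Type*} (ends : E → Sym2 V) (A : Set V) (e : E) : Prop :=
  ∃ u v, u ∈ A ∧ v ∉ A ∧ ends e = s(u, v)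

theorem maxcut {V E : Type*} (ends : E → Sym2 V) (hloop : ∀ e, ¬ (ends e).IsDiag)
    (F : Finset E) : ∃ A : Set V, ∀ v,
      fdeg ends (F.filter (fun e => ¬ Crosses ends A e)) v ≤
        fdeg ends (F.filter (fun e => Crosses ends A e)) v := by
  obtain ⟨A, hA⟩ : ∃ A : Set V, ∀ B : Set V, (F.filter (fun e => Crosses ends B e)).card ≤
      (F.filter (fun e => Crosses ends A e)).card := by
    have hfin : (Set.range (fun A : Set V => (F.filter (fun e => Crosses ends A e)).card)).Finite :=
      (Set.finite_Iic F.card).subset (by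
        rintro _ ⟨A, rfl⟩
        exact Finset.card_filter_le _ _)
    obtain ⟨m, ⟨A, rfl⟩, hm⟩ := hfin.exists_maximal (Set.range_nonempty _)
    refine ⟨A, fun B => ?_⟩
    by_contra h
    push Not at h
    have := hm ⟨B, rfl⟩ h.le
    simp only at this
    omega
  refine ⟨A, fun v => ?_⟩
  set B : Set V := symmDiff A {v} with hB
  have hBm : ∀ w, w ∈ B ↔ (w ∈ A ∧ w ≠ v ∨ w = v ∧ w ∉ A) := by
    intro w
    rw [hB, Set.mem_symmDiff]
    simp
  have hcr : ∀ (C : Set V) (e : E) (x y : V), ends e = s(x, y) →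
      (Crosses ends C e ↔ (x ∈ C ∧ y ∉ C ∨ y ∈ C ∧ x ∉ C)) := by
    intro C e x y h
    unfold Crosses
    constructor
    · rintro ⟨u, w, hu, hw, h'⟩
      rw [h, Sym2.eq_iff] at h'
      rcases h' with ⟨rfl, rfl⟩ | ⟨rfl, rfl⟩
      · exact Or.inl ⟨hu, hw⟩
      · exact Or.inr ⟨hu, hw⟩
    · rintro (⟨h1, h2⟩ | ⟨h1, h2⟩)
      · exact ⟨x, y, h1, h2, h⟩
      · exact ⟨y, x, h1, h2, h.trans Sym2.eq_swap⟩
  have hflip : ∀ e, Crosses ends B e ↔ (if v ∈ ends e then ¬ Crosses ends A e else Crosses ends A e) := by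
    intro e
    obtain ⟨x, y, hxy⟩ : ∃ u v, ends e = s(u, v) := by
      induction h : ends e using Sym2.ind with
      | _ x y => exact ⟨x, y, rfl⟩
    have hne : x ≠ y := by
      have := hloop e
      rw [hxy] at this
      simpa using this
    rw [hcr A e x y hxy, hcr B e x y hxy, hxy, hBm, hBm]
    split_ifs with h <;> rw [Sym2.mem_iff] at h
    · rcases h with rfl | rfl
      · by_cases h1 : v ∈ A <;> by_cases h2 : y ∈ A <;> simp [h1, h2, hne, hne.symm]
      · by_cases h1 : v ∈ A <;> by_cases h2 : x ∈ A <;> simp [h1, h2, hne, hne.symm]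
    · push Not at h
      simp [h.1.symm, h.2.symm]
  have h1 := hA B
  rw [← Finset.card_filter_add_card_filter_not (s := F.filter (fun e => Crosses ends B e)) (fun e => v ∈ ends e),
    ← Finset.card_filter_add_card_filter_not (s := F.filter (fun e => Crosses ends A e)) (fun e => v ∈ ends e)] at h1
  have h2 : ((F.filter (fun e => Crosses ends B e)).filter (fun e => ¬ v ∈ ends e)) =
      ((F.filter (fun e => Crosses ends A e)).filter (fun e => ¬ v ∈ ends e)) := by
    ext e
    simp only [Finset.mem_filter, hflip]
    by_cases h : v ∈ ends e <;> simp [h]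
  have h3 : ((F.filter (fun e => Crosses ends B e)).filter (fun e => v ∈ ends e)) =
      ((F.filter (fun e => ¬ Crosses ends A e)).filter (fun e => v ∈ ends e)) := by
    ext e
    simp only [Finset.mem_filter, hflip]
    by_cases h : v ∈ ends e <;> simp [h]
  rw [h2, h3] at h1
  unfold fdeg
  omega

theorem shannon_aux {V E : Type*} [Fintype E] (ends : E → Sym2 V)
    (hloop : ∀ e, ¬ (ends e).IsDiag)
    (Δ : ℕ) (hΔ : ∀ v, fdeg ends Finset.univ v ≤ Δ)
    (M : Finset E) (hM : ∀ e ∈ M, ∀ f ∈ M, ¬ MAdj ends e f)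
    (pre : E → ℕ) (hpal : ∀ e ∈ M, pre e ∈ Finset.Icc 1 ((3 * Δ + 1) / 2)) :
    ∃ c : E → ℕ, MProper ends c ∧ (∀ e, c e ∈ Finset.Icc 1 ((3 * Δ + 1) / 2)) ∧
      ∀ e ∈ M, c e = pre e := by
  obtain ⟨A, hA⟩ := maxcut ends hloop Mᶜ
  set H := Mᶜ.filter (fun e => Crosses ends A e) with hH
  set R := Mᶜ.filter (fun e => ¬ Crosses ends A e) with hR
  set C := M ∪ R with hCdef
  have hMR : Disjoint M R := by
    rw [Finset.disjoint_left]
    intro e he h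
    simp [hR, he] at h
  have hCH : Disjoint C H := by
    rw [Finset.disjoint_left]
    intro e he h
    simp only [hCdef, hR, hH, Finset.mem_union, Finset.mem_filter, Finset.mem_compl] at he h
    tauto
  have hall : ∀ e, e ∈ C ∨ e ∈ H := by
    intro e
    simp only [hCdef, hR, hH, Finset.mem_union, Finset.mem_filter, Finset.mem_compl]
    tauto
  have hun : ∀ S T : Finset E, Disjoint S T → ∀ v,
      fdeg ends (S ∪ T) v = fdeg ends S v + fdeg ends T v := by
    intro S T h v
    unfold fdeg
    rw [Finset.filter_union, Finset.card_union_of_disjoint (Finset.disjoint_filter_filter h)]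
  have hMdeg : ∀ v, fdeg ends M v ≤ 1 := by
    intro v
    unfold fdeg
    rw [Finset.card_le_one]
    intro e he f hf
    rw [Finset.mem_filter] at he hf
    by_contra h
    exact hM e he.1 f hf.1 ⟨h, v, he.2, hf.2⟩
  have hCHd : ∀ v, fdeg ends C v + fdeg ends H v ≤ Δ := by
    intro v
    rw [← hun C H hCH]
    exact (fdeg_mono ends (Finset.subset_univ _) v).trans (hΔ v)
  have hCd : ∀ v, 2 * fdeg ends C v ≤ Δ + 1 := by
    intro v
    have h1 := hCHd v
    have h2 : fdeg ends C v = _ := hun M R hMR v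
    have h3 := hA v
    have h4 := hMdeg v
    omega
  obtain ⟨c₀, hc1, hc2, hc3⟩ := greedy ends M C ((3 * Δ + 1) / 2) pre hM hpal (by
    intro e he u v _
    have := hCd u
    have := hCd v
    omega) Finset.subset_union_left
  have hends : ∀ e ∈ H, Crosses ends A e := by
    intro e he
    exact (Finset.mem_filter.1 he).2
  have hab : ∃ a b : E → V, ∀ e ∈ H, a e ∈ A ∧ b e ∉ A ∧ ends e = s(a e, b e) := by
    have : ∀ e, ∃ x : V × V, e ∈ H → x.1 ∈ A ∧ x.2 ∉ A ∧ ends e = s(x.1, x.2) := by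
      intro e
      by_cases he : e ∈ H
      · obtain ⟨u, v, h⟩ := hends e he
        exact ⟨(u, v), fun _ => h⟩
      · induction h : ends e using Sym2.ind with
        | _ x y => exact ⟨(x, y), fun h => absurd h he⟩
    choose g hg using this
    exact ⟨fun e => (g e).1, fun e => (g e).2, hg⟩
  obtain ⟨a, b, hab⟩ := hab
  have hda : ∀ v, sdeg H a v ≤ fdeg ends H v := by
    intro v
    apply Finset.card_le_card
    intro f hf
    rw [Finset.mem_filter] at hf ⊢
    refine ⟨hf.1, ?_⟩
    rw [(hab f hf.1).2.2, ← hf.2]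
    simp
  have hdb : ∀ v, sdeg H b v ≤ fdeg ends H v := by
    intro v
    apply Finset.card_le_card
    intro f hf
    rw [Finset.mem_filter] at hf ⊢
    refine ⟨hf.1, ?_⟩
    rw [(hab f hf.1).2.2, ← hf.2]
    simp
  obtain ⟨c₁, hd1, hd2⟩ := bipartite_list H a b
    (fun e => Finset.Icc 1 ((3 * Δ + 1) / 2) \ ((C.filter (fun f => MAdj ends e f)).image c₀)) (by
      intro e he
      have h1 := around_card ends C (a e) (b e) e (hab e he).2.2 c₀
      have h2 := Finset.le_card_sdiff ((C.filter (fun f => MAdj ends e f)).image c₀)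
        (Finset.Icc 1 ((3 * Δ + 1) / 2))
      rw [Nat.card_Icc] at h2
      have h3 := hda (a e)
      have h4 := hdb (b e)
      have h5 := hCHd (a e)
      have h6 := hCHd (b e)
      have h7 := hCd (a e)
      have h8 := hCd (b e)
      refine le_trans ?_ h2
      apply max_le <;> omega)
  have hsymm : ∀ e f, MAdj ends e f → MAdj ends f e := by
    rintro e f ⟨h, v, h1, h2⟩
    exact ⟨h.symm, v, h2, h1⟩
  have hcross : ∀ e ∈ H, ∀ f ∈ C, MAdj ends e f → c₁ e ≠ c₀ f := by
    intro e he f hf h h'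
    have := hd1 e he
    rw [Finset.mem_sdiff] at this
    apply this.2
    rw [h']
    exact Finset.mem_image_of_mem _ (by simp only [Finset.mem_filter]; exact ⟨hf, h⟩)
  have hHn : ∀ e ∈ H, e ∉ C := fun e he h => Finset.disjoint_left.1 hCH h he
  refine ⟨fun e => if e ∈ C then c₀ e else c₁ e, ?_, ?_, ?_⟩
  · intro e f hef
    by_cases he : e ∈ C <;> by_cases hf : f ∈ C <;> simp only [he, hf, if_true, if_false]
    · exact hc1 e he f hf hef
    · exact (hcross f ((hall f).resolve_left hf) e he (hsymm _ _ hef)).symm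
    · exact hcross e ((hall e).resolve_left he) f hf hef
    · have he' := (hall e).resolve_left he
      have hf' := (hall f).resolve_left hf
      apply hd2 e he' f hf' hef.1
      obtain ⟨_, v, h1, h2⟩ := hef
      obtain ⟨ha1, hb1, hh1⟩ := hab e he'
      obtain ⟨ha2, hb2, hh2⟩ := hab f hf'
      rw [hh1, Sym2.mem_iff] at h1
      rw [hh2, Sym2.mem_iff] at h2
      rcases h1 with h1 | h1 <;> rcases h2 with h2 | h2
      · exact Or.inl (h1.symm.trans h2)
      · exact absurd (h2 ▸ h1 ▸ ha1) hb2
      · exact absurd (h1 ▸ h2 ▸ ha2) hb1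
      · exact Or.inr (h1.symm.trans h2)
  · intro e
    by_cases he : e ∈ C
    · simp only [he, if_true]
      exact hc2 e he
    · simp only [he, if_false]
      exact (Finset.mem_sdiff.1 (hd1 e ((hall e).resolve_left he))).1
  · intro e he
    have : e ∈ C := Finset.mem_union_left _ he
    simp only [this, if_true]
    exact hc3 e he

end Aux

/-- Theorem 5: in a multigraph of maximum degree `Δ`, any precoloured matching extends
to a proper edge-colouring with palette `{1, …, ⌊3Δ/2 + 1/2⌋}` = `{1, …, (3Δ+1)/2}`. -/
theorem shannon_extend_matching [Fintype E] (ends : E → Sym2 V)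
    (hloop : ∀ e, ¬ (ends e).IsDiag)
    (Δ : ℕ) (hΔ : IsGreatest (Set.range (mdeg ends)) Δ)
    (M : Set E) (hM : ∀ e ∈ M, ∀ f ∈ M, ¬ MAdj ends e f)
    (pre : E → ℕ) (hpal : ∀ e ∈ M, pre e ∈ Finset.Icc 1 ((3 * Δ + 1) / 2)) :
    ∃ c : E → ℕ, MProper ends c ∧ (∀ e, c e ∈ Finset.Icc 1 ((3 * Δ + 1) / 2)) ∧
      ∀ e ∈ M, c e = pre e := by
  classical
  have hdeg : ∀ v, fdeg ends Finset.univ v ≤ Δ := by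
    intro v
    have h1 := hΔ.2 ⟨v, rfl⟩
    refine le_trans (le_of_eq ?_) h1
    unfold fdeg mdeg
    rw [← Set.ncard_coe_finset]
    congr 1
    ext e
    simp
  obtain ⟨c, h1, h2, h3⟩ := shannon_aux ends hloop Δ hdeg M.toFinset
    (by simpa using hM) pre (by simpa using hpal)
  exact ⟨c, h1, h2, by simpa using h3⟩
end

section
/- Let G be a connected multigraph and k a non-negative integer with Δ(L(G)) ≤ Δ(G) + k, where L(G) is the line graph. Take the palette K = {1, …, Δ(G)+k}. If G is properly precoloured so that every vertex is incident with at most k precoloured edges, then the precolouring extends to a proper edge-colouring of all of G, unless (a) k = 0 and G is a simple odd cycle, or (b) G is a triangle with edge multiplicities m₁, m₂, m₃ and k = min{m₁, m₂, m₃} − 1. -/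
variable {V E : Type*}

/-- The degree of an edge `e` in the line graph: the number of edges adjacent to it. -/
noncomputable def lineDeg (ends : E → Sym2 V) (e : E) : ℕ :=
  {f : E | MAdj ends e f}.ncard

/-- The multiplicity of the vertex pair `{a, b}`. -/
noncomputable def mult (ends : E → Sym2 V) (a b : V) : ℕ :=
  {e : E | ends e = s(a, b)}.ncard

/-- The multigraph is a simple odd cycle. -/
def IsSimpleOddCycle (ends : E → Sym2 V) : Prop :=
  ∃ n : ℕ, Odd n ∧ 3 ≤ n ∧ ∃ (ve : V ≃ ZMod n) (ee : E ≃ ZMod n),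
    ∀ i : ZMod n, ends (ee.symm i) = s(ve.symm i, ve.symm (i + 1))

/-- The multigraph is a triangle on three vertices `u, v, w` with edge multiplicities
`m₁, m₂, m₃ ≥ 1` and `k = min{m₁, m₂, m₃} - 1`. -/
def IsExceptionalTriangle (ends : E → Sym2 V) (k : ℕ) : Prop :=
  ∃ u v w : V, u ≠ v ∧ u ≠ w ∧ v ≠ w ∧ (∀ x : V, x = u ∨ x = v ∨ x = w) ∧
    1 ≤ mult ends u v ∧ 1 ≤ mult ends u w ∧ 1 ≤ mult ends v w ∧
    k + 1 = min (mult ends u v) (min (mult ends u w) (mult ends v w))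


section Helpers

/-- Partial colourings (`0` means uncoloured) extending `pre`. -/
def PCol (ends : E → Sym2 V) (S : Set E) (pre : E → ℕ) (N : ℕ) (c : E → ℕ) : Prop :=
  (∀ e ∈ S, c e = pre e) ∧ (∀ e, c e ≤ N) ∧ ∀ e f, MAdj ends e f → c e = c f → c e = 0

/-- A partial colouring with the least number of uncoloured edges, with `e` uncoloured. -/
def Stuck (ends : E → Sym2 V) (S : Set E) (pre : E → ℕ) (N : ℕ) (c : E → ℕ) (e : E) : Prop :=
  PCol ends S pre N c ∧
  (∀ c', PCol ends S pre N c' → {e | c e = 0}.ncard ≤ {e | c' e = 0}.ncard) ∧ c e = 0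

theorem MAdj.symm' {ends : E → Sym2 V} {e f : E} (h : MAdj ends e f) : MAdj ends f e :=
  ⟨h.1.symm, h.2.imp fun _ h => h.symm⟩

open Classical in
/-- The properties of stuck states. -/
structure Sys (ends : E → Sym2 V) (S : Set E) (N : ℕ) (P : (E → ℕ) → E → Prop) : Prop where
  inj : ∀ {c e f g}, P c e → MAdj ends e f → MAdj ends e g → c f = c g → f = g
  surj : ∀ {c e a}, P c e → 1 ≤ a → a ≤ N → ∃ f, MAdj ends e f ∧ c f = a
  rng : ∀ {c e f}, P c e → MAdj ends e f → 1 ≤ c f ∧ c f ≤ N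
  prop : ∀ {c e f g}, P c e → MAdj ends f g → c f = c g → c f = 0
  move : ∀ {c e f}, P c e → MAdj ends e f → f ∉ S → P (c ∘ Equiv.swap e f) f
  free : ∀ {c e}, P c e → e ∉ S
  deg : ∀ {c e}, P c e → lineDeg ends e = N

theorem stuck_surj [Fintype E] {ends : E → Sym2 V} {S : Set E} {pre : E → ℕ} {N : ℕ}
    (hpre : ∀ e ∈ S, 1 ≤ pre e)
    {c : E → ℕ} {e : E} (h : Stuck ends S pre N c e) {a : ℕ} (h1 : 1 ≤ a) (h2 : a ≤ N) :
    ∃ f, MAdj ends e f ∧ c f = a := by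
  classical
  by_contra hcon
  push Not at hcon
  obtain ⟨⟨hS, hle, hp⟩, hmin, h0⟩ := h
  have heS : e ∉ S := fun he => by have := hpre e he; have := hS e he; omega
  have := hmin (Function.update c e a) ⟨?_, ?_, ?_⟩
  · have hlt : {x | Function.update c e a x = 0}.ncard < {x | c x = 0}.ncard := by
      apply Set.ncard_lt_ncard _ (Set.toFinite _)
      refine ⟨?_, ?_⟩
      · intro x hx
        by_cases hxe : x = e
        · subst hxe; exact h0
        · simpa [Function.update_of_ne hxe] using hx
      · intro hh
        have := hh h0
        simp at this
        omega
    omega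
  · intro f hf
    rw [Function.update_of_ne (by rintro rfl; exact heS hf)]
    exact hS f hf
  · intro f
    by_cases hf : f = e
    · subst hf; simpa using h2
    · rw [Function.update_of_ne hf]; exact hle f
  · intro f g hfg heq
    by_cases hf : f = e
    · subst hf
      rw [Function.update_self, Function.update_of_ne hfg.1.symm] at heq
      exact absurd heq.symm (hcon g hfg)
    · by_cases hg : g = e
      · subst hg
        rw [Function.update_self, Function.update_of_ne hf] at heq
        exact absurd heq (hcon f hfg.symm')
      · rw [Function.update_of_ne hf, Function.update_of_ne hg] at heq
        rw [Function.update_of_ne hf]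
        exact hp f g hfg heq

theorem stuck_sys [Fintype E] {ends : E → Sym2 V} {S : Set E} {pre : E → ℕ} {N : ℕ}
    (hpre : ∀ e ∈ S, 1 ≤ pre e) (hN : ∀ e, lineDeg ends e ≤ N) :
    Sys ends S N (Stuck ends S pre N) := by
  classical
  have key : ∀ {c e}, Stuck ends S pre N c e →
      ((Finset.univ.filter (MAdj ends e)).image c = Finset.Icc 1 N ∧
      (Finset.univ.filter (MAdj ends e)).card = N ∧
      Set.InjOn c (Finset.univ.filter (MAdj ends e)) ∧ lineDeg ends e = N) := by
    intro c e h
    have hd : lineDeg ends e = (Finset.univ.filter (MAdj ends e)).card := by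
      rw [lineDeg, ← Set.ncard_coe_finset]; congr 1; ext; simp
    have hsub : Finset.Icc 1 N ⊆ (Finset.univ.filter (MAdj ends e)).image c := by
      intro a ha
      rw [Finset.mem_Icc] at ha
      obtain ⟨f, hf, hfa⟩ := stuck_surj hpre h ha.1 ha.2
      exact Finset.mem_image.2 ⟨f, by simpa using hf, hfa⟩
    have h1 := Finset.card_le_card hsub
    have h2 := Finset.card_image_le (s := Finset.univ.filter (MAdj ends e)) (f := c)
    have h3 := hN e
    rw [Nat.card_Icc] at h1
    refine ⟨(Finset.eq_of_subset_of_card_le hsub ?_).symm, by omega, ?_, by omega⟩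
    · rw [Nat.card_Icc]; omega
    · rw [← Finset.card_image_iff]; omega
  have hinj : ∀ {c e f g}, Stuck ends S pre N c e → MAdj ends e f → MAdj ends e g →
      c f = c g → f = g := by
    intro c e f g h hf hg hfg
    exact (key h).2.2.1 (by simpa using hf) (by simpa using hg) hfg
  have hfree : ∀ {c e}, Stuck ends S pre N c e → e ∉ S := by
    intro c e h he
    have := hpre e he; have := h.1.1 e he; have := h.2.2; omega
  refine ⟨hinj, fun h h1 h2 => stuck_surj hpre h h1 h2, ?_, fun h => h.1.2.2 _ _, ?_, hfree,
    fun h => (key h).2.2.2⟩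
  · intro c e f h hf
    have : c f ∈ (Finset.univ.filter (MAdj ends e)).image c :=
      Finset.mem_image_of_mem _ (by simpa using hf)
    rw [(key h).1, Finset.mem_Icc] at this
    exact this
  · intro c e f h hef hfS
    have heS := hfree h
    obtain ⟨⟨hS, hle, hp⟩, hmin, h0⟩ := id h
    have he' : (c ∘ Equiv.swap e f) e = c f := by simp
    have hf' : (c ∘ Equiv.swap e f) f = 0 := by simp [h0]
    have ho : ∀ g, g ≠ e → g ≠ f → (c ∘ Equiv.swap e f) g = c g := by
      intro g h1 h2; simp [Equiv.swap_apply_of_ne_of_ne h1 h2]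
    refine ⟨⟨?_, fun _ => hle _, ?_⟩, ?_, hf'⟩
    · intro g hg
      rw [ho g (by rintro rfl; exact heS hg) (by rintro rfl; exact hfS hg)]
      exact hS g hg
    · intro g g' hgg heq
      by_cases hgf : g = f
      · rw [hgf, hf']
      by_cases hgf' : g' = f
      · rw [heq, hgf', hf']
      by_cases hge : g = e
      · subst hge
        rw [he', ho g' hgg.1.symm hgf'] at heq
        exact absurd (hinj h hef hgg heq).symm hgf'
      by_cases hge' : g' = e
      · subst hge'
        rw [he', ho g hge hgf] at heq
        exact absurd (hinj h hgg.symm' hef heq) hgf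
      rw [ho g hge hgf, ho g' hge' hgf'] at heq
      rw [ho g hge hgf]
      exact hp g g' hgg heq
    · intro c' hc'
      have : {x | (c ∘ Equiv.swap e f) x = 0} = (Equiv.swap e f) '' {x | c x = 0} := by
        ext x
        simp only [Set.mem_ofPred_eq, Function.comp, Set.mem_image]
        constructor
        · intro hx; exact ⟨_, hx, by simp⟩
        · rintro ⟨y, hy, rfl⟩; simpa using hy
      rw [this, Set.ncard_image_of_injective _ (Equiv.injective _)]
      exact hmin c' hc'

section sys
variable {ends : E → Sym2 V} {S : Set E} {N : ℕ} {P : (E → ℕ) → E → Prop}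

theorem Sys.move' (H : Sys ends S N P) {c : E → ℕ} {e f : E} (h : P c e) (hef : MAdj ends e f)
    (hf : f ∉ S) : ∃ c', P c' f ∧ c' e = c f ∧ ∀ g, g ≠ e → g ≠ f → c' g = c g := by
  classical
  refine ⟨_, H.move h hef hf, ?_, ?_⟩
  · simp
  · intro g h1 h2; simp [Equiv.swap_apply_of_ne_of_ne h1 h2]

theorem Sys.shift (H : Sys ends S N P) {c : E → ℕ} (s : ℕ → E) (h : P c (s 0)) (m : ℕ)
    (hinj : ∀ i ≤ m, ∀ j ≤ m, s i = s j → i = j)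
    (hadj : ∀ i < m, MAdj ends (s i) (s (i + 1)))
    (hS : ∀ i ≤ m, s i ∉ S) :
    ∃ c', P c' (s m) ∧ (∀ i < m, c' (s i) = c (s (i + 1))) ∧
      ∀ g, (∀ i ≤ m, g ≠ s i) → c' g = c g := by
  induction m with
  | zero => exact ⟨c, h, by simp, by simp⟩
  | succ m ih =>
    obtain ⟨c1, h1, h2, h3⟩ := ih (fun i hi j hj => hinj i (by omega) j (by omega))
      (fun i hi => hadj i (by omega)) (fun i hi => hS i (by omega))
    obtain ⟨c2, k1, k2, k3⟩ := H.move' h1 (hadj m (by omega)) (hS _ le_rfl)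
    refine ⟨c2, k1, ?_, ?_⟩
    · intro i hi
      rcases Nat.lt_or_ge i m with him | him
      · rw [k3, h2 i him]
        · intro he; have := hinj _ (by omega) _ (by omega) he; omega
        · intro he; have := hinj _ (by omega) _ (by omega) he; omega
      · obtain rfl : i = m := by omega
        rw [k2, h3]
        intro j hj he
        have := hinj _ (by omega) _ (by omega) he; omega
    · intro g hg
      rw [k3 g (hg m (by omega)) (hg _ le_rfl), h3 g (fun i hi => hg i (by omega))]

/-- Rotation of the colours along a cycle of length `m + 1` in the line graph. -/
theorem Sys.rotate (H : Sys ends S N P) {c : E → ℕ} (s : ℕ → E) (h : P c (s 0)) (m : ℕ)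
    (hm : 2 ≤ m)
    (hinj : ∀ i ≤ m, ∀ j ≤ m, s i = s j → i = j)
    (hadj : ∀ i < m, MAdj ends (s i) (s (i + 1)))
    (hcl : MAdj ends (s m) (s 0))
    (hS : ∀ i ≤ m, s i ∉ S) :
    ∃ c', P c' (s 0) ∧ (∀ i, 1 ≤ i → i < m → c' (s i) = c (s (i + 1))) ∧ c' (s m) = c (s 1) ∧
      ∀ g, (∀ i ≤ m, g ≠ s i) → c' g = c g := by
  obtain ⟨c1, h1, h2, h3⟩ := H.shift s h m hinj hadj hS
  obtain ⟨c2, k1, k2, k3⟩ := H.move' h1 hcl (hS 0 (by omega))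
  refine ⟨c2, k1, ?_, ?_, ?_⟩
  · intro i hi him
    rw [k3, h2 i him]
    · intro he; have := hinj _ (by omega) _ (by omega) he; omega
    · intro he; have := hinj _ (by omega) _ (by omega) he; omega
  · rw [k2, h2 0 (by omega)]
  · intro g hg
    rw [k3 g (hg m le_rfl) (hg 0 (by omega)), h3 g hg]

/-- The basic relation. -/
theorem Sys.base (H : Sys ends S N P) {c : E → ℕ} (s : ℕ → E) (h : P c (s 0)) (m : ℕ)
    (hm : 3 ≤ m)
    (hinj : ∀ i ≤ m, ∀ j ≤ m, s i = s j → i = j)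
    (hadj : ∀ i < m, MAdj ends (s i) (s (i + 1)))
    (hcl : MAdj ends (s m) (s 0))
    (hS : ∀ i ≤ m, s i ∉ S)
    (hna : ∀ i, 2 ≤ i → i < m → ¬ MAdj ends (s 0) (s i)) : c (s 2) = c (s m) := by
  obtain ⟨c', h1, h2, h3, h4⟩ := H.rotate s h m (by omega) hinj hadj hcl hS
  have h01 := hadj 0 (by omega)
  obtain ⟨r1, r2⟩ := H.rng h hcl.symm'
  obtain ⟨f, hf, hfc⟩ := H.surj h1 r1 r2
  by_cases hfs : ∃ i ≤ m, f = s i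
  · obtain ⟨i, hi, rfl⟩ := hfs
    rcases Nat.lt_or_ge i 2 with h' | h'
    · interval_cases i
      · exact absurd rfl hf.1
      · rw [← hfc, h2 1 le_rfl (by omega)]
    · rcases Nat.lt_or_ge i m with h'' | h''
      · exact absurd hf (hna i h' h'')
      · obtain rfl : i = m := by omega
        rw [h3] at hfc
        have := hinj _ (by omega) _ (by omega) (H.inj h h01 hcl.symm' hfc)
        omega
  · push Not at hfs
    rw [h4 f hfs] at hfc
    exact absurd (H.inj h hf hcl.symm' hfc) (hfs m le_rfl)

/-- No induced-at-the-root even cycles: `m` is the length minus one. -/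
theorem Sys.no_even (H : Sys ends S N P) {c : E → ℕ} (s : ℕ → E) (h : P c (s 0)) (m : ℕ)
    (hm : 3 ≤ m)
    (hinj : ∀ i ≤ m, ∀ j ≤ m, s i = s j → i = j)
    (hadj : ∀ i < m, MAdj ends (s i) (s (i + 1)))
    (hcl : MAdj ends (s m) (s 0))
    (hS : ∀ i ≤ m, s i ∉ S)
    (hna : ∀ i, 2 ≤ i → i < m → ¬ MAdj ends (s 0) (s i)) : ¬ Odd m := by
  have key : ∀ r, ∀ c, P c (s 0) → r + 3 ≤ m → c (s (r + 3)) = c (s (r + 1)) := by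
    intro r
    induction r with
    | zero =>
      intro c h hr
      obtain ⟨c', h1, h2, h3, h4⟩ := H.rotate s h m (by omega) hinj hadj hcl hS
      have := H.base s h1 m hm hinj hadj hcl hS hna
      rwa [h3, h2 2 (by omega) (by omega)] at this
    | succ r ih =>
      intro c h hr
      obtain ⟨c', h1, h2, h3, h4⟩ := H.rotate s h m (by omega) hinj hadj hcl hS
      have := ih c' h1 (by omega)
      rwa [h2 _ (by omega) (by omega), h2 _ (by omega) (by omega)] at this
  have key2 : ∀ t, 2 * t + 1 ≤ m → c (s (2 * t + 1)) = c (s 1) := by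
    intro t
    induction t with
    | zero => intro _; rfl
    | succ t ih =>
      intro ht
      rw [← ih (by omega)]
      exact key (2 * t) c h (by omega)
  rintro ⟨t, ht⟩
  have := key2 t (by omega)
  rw [← ht] at this
  have := hinj _ (by omega) _ (by omega) (H.inj h hcl.symm' (hadj 0 (by omega)) this)
  omega

/-- No free edge can be attached to a cycle of length at least four. -/
theorem Sys.no_attach (H : Sys ends S N P) {c : E → ℕ} (s : ℕ → E) (h : P c (s 0)) (m : ℕ)
    (hm : 3 ≤ m)
    (hinj : ∀ i ≤ m, ∀ j ≤ m, s i = s j → i = j)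
    (hadj : ∀ i < m, MAdj ends (s i) (s (i + 1)))
    (hcl : MAdj ends (s m) (s 0))
    (hS : ∀ i ≤ m, s i ∉ S)
    (hna : ∀ i, 2 ≤ i → i < m → ¬ MAdj ends (s 0) (s i))
    (g : E) (hg : g ∉ S) (hgs : ∀ i ≤ m, g ≠ s i)
    (h2 : MAdj ends (s 2) g) (h3 : MAdj ends g (s 3)) : False := by
  obtain ⟨c1, a1, a2, a3, a4⟩ := H.rotate s h m (by omega) hinj hadj hcl hS
  have e1 := H.base s a1 m hm hinj hadj hcl hS hna
  rw [a3, a2 2 (by omega) (by omega)] at e1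
  let s' : ℕ → E := fun j => if j < 3 then s j else if j = 3 then g else s (j - 1)
  have t1 : ∀ j < 3, s' j = s j := fun j hj => by simp [s', hj]
  have t2 : s' 3 = g := by simp [s']
  have t3 : ∀ j, 3 ≤ j → s' (j + 1) = s j := fun j hj => by
    have h1 : ¬ (j + 1 < 3) := by omega
    have h2 : ¬ (j + 1 = 3) := by omega
    simp only [s', h1, h2, if_false]; rfl
  have cs : ∀ i ≤ m + 1, (i < 3 ∧ s' i = s i) ∨ (i = 3 ∧ s' i = g) ∨
      ∃ j, 3 ≤ j ∧ i = j + 1 ∧ s' i = s j := by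
    intro i hi
    rcases Nat.lt_trichotomy i 3 with h | h | h
    · exact Or.inl ⟨h, t1 i h⟩
    · exact Or.inr (Or.inl ⟨h, h ▸ t2⟩)
    · obtain ⟨j, rfl⟩ : ∃ j, i = j + 1 := ⟨i - 1, by omega⟩
      exact Or.inr (Or.inr ⟨j, by omega, rfl, t3 j (by omega)⟩)
  obtain ⟨c2, b1, b2, b3, b4⟩ := H.rotate s' (c := c) (by rwa [t1 0 (by omega)]) (m + 1) (by omega)
    (by
      intro i hi j hj hij
      rcases cs i hi with ⟨x1, x2⟩ | ⟨x1, x2⟩ | ⟨i', x1, x3, x2⟩ <;>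
      rcases cs j hj with ⟨y1, y2⟩ | ⟨y1, y2⟩ | ⟨j', y1, y3, y2⟩ <;>
      rw [x2, y2] at hij
      all_goals first
        | omega
        | exact absurd hij (hgs _ (by omega))
        | exact absurd hij.symm (hgs _ (by omega))
        | (have := hinj _ (by omega) _ (by omega) hij; omega))
    (by
      intro i hi
      rcases Nat.lt_or_ge i 2 with h' | h'
      · rw [t1 i (by omega), t1 (i + 1) (by omega)]; exact hadj i (by omega)
      · rcases Nat.lt_or_ge i 4 with h'' | h''
        · interval_cases i
          · rw [t1 2 (by omega), t2]; exact h2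
          · rw [t2, t3 3 (by omega)]; exact h3
        · obtain ⟨j, rfl⟩ : ∃ j, i = j + 1 := ⟨i - 1, by omega⟩
          rw [t3 j (by omega), t3 (j + 1) (by omega)]; exact hadj j (by omega))
    (by rw [t3 m hm, t1 0 (by omega)]; exact hcl)
    (by
      intro i hi
      rcases cs i hi with ⟨x1, x2⟩ | ⟨x1, x2⟩ | ⟨i', x1, x3, x2⟩ <;> rw [x2]
      · exact hS _ (by omega)
      · exact hg
      · exact hS _ (by omega))
  rw [t1 0 (by omega)] at b1
  have e2 := H.base s b1 m hm hinj hadj hcl hS hna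
  rw [t3 m hm, t1 1 (by omega)] at b3
  have b22 := b2 2 (by omega) (by omega)
  rw [t1 2 (by omega), t2] at b22
  rw [b22, b3] at e2
  have e3 := H.prop h h3 (by rw [e2, e1])
  have := H.rng h (hadj 0 (by omega))
  simp only [zero_add] at this
  omega

end sys

section deg
variable {ends : E → Sym2 V} {S : Set E} {N : ℕ} {P : (E → ℕ) → E → Prop}

theorem mdeg_add [Fintype E] {e : E} {v w : V} (he : ends e = s(v, w)) (hvw : v ≠ w) :
    mdeg ends v + mdeg ends w = lineDeg ends e + 1 + mult ends v w := by
  have h1 : {f | v ∈ ends f} ∪ {f | w ∈ ends f} = insert e {f | MAdj ends e f} := by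
    ext f
    simp only [Set.mem_union, Set.mem_ofPred_eq, Set.mem_insert_iff, MAdj, he, Sym2.mem_iff]
    constructor
    · intro h
      by_cases hfe : f = e
      · exact Or.inl hfe
      · refine Or.inr ⟨fun h => hfe h.symm, ?_⟩
        rcases h with h | h
        · exact ⟨v, Or.inl rfl, h⟩
        · exact ⟨w, Or.inr rfl, h⟩
    · rintro (rfl | ⟨_, x, rfl | rfl, hx⟩)
      · left; rw [he]; simp
      · exact Or.inl hx
      · exact Or.inr hx
  have h2 : {f | v ∈ ends f} ∩ {f | w ∈ ends f} = {f | ends f = s(v, w)} := by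
    ext f
    simp only [Set.mem_inter_iff, Set.mem_ofPred_eq]
    exact Sym2.mem_and_mem_iff hvw
  have h3 := Set.ncard_union_add_ncard_inter {f | v ∈ ends f} {f | w ∈ ends f}
    (Set.toFinite _) (Set.toFinite _)
  rw [h1, h2, Set.ncard_insert_of_notMem (by simp [MAdj]) (Set.toFinite _)] at h3
  simp only [mdeg, lineDeg, mult]
  omega

theorem mult_comm' (v w : V) : mult ends v w = mult ends w v := by
  simp only [mult, Sym2.eq_swap]

theorem mult_pos' [Fintype E] {e : E} {v w : V} (he : ends e = s(v, w)) :
    1 ≤ mult ends v w := by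
  rw [mult, Nat.one_le_iff_ne_zero, Ne, Set.ncard_eq_zero (Set.toFinite _)]
  exact Set.Nonempty.ne_empty ⟨e, he⟩

theorem ends_ne (hloop : ∀ e, ¬ (ends e).IsDiag) {e : E} {v w : V} (he : ends e = s(v, w)) :
    v ≠ w := by
  rintro rfl
  apply hloop e
  rw [he]; simp

theorem Sys.mdeg_ge [Fintype E] [Fintype V] {k : ℕ}
    (H : Sys ends S (Finset.univ.sup (mdeg ends) + k) P)
    (hloop : ∀ e, ¬ (ends e).IsDiag)
    {c : E → ℕ} {e : E} (h : P c e) {v w : V} (he : ends e = s(v, w)) :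
    k + 1 + mult ends v w ≤ mdeg ends v := by
  have h1 := mdeg_add he (ends_ne hloop he)
  have h2 := H.deg h
  have h3 : mdeg ends w ≤ Finset.univ.sup (mdeg ends) := Finset.le_sup (Finset.mem_univ w)
  omega

theorem Sys.free_ge [Fintype E] [Fintype V] {k : ℕ}
    (H : Sys ends S (Finset.univ.sup (mdeg ends) + k) P)
    (hloop : ∀ e, ¬ (ends e).IsDiag)
    (hpredeg : ∀ v : V, {e ∈ S | v ∈ ends e}.ncard ≤ k)
    {c : E → ℕ} {e : E} (h : P c e) {v w : V} (he : ends e = s(v, w)) :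
    1 + mult ends v w ≤ {f | f ∉ S ∧ v ∈ ends f}.ncard := by
  have h1 := H.mdeg_ge hloop h he
  have h2 : {f | v ∈ ends f} ⊆ {e ∈ S | v ∈ ends e} ∪ {f | f ∉ S ∧ v ∈ ends f} := by
    intro f hf
    by_cases hS : f ∈ S
    · exact Or.inl ⟨hS, hf⟩
    · exact Or.inr ⟨hS, hf⟩
  have h3 := Set.ncard_le_ncard h2 (Set.toFinite _)
  have h4 := Set.ncard_union_le {e ∈ S | v ∈ ends e} {f | f ∉ S ∧ v ∈ ends f}
  have h5 := hpredeg v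
  rw [mdeg] at h1
  omega

theorem Sys.next [Fintype E] [Fintype V] {k : ℕ}
    (H : Sys ends S (Finset.univ.sup (mdeg ends) + k) P)
    (hloop : ∀ e, ¬ (ends e).IsDiag)
    (hpredeg : ∀ v : V, {e ∈ S | v ∈ ends e}.ncard ≤ k)
    {c : E → ℕ} {e : E} (h : P c e) {v w : V} (he : ends e = s(v, w)) :
    ∃ g x c', ends g = s(w, x) ∧ x ≠ v ∧ P c' g := by
  have h1 := H.free_ge hloop hpredeg h (v := w) (w := v) (by rw [he, Sym2.eq_swap])
  obtain ⟨g, ⟨hgS, hgw⟩, hg⟩ : ∃ g ∈ {f | f ∉ S ∧ w ∈ ends f}, g ∉ {e | ends e = s(w, v)} := by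
    by_contra hcon
    push Not at hcon
    have := Set.ncard_le_ncard (t := {e | ends e = s(w, v)}) hcon (Set.toFinite _)
    rw [mult] at h1
    omega
  obtain ⟨x, hx⟩ := Sym2.mem_iff_exists.1 hgw
  have hxv : x ≠ v := by
    rintro rfl; exact hg hx
  obtain ⟨c', hc', _⟩ := H.move' h (f := g) ⟨by
    rintro rfl
    apply hg; rw [Set.mem_ofPred_eq, he, Sym2.eq_swap], w, by rw [he]; simp, hgw⟩ hgS
  exact ⟨g, x, c', hx, hxv, hc'⟩

/-- A cycle in the multigraph. -/
structure Cyc (ends : E → Sym2 V) (n : ℕ) (f : ZMod n → V) (ee : ZMod n → E) : Prop where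
  inj : Function.Injective f
  he : ∀ i, ends (ee i) = s(f i, f (i + 1))

theorem Sys.exists_cyc [Fintype E] [Fintype V] {k : ℕ}
    (H : Sys ends S (Finset.univ.sup (mdeg ends) + k) P)
    (hloop : ∀ e, ¬ (ends e).IsDiag)
    (hpredeg : ∀ v : V, {e ∈ S | v ∈ ends e}.ncard ≤ k)
    {c : E → ℕ} {e : E} (h : P c e) :
    ∃ n, 3 ≤ n ∧ ∃ f ee, Cyc ends n f ee ∧ ∀ i, ∃ c, P c (ee i) := by
  classical
  let D := {d : E × V × V // ends d.1 = s(d.2.1, d.2.2) ∧ ∃ c, P c d.1}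
  have hn : ∀ d : D, ∃ d' : D, d'.1.2.1 = d.1.2.2 ∧ d'.1.2.2 ≠ d.1.2.1 := by
    rintro ⟨⟨e, v, w⟩, he, c, hc⟩
    obtain ⟨g, x, c', h1, h2, h3⟩ := H.next hloop hpredeg hc he
    exact ⟨⟨⟨g, w, x⟩, h1, c', h3⟩, rfl, h2⟩
  choose nxt hn1 hn2 using hn
  obtain ⟨d0⟩ : Nonempty D := by
    obtain ⟨v, w, hvw⟩ : ∃ v w, ends e = s(v, w) := by
      induction hx : ends e using Sym2.ind with
      | _ v w => exact ⟨v, w, rfl⟩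
    exact ⟨⟨⟨e, v, w⟩, hvw, c, h⟩⟩
  let q : ℕ → D := fun i => nxt^[i] d0
  have hq : ∀ i, q (i + 1) = nxt (q i) := fun i => Function.iterate_succ_apply' _ _ _
  let w : ℕ → V := fun i => (q i).1.2.1
  have hw1 : ∀ i, w (i + 1) = (q i).1.2.2 := fun i => by
    simp only [w, hq]; exact hn1 _
  have hw2 : ∀ i, w (i + 2) ≠ w i := fun i => by
    rw [hw1 (i + 1), hq]; exact hn2 _
  have hwe : ∀ i, ends (q i).1.1 = s(w i, w (i + 1)) := fun i => by
    rw [hw1]; exact (q i).2.1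
  have hex : ∃ n, 0 < n ∧ ∃ i, w i = w (i + n) := by
    obtain ⟨i, j, hij, he⟩ := Finite.exists_ne_map_eq_of_infinite w
    rcases Nat.lt_or_gt_of_ne hij with hl | hl
    · exact ⟨j - i, by omega, i, by rw [he]; congr 1; omega⟩
    · exact ⟨i - j, by omega, j, by rw [← he]; congr 1; omega⟩
  obtain ⟨n, ⟨hn0, i, hi⟩, hmin⟩ : ∃ n, (0 < n ∧ ∃ i, w i = w (i + n)) ∧
      ∀ m < n, ¬ (0 < m ∧ ∃ i, w i = w (i + m)) :=
    ⟨Nat.find hex, Nat.find_spec hex, fun m hm => Nat.find_min hex hm⟩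
  have hinj : ∀ a b, a < b → b < n → w (i + a) ≠ w (i + b) := by
    intro a b hab hb he
    exact hmin (b - a) (by omega) ⟨by omega, i + a, by rw [he]; congr 1; omega⟩
  have hn1 : n ≠ 1 := by
    rintro rfl
    exact ends_ne hloop (hwe i) hi
  have hn2 : n ≠ 2 := by
    rintro rfl
    exact hw2 i hi.symm
  have : NeZero n := ⟨by omega⟩
  refine ⟨n, by omega, fun z => w (i + z.val), fun z => (q (i + z.val)).1.1, ⟨?_, ?_⟩, ?_⟩
  · intro a b hab
    have ha := ZMod.val_lt a
    have hb := ZMod.val_lt b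
    apply ZMod.val_injective n
    rcases Nat.lt_trichotomy a.val b.val with h | h | h
    · exact absurd hab (hinj _ _ h hb)
    · exact h
    · exact absurd hab.symm (hinj _ _ h ha)
  · intro z
    rw [hwe]
    suffices hs : w (i + z.val + 1) = w (i + (z + 1).val) by rw [hs]
    have hz := ZMod.val_lt z
    have : Fact (1 < n) := ⟨by omega⟩
    rw [ZMod.val_add, ZMod.val_one]
    rcases Nat.lt_or_ge (z.val + 1) n with h | h
    · rw [Nat.mod_eq_of_lt h]; rfl
    · have : z.val + 1 = n := by omega
      rw [this, Nat.mod_self, add_assoc, this]; exact hi.symm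
  · intro z
    exact (q (i + z.val)).2.2

end deg

section cyc
variable {ends : E → Sym2 V} {S : Set E} {N : ℕ} {P : (E → ℕ) → E → Prop}
variable {n : ℕ} {f : ZMod n → V} {ee : ZMod n → E}

theorem zmod_cast_inj {n i j : ℕ} (hi : i < n) (hj : j < n) (h : (i : ZMod n) = j) : i = j := by
  rw [ZMod.natCast_eq_natCast_iff'] at h
  rwa [Nat.mod_eq_of_lt hi, Nat.mod_eq_of_lt hj] at h

theorem zmod_two_ne {n : ℕ} (hn : 3 ≤ n) : (2 : ZMod n) ≠ 0 := by
  intro h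
  have := zmod_cast_inj (n := n) (i := 2) (j := 0) (by omega) (by omega) (by simpa using h)
  omega

theorem zmod_one_ne {n : ℕ} (hn : 3 ≤ n) : (1 : ZMod n) ≠ 0 := by
  intro h
  have := zmod_cast_inj (n := n) (i := 1) (j := 0) (by omega) (by omega) (by simpa using h)
  omega

theorem Cyc.mem (C : Cyc ends n f ee) {i j : ZMod n} (h : f j ∈ ends (ee i)) :
    i = j ∨ i = j - 1 := by
  rw [C.he, Sym2.mem_iff] at h
  rcases h with h | h
  · exact Or.inl (C.inj h).symm
  · right; rw [C.inj h]; ring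

theorem Cyc.mem1 (C : Cyc ends n f ee) (i : ZMod n) : f i ∈ ends (ee i) := by
  rw [C.he]; simp

theorem Cyc.mem2 (C : Cyc ends n f ee) (i : ZMod n) : f (i + 1) ∈ ends (ee i) := by
  rw [C.he]; simp

theorem Cyc.einj (C : Cyc ends n f ee) (hn : 3 ≤ n) : Function.Injective ee := by
  intro i j hij
  have h1 := C.mem1 i
  have h2 := C.mem2 i
  rw [hij] at h1 h2
  rcases C.mem h1 with h | h
  · exact h.symm
  · rcases C.mem h2 with h' | h'
    · exfalso
      apply zmod_two_ne hn
      rw [h] at h'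
      linear_combination -h'
    · rw [h']; ring

theorem Cyc.adj (C : Cyc ends n f ee) (hn : 3 ≤ n) (i : ZMod n) :
    MAdj ends (ee i) (ee (i + 1)) := by
  refine ⟨fun h => zmod_one_ne hn ?_, f (i + 1), C.mem2 i, C.mem1 _⟩
  have := C.einj hn h
  linear_combination -this

theorem Cyc.of_adj (C : Cyc ends n f ee) {i j : ZMod n} (h : MAdj ends (ee i) (ee j)) :
    j = i + 1 ∨ i = j + 1 := by
  obtain ⟨hne, v, h1, h2⟩ := h
  have hij : i ≠ j := fun h => hne (by rw [h])
  rw [C.he, Sym2.mem_iff] at h1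
  rcases h1 with rfl | rfl
  · rcases C.mem h2 with h | h
    · exact absurd h.symm hij
    · right; rw [h]; ring
  · rcases C.mem h2 with h | h
    · exact Or.inl h
    · exact absurd (by rw [h]; ring) hij

/-- All the hypotheses for the sequence lemmas. -/
theorem Cyc.seq (C : Cyc ends n f ee) (hn : 3 ≤ n) (r : ZMod n) :
    (∀ i ≤ n - 1, ∀ j ≤ n - 1, ee (r + (i : ℕ)) = ee (r + (j : ℕ)) → i = j) ∧
    (∀ i < n - 1, MAdj ends (ee (r + (i : ℕ))) (ee (r + ((i + 1 : ℕ) : ZMod n)))) ∧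
    MAdj ends (ee (r + ((n - 1 : ℕ) : ZMod n))) (ee (r + ((0 : ℕ) : ZMod n))) ∧
    (∀ i, 2 ≤ i → i < n - 1 →
      ¬ MAdj ends (ee (r + ((0 : ℕ) : ZMod n))) (ee (r + (i : ℕ)))) := by
  refine ⟨?_, ?_, ?_, ?_⟩
  · intro i hi j hj h
    exact zmod_cast_inj (by omega) (by omega) (add_left_cancel (C.einj hn h))
  · intro i hi
    have := C.adj hn (r + (i : ℕ))
    rwa [add_assoc, ← Nat.cast_succ] at this
  · have := C.adj hn (r + ((n - 1 : ℕ) : ZMod n))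
    rw [add_assoc, ← Nat.cast_succ] at this
    have h : (n - 1).succ = n := by omega
    rw [h, ZMod.natCast_self] at this
    simpa using this
  · intro i h2 hi h
    rcases C.of_adj h with h | h
    · have := zmod_cast_inj (n := n) (i := i) (j := 1) (by omega) (by omega) (by
        push_cast at h ⊢
        linear_combination h)
      omega
    · have := zmod_cast_inj (n := n) (i := i + 1) (j := 0) (by omega) (by omega) (by
        push_cast at h ⊢
        linear_combination -h)
      omega

theorem Sys.cyc_state (H : Sys ends S N P) (C : Cyc ends n f ee) (hn : 3 ≤ n)
    (hS : ∀ i, ee i ∉ S) {c : E → ℕ} (h : P c (ee 0)) (r : ZMod n) :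
    ∃ c', P c' (ee r) ∧ ∀ g, (∀ i, g ≠ ee i) → c' g = c g := by
  have : NeZero n := ⟨by omega⟩
  obtain ⟨h1, h2, -, -⟩ := C.seq hn 0
  have hr := ZMod.val_lt r
  obtain ⟨c', a1, a2, a3⟩ := H.shift (fun t : ℕ => ee (0 + (t : ZMod n))) (by simpa using h) r.val
    (fun i hi j hj => h1 i (by omega) j (by omega)) (fun i hi => h2 i (by omega))
    (fun i _ => hS _)
  refine ⟨c', by simpa using a1, fun g hg => a3 g fun i _ => hg _⟩

theorem Sys.cyc_base (H : Sys ends S N P) (C : Cyc ends n f ee) (hn : 4 ≤ n)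
    (hS : ∀ i, ee i ∉ S) {c : E → ℕ} {r : ZMod n} (h : P c (ee r)) :
    c (ee (r + 2)) = c (ee (r - 1)) := by
  obtain ⟨h1, h2, h3, h4⟩ := C.seq (by omega) r
  have := H.base (fun t : ℕ => ee (r + (t : ZMod n))) (by simpa using h) (n - 1) (by omega)
    h1 h2 h3 (fun _ _ => hS _) h4
  have e : ((n - 1 : ℕ) : ZMod n) = -1 := by
    rw [Nat.cast_sub (by omega)]; simp
  simp only [e] at this
  simpa [sub_eq_add_neg] using this

theorem Sys.cyc_odd (H : Sys ends S N P) (C : Cyc ends n f ee) (hn : 4 ≤ n)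
    (hS : ∀ i, ee i ∉ S) {c : E → ℕ} (h : P c (ee 0)) : Odd n := by
  obtain ⟨h1, h2, h3, h4⟩ := C.seq (by omega) 0
  have := H.no_even (fun t : ℕ => ee (0 + (t : ZMod n))) (by simpa using h) (n - 1) (by omega)
    h1 h2 h3 (fun _ _ => hS _) h4
  rw [Nat.not_odd_iff_even] at this
  have h5 := this.add_one
  rwa [Nat.sub_add_cancel (by omega)] at h5

theorem Sys.cyc_free (H : Sys ends S N P) (C : Cyc ends n f ee) (hn : 4 ≤ n)
    (hS : ∀ i, ee i ∉ S) {c : E → ℕ} (h : P c (ee 0)) {g : E} (hg : g ∉ S) {j : ZMod n}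
    (hj : f j ∈ ends g) : ∃ i, g = ee i := by
  by_contra hcon
  push Not at hcon
  obtain ⟨c', hc', -⟩ := H.cyc_state C (by omega) hS h (j - 3)
  obtain ⟨h1, h2, h3, h4⟩ := C.seq (by omega) (j - 3)
  have e2 : j - 3 + ((2 : ℕ) : ZMod n) = j - 1 := by push_cast; ring
  have e3 : j - 3 + ((3 : ℕ) : ZMod n) = j := by push_cast; ring
  refine H.no_attach (fun t : ℕ => ee (j - 3 + (t : ZMod n))) (by simpa using hc') (n - 1)
    (by omega) h1 h2 h3 (fun _ _ => hS _) h4 g hg (fun _ _ => hcon _) ?_ ?_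
  · simp only [e2]
    refine ⟨(hcon _).symm, f j, ?_, hj⟩
    simpa using C.mem2 (j - 1)
  · simp only [e3]
    exact ⟨hcon _, f j, hj, C.mem1 j⟩

theorem Sys.cyc_all [Fintype E] [Fintype V] {k : ℕ}
    (H : Sys ends S (Finset.univ.sup (mdeg ends) + k) P)
    (hloop : ∀ e, ¬ (ends e).IsDiag)
    (hpredeg : ∀ v : V, {e ∈ S | v ∈ ends e}.ncard ≤ k)
    (C : Cyc ends n f ee) (hn : 4 ≤ n)
    (hS : ∀ i, ee i ∉ S) {c : E → ℕ} (h : P c (ee 0)) {g : E} {j : ZMod n}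
    (hj : f j ∈ ends g) : ∃ i, g = ee i := by
  have hn3 : 3 ≤ n := by omega
  have hpar : ∀ i q, f i ∈ ends q → f (i + 1) ∈ ends q → q = ee i := by
    intro i q h1 h2
    by_contra hq
    obtain ⟨c', hc', -⟩ := H.cyc_state C hn3 hS h i
    have a1 := H.free_ge hloop hpredeg hc' (C.he i)
    have a2 : {g | g ∉ S ∧ f i ∈ ends g} ⊆ {ee i, ee (i - 1)} := by
      rintro g ⟨hgS, hgi⟩
      obtain ⟨l, rfl⟩ := H.cyc_free C hn hS h hgS hgi
      rcases C.mem hgi with rfl | rfl <;> simp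
    have a3 := Set.ncard_le_ncard a2 (Set.toFinite _)
    have a4 := Set.ncard_insert_le (ee i) {ee (i - 1)}
    rw [Set.ncard_singleton] at a4
    have a5 : ({q, ee i} : Set E) ⊆ {e | ends e = s(f i, f (i + 1))} := by
      rintro x (rfl | rfl)
      · exact (Sym2.mem_and_mem_iff (ends_ne hloop (C.he i))).1 ⟨h1, h2⟩
      · exact C.he i
    have a6 := Set.ncard_le_ncard a5 (Set.toFinite _)
    rw [Set.ncard_pair hq] at a6
    rw [mult] at a1
    omega
  by_contra hcon
  push Not at hcon
  let T : ZMod n → Prop := fun i => ∃ q, (∀ i, q ≠ ee i) ∧ c q = c g ∧ f i ∈ ends q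
  have hT : ∀ i, T i → ¬ T (i + 1) ∧ T (i + 2) := by
    rintro i ⟨q, hq, hqc, hqi⟩
    obtain ⟨c1, s1, s2⟩ := H.cyc_state C hn3 hS h i
    have hiq : MAdj ends (ee i) q := ⟨(hq i).symm, f i, C.mem1 i, hqi⟩
    have hnT : ¬ T (i + 1) := by
      rintro ⟨q', hq', hqc', hqi'⟩
      have : q = q' := H.inj s1 hiq ⟨(hq' i).symm, f (i + 1), C.mem2 i, hqi'⟩ (by
        rw [s2 q hq, s2 q' hq', hqc, hqc'])
      subst this
      exact hq i (hpar i q hqi hqi')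
    refine ⟨hnT, ?_⟩
    obtain ⟨c2, t1, t2, t3⟩ := H.move' s1 (C.adj hn3 i) (hS _)
    have hr := H.rng s1 hiq
    obtain ⟨q', u1, u2⟩ := H.surj t1 hr.1 hr.2
    by_cases hq' : ∃ l, q' = ee l
    · exfalso
      obtain ⟨l, rfl⟩ := hq'
      rcases C.of_adj u1 with hl | hl
      · subst hl
        have b := H.cyc_base C hn hS s1
        rw [t3, show i + 1 + 1 = i + 2 by ring, b] at u2
        · have hm := C.adj hn3 (i - 1)
          rw [sub_add_cancel] at hm
          exact hq _ (H.inj s1 hm.symm' hiq u2).symm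
        · intro he
          have := C.einj hn3 he
          apply zmod_two_ne hn3
          linear_combination this
        · exact u1.1.symm
      · have : l = i := by linear_combination -hl
        subst this
        rw [t2] at u2
        exact hq _ (H.inj s1 (C.adj hn3 l) hiq u2).symm
    · push Not at hq'
      rw [t3 q' (hq' _) (hq' _), s2 q' hq', s2 q hq, hqc] at u2
      obtain ⟨-, v, hv1, hv2⟩ := u1
      rw [C.he, Sym2.mem_iff] at hv1
      rcases hv1 with rfl | rfl
      · exact absurd ⟨q', hq', u2, hv2⟩ hnT
      · exact ⟨q', hq', u2, by rwa [show i + 2 = i + 1 + 1 by ring]⟩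
  have hTj : T j := ⟨g, hcon, rfl, hj⟩
  have hTt : ∀ t : ℕ, T (j + 2 * t) := by
    intro t
    induction t with
    | zero => simpa using hTj
    | succ t ih =>
      have := (hT _ ih).2
      rwa [show j + 2 * ((t + 1 : ℕ) : ZMod n) = j + 2 * t + 2 by push_cast; ring]
  obtain ⟨m, hm⟩ := H.cyc_odd C hn hS h
  have := hTt (m + 1)
  have e : (2 : ZMod n) * ((m + 1 : ℕ) : ZMod n) = 1 := by
    have h0 : ((2 * m + 1 : ℕ) : ZMod n) = 0 := by rw [← hm]; exact ZMod.natCast_self n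
    push_cast at h0 ⊢
    linear_combination h0
  rw [e] at this
  exact (hT j hTj).1 this

/-- The triangle case. -/
theorem Sys.tri (H : Sys ends S N P) {c : E → ℕ} {e g h q : E} {x y z t : V}
    (hc : P c e) (he : ends e = s(x, y)) (hg : ends g = s(y, z)) (hh : ends h = s(z, x))
    (hgS : g ∉ S) (hhS : h ∉ S) (hxy : x ≠ y) (hyz : y ≠ z) (hzx : z ≠ x)
    (hq : ends q = s(x, t)) (hty : t ≠ y) (htz : t ≠ z) : False := by
  have hqe : e ≠ q := by rintro rfl; rw [he] at hq; simp at hq; grind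
  have hqg : q ≠ g := by rintro rfl; rw [hg] at hq; simp at hq; grind
  have hqh : h ≠ q := by rintro rfl; rw [hh] at hq; simp at hq; grind
  have heg : e ≠ g := by rintro rfl; rw [he] at hg; simp at hg; grind
  have heh : e ≠ h := by rintro rfl; rw [he] at hh; simp at hh; grind
  have aeq : MAdj ends e q := ⟨hqe, x, by simp [he], by simp [hq]⟩
  have aeg : MAdj ends e g := ⟨heg, y, by simp [he], by simp [hg]⟩
  have aeh : MAdj ends e h := ⟨heh, x, by simp [he], by simp [hh]⟩
  have ahq : MAdj ends h q := ⟨hqh, x, by simp [hh], by simp [hq]⟩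
  obtain ⟨c1, a1, a2, a3⟩ := H.move' hc aeg hgS
  have hr := H.rng hc aeq
  obtain ⟨q', b1, b2⟩ := H.surj a1 hr.1 hr.2
  by_cases hq'e : q' = e
  · subst hq'e
    rw [a2] at b2
    exact hqg (H.inj hc aeg aeq b2).symm
  rw [a3 q' hq'e b1.1.symm] at b2
  have hnq : ¬ MAdj ends e q' := by
    intro h'
    have := H.inj hc h' aeq b2
    subst this
    obtain ⟨-, v, hv1, hv2⟩ := b1
    rw [hg, Sym2.mem_iff] at hv1
    rw [hq, Sym2.mem_iff] at hv2
    grind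
  have hx' : x ∉ ends q' := fun h' => hnq ⟨fun h => hq'e h.symm, x, by simp [he], h'⟩
  have hy' : y ∉ ends q' := fun h' => hnq ⟨fun h => hq'e h.symm, y, by simp [he], h'⟩
  have hz' : z ∈ ends q' := by
    obtain ⟨-, v, hv1, hv2⟩ := b1
    rw [hg, Sym2.mem_iff] at hv1
    rcases hv1 with rfl | rfl
    · exact absurd hv2 hy'
    · exact hv2
  have hq'h : h ≠ q' := by rintro rfl; apply hx'; simp [hh]
  obtain ⟨c2, d1, d2, d3⟩ := H.move' hc aeh hhS
  have := H.inj d1 ahq ⟨hq'h, z, by simp [hh], hz'⟩ (by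
    rw [d3 q hqe.symm hqh.symm, d3 q' hq'e hq'h.symm, b2])
  subst this
  apply hx'; simp [hq]

end cyc

theorem conn_all {ends : E → Sym2 V}
    (hconn : ∀ a b : V, Relation.ReflTransGen (fun x y => ∃ e, ends e = s(x, y)) a b)
    (W : Set V) (a : V) (ha : a ∈ W) (hW : ∀ x ∈ W, ∀ e y, ends e = s(x, y) → y ∈ W) (b : V) :
    b ∈ W := by
  induction hconn a b with
  | refl => exact ha
  | tail _ h ih =>
    obtain ⟨e, he⟩ := h
    exact hW _ ih e _ he

end Helpers

/-- Theorem 7: precolouring extension for connected multigraphs with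
`Δ(L(G)) ≤ Δ(G) + k`, palette `{1, …, Δ(G) + k}` and precoloured degree of every
vertex at most `k`, with the two exceptional cases. -/
theorem gallai_extend [Fintype V] [Fintype E] (ends : E → Sym2 V)
    (hloop : ∀ e, ¬ (ends e).IsDiag)
    (hVne : Nonempty V)
    (hconn : ∀ a b : V, Relation.ReflTransGen (fun x y => ∃ e, ends e = s(x, y)) a b)
    (k : ℕ)
    (hk : Finset.univ.sup (lineDeg ends) ≤ Finset.univ.sup (mdeg ends) + k)
    (S : Set E) (pre : E → ℕ)
    (hpal : ∀ e ∈ S, pre e ∈ Finset.Icc 1 (Finset.univ.sup (mdeg ends) + k))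
    (hproper : ∀ e ∈ S, ∀ f ∈ S, MAdj ends e f → pre e ≠ pre f)
    (hpredeg : ∀ v : V, {e ∈ S | v ∈ ends e}.ncard ≤ k) :
    (∃ c : E → ℕ, MProper ends c ∧
        (∀ e, c e ∈ Finset.Icc 1 (Finset.univ.sup (mdeg ends) + k)) ∧
        ∀ e ∈ S, c e = pre e) ∨
    (k = 0 ∧ IsSimpleOddCycle ends) ∨
    IsExceptionalTriangle ends k := by
  classical
  by_cases hex : ∃ c : E → ℕ, MProper ends c ∧
        (∀ e, c e ∈ Finset.Icc 1 (Finset.univ.sup (mdeg ends) + k)) ∧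
        ∀ e ∈ S, c e = pre e
  · exact Or.inl hex
  right
  have hpre : ∀ e ∈ S, 1 ≤ pre e := fun e he => (Finset.mem_Icc.1 (hpal e he)).1
  have hN : ∀ e, lineDeg ends e ≤ Finset.univ.sup (mdeg ends) + k := fun e =>
    (Finset.le_sup (f := lineDeg ends) (Finset.mem_univ e)).trans hk
  have H := stuck_sys hpre hN
  -- an initial stuck state
  obtain ⟨c, e, hce⟩ : ∃ c e, Stuck ends S pre (Finset.univ.sup (mdeg ends) + k) c e := by
    have hne : ∃ c, PCol ends S pre (Finset.univ.sup (mdeg ends) + k) c := by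
      refine ⟨fun e => if e ∈ S then pre e else 0, ?_, ?_, ?_⟩
      · intro e he; simp [he]
      · intro e
        by_cases he : e ∈ S
        · simpa [he] using (Finset.mem_Icc.1 (hpal e he)).2
        · simp [he]
      · intro e f hef heq
        by_cases he : e ∈ S
        · by_cases hf : f ∈ S
          · simp only [he, hf, if_true] at heq
            exact absurd heq (hproper e he f hf hef)
          · simpa [hf] using heq
        · simp [he]
    let Q : ℕ → Prop := fun m => ∃ c, PCol ends S pre (Finset.univ.sup (mdeg ends) + k) c ∧
      {e | c e = 0}.ncard = m
    have hQ : ∃ m, Q m := hne.imp' (fun c => {e | c e = 0}.ncard) fun c hc => ⟨c, hc, rfl⟩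
    obtain ⟨c, hc, hm⟩ := Nat.find_spec hQ
    have hmin : ∀ c', PCol ends S pre (Finset.univ.sup (mdeg ends) + k) c' →
        {e | c e = 0}.ncard ≤ {e | c' e = 0}.ncard := by
      intro c' hc'
      rw [hm]
      exact Nat.find_min' hQ ⟨c', hc', rfl⟩
    by_contra hcon
    push Not at hcon
    have hz : ∀ e, c e ≠ 0 := fun e he => hcon c e ⟨hc, hmin, he⟩
    apply hex
    refine ⟨c, ?_, ?_, hc.1⟩
    · intro e f hef heq
      exact hz e (hc.2.2 e f hef heq)
    · intro e
      exact Finset.mem_Icc.2 ⟨Nat.one_le_iff_ne_zero.2 (hz e), hc.2.1 e⟩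
  obtain ⟨n, hn, f, ee, C, hst⟩ := H.exists_cyc hloop hpredeg hce
  have hS : ∀ i, ee i ∉ S := fun i => by
    obtain ⟨c, hc⟩ := hst i
    exact H.free hc
  rcases Nat.lt_or_ge 3 n with h4 | h3
  · -- long cycle
    left
    obtain ⟨c, hc⟩ := hst 0
    have hall : ∀ {g : E} {j : ZMod n}, f j ∈ ends g → ∃ i, g = ee i := fun hj =>
      H.cyc_all hloop hpredeg C h4 hS hc hj
    have hsurj : Function.Surjective f := by
      intro b
      refine conn_all hconn (Set.range f) (f 0) ⟨0, rfl⟩ ?_ b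
      rintro _ ⟨j, rfl⟩ e y he
      obtain ⟨i, rfl⟩ := hall (g := e) (j := j) (by simp [he])
      have : y ∈ ends (ee i) := by simp [he]
      rw [C.he, Sym2.mem_iff] at this
      rcases this with rfl | rfl
      · exact ⟨_, rfl⟩
      · exact ⟨_, rfl⟩
    have hesurj : Function.Surjective ee := by
      intro g
      obtain ⟨v, hv⟩ : ∃ v, v ∈ ends g := ⟨_, (ends g).out_fst_mem⟩
      obtain ⟨j, rfl⟩ := hsurj v
      obtain ⟨i, rfl⟩ := hall hv
      exact ⟨i, rfl⟩
    refine ⟨?_, n, H.cyc_odd C h4 hS hc, hn,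
      (Equiv.ofBijective f ⟨C.inj, hsurj⟩).symm,
      (Equiv.ofBijective ee ⟨C.einj hn, hesurj⟩).symm, fun i => C.he i⟩
    have a1 := H.mdeg_ge hloop hc (C.he 0)
    have a2 : {g | f 0 ∈ ends g} ⊆ {ee 0, ee (0 - 1)} := by
      intro g hg
      obtain ⟨l, rfl⟩ := hall hg
      rcases C.mem hg with rfl | rfl <;> simp
    have a3 := Set.ncard_le_ncard a2 (Set.toFinite _)
    have a4 := Set.ncard_insert_le (ee 0) {ee (0 - 1)}
    rw [Set.ncard_singleton] at a4
    have a5 := mult_pos' (C.he 0)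
    rw [mdeg] at a1
    omega
  · -- triangle
    right
    obtain rfl : n = 3 := by omega
    obtain ⟨c0, hc0⟩ := hst 0
    obtain ⟨c1, hc1⟩ := hst 1
    obtain ⟨c2, hc2⟩ := hst 2
    have e0 : ends (ee 0) = s(f 0, f 1) := by simpa using C.he 0
    have e1 : ends (ee 1) = s(f 1, f 2) := C.he 1
    have e2 : ends (ee 2) = s(f 2, f 0) := C.he 2
    have n01 := ends_ne hloop e0
    have n12 := ends_ne hloop e1
    have n20 := ends_ne hloop e2
    have t0 : ∀ e t, ends e = s(f 0, t) → t = f 1 ∨ t = f 2 := by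
      intro e t he
      by_contra hcon
      push Not at hcon
      exact H.tri hc0 e0 e1 e2 (hS _) (hS _) n01 n12 n20 he hcon.1 hcon.2
    have t1 : ∀ e t, ends e = s(f 1, t) → t = f 2 ∨ t = f 0 := by
      intro e t he
      by_contra hcon
      push Not at hcon
      exact H.tri hc1 e1 e2 e0 (hS _) (hS _) n12 n20 n01 he hcon.1 hcon.2
    have t2 : ∀ e t, ends e = s(f 2, t) → t = f 0 ∨ t = f 1 := by
      intro e t he
      by_contra hcon
      push Not at hcon
      exact H.tri hc2 e2 e0 e1 (hS _) (hS _) n20 n01 n12 he hcon.1 hcon.2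
    have hV : ∀ x, x = f 0 ∨ x = f 1 ∨ x = f 2 := by
      intro b
      refine conn_all hconn {x | x = f 0 ∨ x = f 1 ∨ x = f 2} (f 0) (Or.inl rfl) ?_ b
      rintro x (rfl | rfl | rfl) e y he
      · rcases t0 e y he with h | h <;> simp [h]
      · rcases t1 e y he with h | h <;> simp [h]
      · rcases t2 e y he with h | h <;> simp [h]
    have hdeg : ∀ x y z : V, y ≠ z → (∀ e t, ends e = s(x, t) → t = y ∨ t = z) →
        mdeg ends x = mult ends x y + mult ends x z := by
      intro x y z hyz h
      rw [mdeg, mult, mult, ← Set.ncard_union_eq _ (Set.toFinite _) (Set.toFinite _)]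
      · congr 1
        ext e
        simp only [Set.mem_union, Set.mem_ofPred_eq]
        constructor
        · intro he
          obtain ⟨t, ht⟩ := Sym2.mem_iff_exists.1 he
          rcases h e t ht with rfl | rfl
          · exact Or.inl ht
          · exact Or.inr ht
        · rintro (h | h) <;> simp [h]
      · rw [Set.disjoint_left]
        intro e h1 h2
        simp only [Set.mem_ofPred_eq] at h1 h2
        rw [h1] at h2
        exact hyz (Sym2.congr_right.1 h2)
    have d0 := hdeg _ _ _ n12 t0
    have d1 := hdeg _ _ _ n20 t1
    have d2 := hdeg _ _ _ n01 t2
    have m0 := mult_pos' e0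
    have m1 := mult_pos' e1
    have m2 := mult_pos' e2
    have l0 := mdeg_add e0 n01
    have l0' := H.deg hc0
    rw [mult_comm' (f 1) (f 0)] at d1
    rw [mult_comm' (f 2) (f 0)] at d2 m2
    rw [mult_comm' (f 2) (f 1)] at d2
    have s0 : mdeg ends (f 0) ≤ Finset.univ.sup (mdeg ends) := Finset.le_sup (Finset.mem_univ _)
    have s1 : mdeg ends (f 1) ≤ Finset.univ.sup (mdeg ends) := Finset.le_sup (Finset.mem_univ _)
    have s2 : mdeg ends (f 2) ≤ Finset.univ.sup (mdeg ends) := Finset.le_sup (Finset.mem_univ _)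
    obtain ⟨x, -, hx⟩ := Finset.exists_mem_eq_sup (Finset.univ : Finset V)
      Finset.univ_nonempty (mdeg ends)
    refine ⟨f 0, f 1, f 2, n01, n20.symm, n12, hV, m0, m2, m1, ?_⟩
    rcases hV x with rfl | rfl | rfl <;> omega
end

section
/- Let H be a connected graph in which every vertex is assigned a list ℓ(v) with |ℓ(v)| ≥ deg(v). Then H has a proper vertex-colouring choosing each vertex's colour from its list, unless H is a Gallai tree and |ℓ(v)| = deg(v) for every vertex v. -/
variable {V : Type*}

/-- `B` has no cut vertex: removing any vertex of `B` leaves the induced subgraph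
(pre)connected. -/
def NoCutVertex (G : SimpleGraph V) (B : Set V) : Prop :=
  ∀ v ∈ B, (G.induce (B \ {v})).Preconnected

/-- `B` is a block of `G`: a maximal connected set of vertices without a cut vertex. -/
def IsBlock (G : SimpleGraph V) (B : Set V) : Prop :=
  B.Nonempty ∧ (G.induce B).Connected ∧ NoCutVertex G B ∧
    ∀ B' : Set V, B ⊆ B' → (G.induce B').Connected → NoCutVertex G B' → B' = B

/-- The set `B` induces a complete graph. -/
def IsCliqueSet (G : SimpleGraph V) (B : Set V) : Prop :=
  ∀ u ∈ B, ∀ v ∈ B, u ≠ v → G.Adj u v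

/-- The set `B` induces an odd cycle: connected, `2`-regular, of odd order `≥ 3`. -/
def IsOddCycleSet (G : SimpleGraph V) (B : Set V) : Prop :=
  Odd B.ncard ∧ 3 ≤ B.ncard ∧ (G.induce B).Connected ∧
    ∀ v ∈ B, {u | u ∈ B ∧ G.Adj v u}.ncard = 2


/-- `G` is a Gallai tree: connected, and every block is a clique or an odd cycle. -/
def GallaiTree (G : SimpleGraph V) : Prop :=
  G.Connected ∧ ∀ B : Set V, IsBlock G B → IsCliqueSet G B ∨ IsOddCycleSet G B


namespace DegCh

open Classical in
noncomputable def dg (G : SimpleGraph V) (S : Finset V) (v : V) : ℕ := (S.filter (fun u => G.Adj v u)).card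

def PC (G : SimpleGraph V) (S : Finset V) : Prop :=
  ∀ A ⊆ S, A.Nonempty → A ≠ S → ∃ a ∈ A, ∃ b ∈ S, b ∉ A ∧ G.Adj a b

open Classical in
def NC (G : SimpleGraph V) (B : Finset V) : Prop := ∀ v ∈ B, PC G (B.erase v)

def Blk (G : SimpleGraph V) (S B : Finset V) : Prop :=
  B ⊆ S ∧ B.Nonempty ∧ PC G B ∧ NC G B ∧ ∀ B' ⊆ S, B ⊆ B' → PC G B' → NC G B' → B' = B

def Cl (G : SimpleGraph V) (B : Finset V) : Prop := ∀ u ∈ B, dg G B u + 1 = B.card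

def OC (G : SimpleGraph V) (B : Finset V) : Prop :=
  Odd B.card ∧ 3 ≤ B.card ∧ PC G B ∧ ∀ v ∈ B, dg G B v = 2

def Bad (G : SimpleGraph V) (S : Finset V) (l : V → Finset ℕ) : Prop :=
  (∀ v ∈ S, dg G S v ≤ (l v).card) ∧
    ¬ ∃ c : V → ℕ, (∀ v ∈ S, c v ∈ l v) ∧ ∀ u ∈ S, ∀ v ∈ S, G.Adj u v → c u ≠ c v

open Classical in
lemma pc_insert {G : SimpleGraph V} {T : Finset V} (h : PC G T) {a b : V} (ha : a ∈ T)
    (hab : G.Adj a b) : PC G (insert b T) := by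
  intro A hA hne hneq
  by_cases hb : b ∈ A
  · by_cases haA : a ∈ A
    · obtain ⟨x, hx, y, hy, hyA, hxy⟩ := h (A ∩ T) Finset.inter_subset_right ⟨a, by simp [*]⟩
        (by
          intro h1
          apply hneq
          apply Finset.Subset.antisymm hA
          intro z hz
          rcases Finset.mem_insert.1 hz with rfl | hz
          · exact hb
          · rw [← h1] at hz
            exact (Finset.mem_inter.1 hz).1)
      exact ⟨x, (Finset.mem_inter.1 hx).1, y, by simp [hy], fun h2 => hyA (Finset.mem_inter.2 ⟨h2, hy⟩), hxy⟩
    · exact ⟨b, hb, a, by simp [ha], haA, hab.symm⟩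
  · have hAT : A ⊆ T := fun z hz => by
      rcases Finset.mem_insert.1 (hA hz) with rfl | h3
      · exact absurd hz hb
      · exact h3
    by_cases hAe : A = T
    · exact ⟨a, hAe ▸ ha, b, by simp, hb, hab⟩
    · obtain ⟨x, hx, y, hy, hyA, hxy⟩ := h A hAT hne hAe
      exact ⟨x, hx, y, by simp [hy], hyA, hxy⟩

open Classical in
lemma grow {G : SimpleGraph V} {S : Finset V} (hS : PC G S) : ∀ (n : ℕ) (T : Finset V),
    S.card - T.card = n → T ⊆ S → T.Nonempty → T ≠ S → PC G T →
    ∃ v ∈ S, v ∉ T ∧ PC G (S.erase v) := by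
  intro n
  induction n using Nat.strong_induction_on with
  | _ n ih =>
  intro T hn hTS hne hneq hT
  obtain ⟨a, ha, b, hb, hbT, hab⟩ := hS T hTS hne hneq
  have h1 := pc_insert hT ha hab
  by_cases h2 : insert b T = S
  · exact ⟨b, hb, hbT, by rw [← h2, Finset.erase_insert hbT]; exact hT⟩
  · have h3 : insert b T ⊆ S := Finset.insert_subset hb hTS
    have h4 := Finset.card_le_card h3
    rw [Finset.card_insert_of_notMem hbT] at h4
    obtain ⟨v, hv, hvT, hp⟩ := ih (S.card - (insert b T).card)
      (by rw [Finset.card_insert_of_notMem hbT]; omega) (insert b T) rfl h3 (by simp) h2 h1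
    exact ⟨v, hv, fun h => hvT (by simp [h]), hp⟩

open Classical in
lemma dg_erase {G : SimpleGraph V} {S : Finset V} {v : V} (hv : v ∈ S) (u : V) :
    dg G (S.erase v) u + (if G.Adj u v then 1 else 0) = dg G S u := by
  unfold dg
  rw [Finset.filter_erase]
  split_ifs with h
  · exact Finset.card_erase_add_one (by simp [*])
  · rw [Finset.erase_eq_of_notMem (by simp [*])]; rfl

open Classical in
lemma bad_delete {G : SimpleGraph V} {S : Finset V} {l : V → Finset ℕ} (h : Bad G S l) {v : V}
    (hv : v ∈ S) {α : ℕ} (hα : α ∈ l v) :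
    Bad G (S.erase v) (fun u => if G.Adj u v then (l u).erase α else l u) := by
  refine ⟨?_, ?_⟩
  · intro u hu
    have h1 := dg_erase (G := G) hv u
    have h2 := h.1 u (Finset.mem_of_mem_erase hu)
    by_cases h3 : G.Adj u v
    · simp only [h3, if_true] at h1 ⊢
      have := Finset.pred_card_le_card_erase (s := l u) (a := α)
      omega
    · simp only [h3, if_false] at h1 ⊢
      omega
  · rintro ⟨c, hc, hc2⟩
    apply h.2
    refine ⟨fun u => if u = v then α else c u, ?_, ?_⟩
    · intro u hu
      by_cases huv : u = v
      · simp [huv, hα]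
      · have := hc u (by simp [*])
        simp only [huv, if_false]
        dsimp only at this
        split_ifs at this
        · exact Finset.mem_of_mem_erase this
        · exact this
    · intro x hx y hy hxy
      by_cases hxv : x = v
      · have hyv : y ≠ v := by rintro rfl; exact hxy.ne hxv
        have h5 := hc y (by simp [*])
        have h6 : G.Adj y v := hxv ▸ hxy.symm
        simp only [h6, if_true] at h5
        simp only [hxv, hyv, if_true, if_false]
        exact (Finset.ne_of_mem_erase h5).symm
      · by_cases hyv : y = v
        · have h5 := hc x (by simp [*])
          have h6 : G.Adj x v := hyv ▸ hxy
          simp only [h6, if_true] at h5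
          simp only [hxv, hyv, if_true, if_false]
          exact (Finset.ne_of_mem_erase h5)
        · simp only [hxv, hyv, if_false]
          exact hc2 x (by simp [*]) y (by simp [*]) hxy

lemma dg_pos {G : SimpleGraph V} {S : Finset V} (hS : PC G S) {v w : V} (hv : v ∈ S) (hw : w ∈ S)
    (hne : v ≠ w) : 0 < dg G S v := by
  obtain ⟨a, ha, b, hb, -, hab⟩ := hS {v} (by simpa using hv) (by simp)
    (by rintro rfl; simp at hw; exact hne hw.symm)
  unfold dg
  rw [Finset.card_pos]
  have : a = v := by simpa using ha
  subst this
  exact ⟨b, by simp [*]⟩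

lemma pc_singleton {G : SimpleGraph V} (w : V) : PC G {w} := by
  intro A hA hne hneq
  exact absurd ((Finset.subset_singleton_iff.1 hA).resolve_left hne.ne_empty) hneq

open Classical in
/-- leaf block -/
lemma leaf {G : SimpleGraph V} {T : Finset V} (hT : PC G T) : ∀ (n : ℕ) (x : V) (A : Finset V),
    A.card = n → x ∈ T → A ⊆ T.erase x → A.Nonempty →
    (∀ a ∈ A, ∀ b ∈ T, G.Adj a b → b ∈ A ∨ b = x) →
    ∃ y ∈ T, ∃ A' ⊆ A, A'.Nonempty ∧ y ∉ A' ∧ Blk G T (insert y A') ∧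
      (∀ a ∈ A', ∀ b ∈ T, G.Adj a b → b ∈ A' ∨ b = y) := by
  intro n
  induction n using Nat.strong_induction_on with
  | _ n ih =>
  intro x A hn hx hA hne hcl
  by_cases hsm : ∃ (y : V) (Q : Finset V), y ∈ T ∧ Q ⊂ A ∧ y ∉ Q ∧ Q.Nonempty ∧
      (∀ a ∈ Q, ∀ b ∈ T, G.Adj a b → b ∈ Q ∨ b = y)
  · obtain ⟨y, Q, hy, hQA, hyQ, hQ, hQc⟩ := hsm
    have hQT : Q ⊆ T.erase y := by
      intro z hz
      have := hA (hQA.1 hz)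
      simp only [Finset.mem_erase] at this ⊢
      exact ⟨fun h => hyQ (h ▸ hz), this.2⟩
    obtain ⟨w, hw, A', hA', r⟩ := ih Q.card (hn ▸ Finset.card_lt_card hQA) y Q rfl hy hQT hQ hQc
    exact ⟨w, hw, A', hA'.trans hQA.1, r⟩
  · push Not at hsm
    have hxA : x ∉ A := fun h => by simpa using hA h
    have hAT : A ⊆ T := hA.trans (Finset.erase_subset _ _)
    have hBT : insert x A ⊆ T := Finset.insert_subset hx hAT
    refine ⟨x, hx, A, Finset.Subset.refl _, hne, hxA, ⟨hBT, by simp, ?_, ?_, ?_⟩, hcl⟩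
    · -- connected
      have key : ∀ Q ⊆ insert x A, x ∉ Q → Q.Nonempty →
          ∃ a ∈ Q, ∃ b ∈ insert x A, b ∉ Q ∧ G.Adj a b := by
        intro Q hQ hxQ hQne
        obtain ⟨a, ha, b, hb, hbQ, hab⟩ := hT Q (hQ.trans hBT) hQne
          (fun h => hxQ (h ▸ hx))
        refine ⟨a, ha, b, ?_, hbQ, hab⟩
        have haA : a ∈ A := by
          rcases Finset.mem_insert.1 (hQ ha) with rfl | h
          · exact absurd ha hxQ
          · exact h
        rcases hcl a haA b hb hab with h | h <;> simp [h]
      intro Q hQ hQne hQneq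
      by_cases hxQ : x ∈ Q
      · obtain ⟨a, ha, b, hb, hbQ, hab⟩ := key (insert x A \ Q) Finset.sdiff_subset (by simp [hxQ])
          (by
            rw [Finset.sdiff_nonempty]
            exact fun h => hQneq (Finset.Subset.antisymm hQ h))
        rw [Finset.mem_sdiff] at ha
        refine ⟨b, ?_, a, ha.1, ha.2, hab.symm⟩
        by_contra h
        exact hbQ (Finset.mem_sdiff.2 ⟨hb, h⟩)
      · exact key Q hQ hxQ hQne
    · -- no cut vertex
      intro y hy
      have key : ∀ Q ⊆ (insert x A).erase y, x ∉ Q → Q.Nonempty → Q ≠ (insert x A).erase y →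
          ∃ a ∈ Q, ∃ b ∈ (insert x A).erase y, b ∉ Q ∧ G.Adj a b := by
        intro Q hQ hxQ hQne hQneq
        by_contra hcon
        push Not at hcon
        have hQA : Q ⊆ A := by
          intro z hz
          have := hQ hz
          simp only [Finset.mem_erase, Finset.mem_insert] at this
          rcases this.2 with rfl | h
          · exact absurd hz hxQ
          · exact h
        have hQA' : Q ⊂ A := by
          refine ⟨hQA, fun h => ?_⟩
          have hQe : Q = A := Finset.Subset.antisymm hQA h
          subst hQe
          rcases Finset.mem_insert.1 hy with rfl | hyA
          · exact hQneq (by rw [Finset.erase_insert hxA])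
          · simpa using hQ hyA
        obtain ⟨a, ha, b, hb, hab, hbQ, hby⟩ := hsm y Q (hBT hy) hQA'
          (fun h => by simpa using hQ h) hQne
        have hb' : b ∈ insert x A := by
          rcases hcl a (hQA ha) b hb hab with h | h <;> simp [h]
        exact hcon a ha b (by simp only [Finset.mem_erase]; exact ⟨hby, hb'⟩) hbQ hab
      intro Q hQ hQne hQneq
      by_cases hxQ : x ∈ Q
      · obtain ⟨a, ha, b, hb, hbQ, hab⟩ := key ((insert x A).erase y \ Q) Finset.sdiff_subset
          (by simp [hxQ])
          (by
            rw [Finset.sdiff_nonempty]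
            exact fun h => hQneq (Finset.Subset.antisymm hQ h))
          (by
            intro h
            have : x ∈ (insert x A).erase y \ Q := by rw [h]; exact hQ hxQ
            simp [hxQ] at this)
        rw [Finset.mem_sdiff] at ha
        refine ⟨b, ?_, a, ha.1, ha.2, hab.symm⟩
        by_contra h
        exact hbQ (Finset.mem_sdiff.2 ⟨hb, h⟩)
      · exact key Q hQ hxQ hQne hQneq
    · intro B' hB' hsub hpc hnc
      apply Finset.Subset.antisymm _ hsub
      intro z hz
      by_contra hzB
      have hzx : z ≠ x := by rintro rfl; simp at hzB
      have hzA : z ∉ A := fun h => hzB (by simp [h])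
      have hxB' : x ∈ B' := hsub (by simp)
      obtain ⟨a, ha, b, hb, hbQ, hab⟩ := hnc x hxB' A (by
        intro w hw
        rw [Finset.mem_erase]
        exact ⟨fun h => hxA (h ▸ hw), hsub (by simp [hw])⟩) hne
        (by intro h; rw [h] at hzA; exact hzA (by simp [hzx, hz]))
      rw [Finset.mem_erase] at hb
      rcases hcl a ha b (hB' hb.2) hab with h | h
      · exact hbQ h
      · exact hb.1 h

/-- A clique or odd cycle is regular of degree at most `card - 1`. -/
lemma reg_of {G : SimpleGraph V} {B : Finset V} (hne : B.Nonempty)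
    (h : Cl G B ∨ OC G B) : ∃ r, r + 1 ≤ B.card ∧ ∀ u ∈ B, dg G B u = r := by
  have hc := hne.card_pos
  rcases h with h | h
  · exact ⟨B.card - 1, by omega, fun u hu => by have := h u hu; omega⟩
  · exact ⟨2, h.2.1, h.2.2.2⟩


open Classical in
lemma reg_attach {G : SimpleGraph V} {S A B : Finset V} {v : V} {d r : ℕ} (hv : v ∈ S)
    (hreg : ∀ u ∈ S, dg G S u = d) (hAB : A ⊆ B) (hB : B ⊆ S.erase v)
    (hcl : ∀ a ∈ A, ∀ b ∈ S.erase v, G.Adj a b → b ∈ B)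
    (hr : ∀ u ∈ B, dg G B u = r) (hex : ∃ a ∈ A, G.Adj a v) :
    r + 1 = d ∧ ∀ a ∈ A, G.Adj a v := by
  have key : ∀ a ∈ A, r + (if G.Adj a v then 1 else 0) = d := by
    intro a ha
    rw [← hreg a (Finset.mem_of_mem_erase (hB (hAB ha))), ← dg_erase hv a, ← hr a (hAB ha)]
    congr 1
    unfold dg
    congr 1
    ext b
    simp only [Finset.mem_filter]
    exact ⟨fun h => ⟨hB h.1, h.2⟩, fun h => ⟨hcl a ha b h.1 h.2, h.2⟩⟩
  obtain ⟨a, ha, hav⟩ := hex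
  have h1 := key a ha
  simp only [hav, if_true] at h1
  refine ⟨h1, fun b hb => ?_⟩
  by_contra hbv
  have h2 := key b hb
  simp only [hbv, if_false] at h2
  omega

open Classical in
lemma odd_of {G : SimpleGraph V} {S : Finset V} {v : V} (hv : v ∈ S)
    (hreg : ∀ u ∈ S, dg G S u = 2) {L : Finset ℕ} (hL : L.card = 2)
    (hbad : ¬ ∃ c : V → ℕ, (∀ v ∈ S, c v ∈ L) ∧ ∀ u ∈ S, ∀ v ∈ S, G.Adj u v → c u ≠ c v)
    {c : V → ℕ} (hc : ∀ u ∈ S.erase v, c u ∈ L)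
    (hc2 : ∀ u ∈ S.erase v, ∀ w ∈ S.erase v, G.Adj u w → c u ≠ c w) : Odd S.card := by
  obtain ⟨p, q, hpq, rfl⟩ := Finset.card_eq_two.1 hL
  set T := S.erase v with hT
  have hex : ∀ p' ∈ ({p, q} : Finset ℕ), 1 ≤ ((T.filter (fun u => c u = p')).filter (fun u => G.Adj v u)).card := by
    intro p' hp'
    by_contra hcon
    have h0 : ((T.filter (fun u => c u = p')).filter (fun u => G.Adj v u)) = ∅ := by
      rw [← Finset.card_eq_zero]; omega
    have h1 : ∀ u ∈ T, G.Adj v u → c u ≠ p' := by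
      intro u hu hvu hcu
      have : u ∈ ((T.filter (fun u => c u = p')).filter (fun u => G.Adj v u)) := by
        simp only [Finset.mem_filter]; exact ⟨⟨hu, hcu⟩, hvu⟩
      rw [h0] at this
      simp at this
    apply hbad
    refine ⟨fun u => if u = v then p' else c u, ?_, ?_⟩
    · intro u hu
      by_cases huv : u = v
      · simp only [huv, if_true]; exact hp'
      · simp only [huv, if_false]; exact hc u (Finset.mem_erase.2 ⟨huv, hu⟩)
    · intro x hx y hy hxy
      by_cases hxv : x = v
      · have hyv : y ≠ v := by rintro rfl; exact hxy.ne hxv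
        simp only [hxv, hyv, if_true, if_false]
        exact (h1 y (Finset.mem_erase.2 ⟨hyv, hy⟩) (hxv ▸ hxy)).symm
      · by_cases hyv : y = v
        · simp only [hxv, hyv, if_true, if_false]
          exact (h1 x (Finset.mem_erase.2 ⟨hxv, hx⟩) (hyv ▸ hxy.symm))
        · simp only [hxv, hyv, if_false]
          exact hc2 x (Finset.mem_erase.2 ⟨hxv, hx⟩) y (Finset.mem_erase.2 ⟨hyv, hy⟩) hxy
  have hP1 := hex p (by simp)
  have hQ1 := hex q (by simp)
  set P := T.filter (fun u => c u = p) with hP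
  set Q := T.filter (fun u => c u = q) with hQ
  have hdisj : Disjoint P Q := by
    rw [Finset.disjoint_left]
    intro u h1 h2
    simp only [hP, hQ, Finset.mem_filter] at h1 h2
    exact hpq (h1.2.symm.trans h2.2)
  have hun : P ∪ Q = T := by
    ext u
    simp only [hP, hQ, Finset.mem_union, Finset.mem_filter]
    constructor
    · rintro (h | h) <;> exact h.1
    · intro h
      have := hc u h
      simp only [Finset.mem_insert, Finset.mem_singleton] at this
      rcases this with h' | h' <;> simp [h, h']
  have hTS : T.card + 1 = S.card := Finset.card_erase_add_one hv
  have hcard : P.card + Q.card = T.card := by rw [← Finset.card_union_of_disjoint hdisj, hun]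
  have hvdeg : (P.filter (fun u => G.Adj v u)).card + (Q.filter (fun u => G.Adj v u)).card = 2 := by
    rw [← Finset.card_union_of_disjoint (Finset.disjoint_filter_filter hdisj),
      ← Finset.filter_union, hun, ← hreg v hv, ← dg_erase hv v]
    simp [dg, hT]
  have hcount : ∀ P' Q' : Finset V, P' ∪ Q' = T → (∀ a ∈ P', ∀ b ∈ P', ¬ G.Adj a b) →
      ∑ a ∈ P', (Q'.filter (fun b => G.Adj a b)).card + (P'.filter (fun u => G.Adj v u)).card
        = 2 * P'.card := by
    intro P' Q' hu hind
    rw [Finset.card_filter, ← Finset.sum_add_distrib, mul_comm, ← smul_eq_mul, ← Finset.sum_const]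
    apply Finset.sum_congr rfl
    intro a ha
    have haT : a ∈ T := hu ▸ Finset.mem_union_left _ ha
    rw [← hreg a (Finset.mem_of_mem_erase haT), ← dg_erase hv a]
    simp only [G.adj_comm v a]
    congr 1
    unfold dg
    congr 1
    ext b
    rw [← hT, ← hu]
    simp only [Finset.mem_filter, Finset.mem_union]
    exact ⟨fun h => ⟨Or.inr h.1, h.2⟩, fun h => ⟨h.1.resolve_left (fun hb => hind a ha b hb h.2), h.2⟩⟩
  have e1 := hcount P Q hun (by
    intro a ha b hb hab
    simp only [hP, Finset.mem_filter] at ha hb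
    exact hc2 a ha.1 b hb.1 hab (ha.2.trans hb.2.symm))
  have e2 := hcount Q P (by rw [Finset.union_comm, hun]) (by
    intro a ha b hb hab
    simp only [hQ, Finset.mem_filter] at ha hb
    exact hc2 a ha.1 b hb.1 hab (ha.2.trans hb.2.symm))
  have e3 : ∑ a ∈ P, (Q.filter (fun b => G.Adj a b)).card
      = ∑ b ∈ Q, (P.filter (fun a => G.Adj b a)).card := by
    have := Finset.sum_card_bipartiteAbove_eq_sum_card_bipartiteBelow (s := P) (t := Q) (fun a b => G.Adj a b)
    simp only [Finset.bipartiteAbove, Finset.bipartiteBelow] at this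
    rw [this]
    simp only [G.adj_comm]
  exact ⟨P.card, by omega⟩

open Classical in
lemma dg_mono {G : SimpleGraph V} {S T : Finset V} (h : T ⊆ S) (u : V) : dg G T u ≤ dg G S u :=
  Finset.card_le_card (Finset.filter_subset_filter _ h)

open Classical in
lemma two_conn {G : SimpleGraph V} {S : Finset V} (hS : PC G S) (hnc : NC G S) {v w : V}
    (hv : v ∈ S) (hw : w ∈ S) (hwv : w ≠ v) {L : Finset ℕ} {d : ℕ} (hL : L.card = d)
    (hreg : ∀ u ∈ S, dg G S u = d) (hbad : Bad G S (fun _ => L))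
    (ih : ∀ l, Bad G (S.erase v) l → (∀ u ∈ S.erase v, (l u).card = dg G (S.erase v) u) ∧
      ∀ B, Blk G (S.erase v) B → Cl G B ∨ OC G B) : Cl G S ∨ OC G S := by
  have hTpc := hnc v hv
  have hTne : (S.erase v).Nonempty := ⟨w, Finset.mem_erase.2 ⟨hwv, hw⟩⟩
  have hcardS : (S.erase v).card + 1 = S.card := Finset.card_erase_add_one hv
  have hd : 0 < d := by rw [← hreg v hv]; exact dg_pos hS hv hw hwv.symm
  obtain ⟨α, hα⟩ : L.Nonempty := by rw [← Finset.card_pos]; omega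
  have hblk := (ih _ (bad_delete hbad hv hα)).2
  have hvd : ((S.erase v).filter (fun u => G.Adj u v)).card = d := by
    rw [← hreg v hv, ← dg_erase hv v]
    simp [dg, G.adj_comm v]
  by_cases hTnc : NC G (S.erase v)
  · left
    have hT := hblk (S.erase v) ⟨Finset.Subset.refl _, hTne, hTpc, hTnc,
      fun B' h1 h2 _ _ => Finset.Subset.antisymm h1 h2⟩
    obtain ⟨r, hr1, hr2⟩ := reg_of hTne hT
    have hex : ∃ a ∈ S.erase v, G.Adj a v := by
      have : 0 < ((S.erase v).filter (fun u => G.Adj u v)).card := by omega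
      obtain ⟨a, ha⟩ := Finset.card_pos.1 this
      exact ⟨a, (Finset.mem_filter.1 ha).1, (Finset.mem_filter.1 ha).2⟩
    obtain ⟨h1, h2⟩ := reg_attach hv hreg (Finset.Subset.refl _) (Finset.Subset.refl _)
      (fun _ _ b hb _ => hb) hr2 hex
    rw [Finset.filter_true_of_mem h2] at hvd
    intro u hu
    rw [hreg u hu]
    omega
  · right
    simp only [NC] at hTnc
    push Not at hTnc
    obtain ⟨x, hx, hxpc⟩ := hTnc
    simp only [PC] at hxpc
    push Not at hxpc
    obtain ⟨A, hA, hAne, hAneq, hAcl⟩ := hxpc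
    have main : ∀ A ⊆ (S.erase v).erase x, A.Nonempty →
        (∀ a ∈ A, ∀ b ∈ (S.erase v).erase x, b ∉ A → ¬ G.Adj a b) →
        ∃ A' ⊆ A, 1 ≤ A'.card ∧ d ≤ A'.card + 1 ∧ 2 ≤ d ∧ ∀ a ∈ A', G.Adj a v := by
      intro A hA hAne hAcl
      obtain ⟨y, hy, A', hA', hne', hyA', hB, hcl'⟩ := leaf hTpc A.card x A rfl hx hA hAne (by
        intro a ha b hb hab
        by_contra hcon
        push Not at hcon
        exact hAcl a ha b (Finset.mem_erase.2 ⟨hcon.2, hb⟩) hcon.1 hab)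
      obtain ⟨r, hr1, hr2⟩ := reg_of hB.2.1 (hblk _ hB)
      have hyS : y ∈ S := Finset.mem_of_mem_erase hy
      have hyv : y ≠ v := Finset.ne_of_mem_erase hy
      have hA'T : A' ⊆ S.erase v := (Finset.subset_insert _ _).trans hB.1
      have hex : ∃ a ∈ A', G.Adj a v := by
        obtain ⟨a, ha, b, hb, hbA, hab⟩ := hnc y hyS A' (by
          intro z hz
          exact Finset.mem_erase.2 ⟨fun h => hyA' (h ▸ hz), Finset.mem_of_mem_erase (hA'T hz)⟩) hne' (by
          intro h
          have : v ∈ A' := by rw [h]; exact Finset.mem_erase.2 ⟨hyv.symm, hv⟩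
          exact Finset.ne_of_mem_erase (hA'T this) rfl)
        rw [Finset.mem_erase] at hb
        by_cases hbv : b = v
        · exact ⟨a, ha, hbv ▸ hab⟩
        · rcases hcl' a ha b (Finset.mem_erase.2 ⟨hbv, hb.2⟩) hab with h | h
          · exact absurd h hbA
          · exact absurd h hb.1
      obtain ⟨h1, h2⟩ := reg_attach hv hreg (Finset.subset_insert y A') hB.1
        (fun a ha b hb hab => by
          rcases hcl' a ha b hb hab with h | h <;> simp [h]) hr2 hex
      rw [Finset.card_insert_of_notMem hyA'] at hr1
      obtain ⟨z, hz⟩ := hne'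
      have hrpos : 0 < r := by
        rw [← hr2 z (by simp [hz])]
        exact dg_pos hB.2.2.1 (by simp [hz]) (Finset.mem_insert_self y A') (fun h => hyA' (h ▸ hz))
      exact ⟨A', hA', Finset.card_pos.2 ⟨z, hz⟩, by omega, by omega, h2⟩
    obtain ⟨A1, hA1, _, hc1, hd2, hadj1⟩ := main A hA hAne hAcl
    obtain ⟨A2, hA2, _, hc2, _, hadj2⟩ := main ((S.erase v).erase x \ A) Finset.sdiff_subset
      (by
        rw [Finset.sdiff_nonempty]
        exact fun h => hAneq (Finset.Subset.antisymm hA h))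
      (by
        intro a ha b hb hbA hab
        rw [Finset.mem_sdiff] at ha
        have hbA' : b ∈ A := by
          by_contra h
          exact hbA (Finset.mem_sdiff.2 ⟨hb, h⟩)
        exact hAcl b hbA' a ha.1 ha.2 hab.symm)
    have hdisj : Disjoint A1 A2 := by
      rw [Finset.disjoint_left]
      intro z h1 h2
      exact (Finset.mem_sdiff.1 (hA2 h2)).2 (hA1 h1)
    have hsum : A1.card + A2.card ≤ d := by
      rw [← Finset.card_union_of_disjoint hdisj, ← hvd]
      apply Finset.card_le_card
      intro z hz
      rw [Finset.mem_filter]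
      rcases Finset.mem_union.1 hz with h | h
      · exact ⟨Finset.mem_of_mem_erase (hA (hA1 h)), hadj1 z h⟩
      · exact ⟨Finset.mem_of_mem_erase (Finset.mem_sdiff.1 (hA2 h)).1, hadj2 z h⟩
    have hd2' : d = 2 := by omega
    subst hd2'
    have hcol : ∃ c : V → ℕ, (∀ u ∈ S.erase v, c u ∈ L) ∧
        ∀ u ∈ S.erase v, ∀ w ∈ S.erase v, G.Adj u w → c u ≠ c w := by
      by_contra hcon
      have hb : Bad G (S.erase v) (fun _ => L) := ⟨fun u hu => by
        show _ ≤ L.card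
        rw [hL, ← hreg u (Finset.mem_of_mem_erase hu)]
        exact dg_mono (Finset.erase_subset _ _) u, hcon⟩
      have h1 := (ih _ hb).1
      have : 0 < ((S.erase v).filter (fun u => G.Adj u v)).card := by omega
      obtain ⟨a, ha⟩ := Finset.card_pos.1 this
      rw [Finset.mem_filter] at ha
      have h2 := h1 a ha.1
      have h3 := dg_erase (G := G) hv a
      rw [hreg a (Finset.mem_of_mem_erase ha.1), ← h2] at h3
      simp only [ha.2, if_true] at h3
      omega
    obtain ⟨c, hc, hc2⟩ := hcol
    have hvle : ((S.erase v).filter (fun u => G.Adj u v)).card ≤ (S.erase v).card :=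
      Finset.card_filter_le _ _
    exact ⟨odd_of hv hreg hL hbad.2 hc hc2, by omega, hS, hreg⟩

open Classical in
theorem main (G : SimpleGraph V) : ∀ (n : ℕ) (S : Finset V) (l : V → Finset ℕ), S.card = n →
    PC G S → Bad G S l → (∀ u ∈ S, (l u).card = dg G S u) ∧
      ∀ B, Blk G S B → Cl G B ∨ OC G B := by
  intro n
  induction n using Nat.strong_induction_on with
  | _ n ih =>
  intro S l hn hS hbad
  have ih' : ∀ v ∈ S, PC G (S.erase v) → ∀ l, Bad G (S.erase v) l →
      (∀ u ∈ S.erase v, (l u).card = dg G (S.erase v) u) ∧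
      ∀ B, Blk G (S.erase v) B → Cl G B ∨ OC G B := by
    intro v hv hpc l hb
    exact ih _ (hn ▸ Finset.card_erase_lt_of_mem hv) _ l rfl hpc hb
  have sizes : ∀ u ∈ S, (l u).card = dg G S u := by
    intro w hw
    by_contra hne
    have hlt : dg G S w < (l w).card := lt_of_le_of_ne (hbad.1 w hw) (Ne.symm hne)
    by_cases hSw : {w} = S
    · subst hSw
      apply hbad.2
      obtain ⟨α, hα⟩ : (l w).Nonempty := by rw [← Finset.card_pos]; omega
      refine ⟨fun _ => α, ?_, ?_⟩
      · intro v hv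
        rw [Finset.mem_singleton.1 hv]; exact hα
      · intro u hu v hv huv
        rw [Finset.mem_singleton] at hu hv
        exact absurd (hu.trans hv.symm) huv.ne
    · obtain ⟨v, hv, hvw, hpc⟩ := grow hS _ {w} rfl (by simpa using hw) (by simp) hSw (pc_singleton w)
      have hvw' : w ≠ v := fun h => hvw (by simp [h])
      have h1 := dg_pos hS hv hw hvw'.symm
      have h2 := hbad.1 v hv
      obtain ⟨α, hα⟩ : (l v).Nonempty := by rw [← Finset.card_pos]; omega
      have h3 := (ih' v hv hpc _ (bad_delete hbad hv hα)).1 w (Finset.mem_erase.2 ⟨hvw', hw⟩)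
      have h4 := dg_erase (G := G) hv w
      have h5 := Finset.pred_card_le_card_erase (s := l w) (a := α)
      split_ifs at h3 h4 <;> omega
  refine ⟨sizes, ?_⟩
  intro B hB
  obtain ⟨hBS, hBne, hBpc, hBnc, hBmax⟩ := hB
  by_cases hBeq : B = S
  · subst hBeq
    obtain ⟨v, hv⟩ := hBne
    by_cases hsing : ∃ w ∈ B, w ≠ v
    · obtain ⟨w, hw, hwv⟩ := hsing
      have hpos : ∀ u ∈ B, 0 < dg G B u := by
        intro u hu
        by_cases huv : u = v
        · subst huv; exact dg_pos hS hu hw hwv.symm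
        · exact dg_pos hS hu hv huv
      have hsub : ∀ a ∈ B, ∀ b ∈ B, G.Adj a b → l a ⊆ l b := by
        intro a ha b hb hab α hα
        have h1 := (ih' a ha (hBnc a ha) _ (bad_delete hbad ha hα)).1 b
          (Finset.mem_erase.2 ⟨hab.ne.symm, hb⟩)
        have h2 := dg_erase (G := G) ha b
        have h3 := sizes b hb
        simp only [hab.symm, if_true] at h1 h2
        by_contra hcon
        rw [Finset.erase_eq_of_notMem hcon] at h1
        omega
      have hall : B.filter (fun u => l u = l v) = B := by
        by_contra hne
        obtain ⟨a, ha, b, hb, hbA, hab⟩ := hS (B.filter (fun u => l u = l v))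
          (Finset.filter_subset _ _) ⟨v, by simp [hv]⟩ hne
        rw [Finset.mem_filter] at ha
        apply hbA
        rw [Finset.mem_filter]
        exact ⟨hb, (Finset.Subset.antisymm (hsub b hb a ha.1 hab.symm)
          (hsub a ha.1 b hb hab)).trans ha.2⟩
      have hl : ∀ u ∈ B, l u = l v := by
        intro u hu
        rw [← hall] at hu
        exact (Finset.mem_filter.1 hu).2
      refine two_conn hS hBnc hv hw hwv (L := l v) rfl (fun u hu => by rw [← sizes u hu, hl u hu])
        ⟨fun u hu => by rw [← sizes u hu, hl u hu], ?_⟩ (ih' v hv (hBnc v hv))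
      rintro ⟨c, hc, hc2⟩
      exact hbad.2 ⟨c, fun u hu => by rw [hl u hu]; exact hc u hu, hc2⟩
    · left
      push Not at hsing
      have : B = {v} := Finset.eq_singleton_iff_unique_mem.2 ⟨hv, hsing⟩
      subst this
      intro u hu
      rw [Finset.mem_singleton] at hu
      subst hu
      simp [dg]
  · obtain ⟨v, hv, hvB, hpc⟩ := grow hS _ B rfl hBS hBne hBeq hBpc
    obtain ⟨b, hb⟩ := hBne
    have h1 := dg_pos hS hv (hBS hb) (fun h => hvB (h ▸ hb))
    have h2 := hbad.1 v hv
    obtain ⟨α, hα⟩ : (l v).Nonempty := by rw [← Finset.card_pos]; omega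
    refine (ih' v hv hpc _ (bad_delete hbad hv hα)).2 B ⟨?_, ⟨b, hb⟩, hBpc, hBnc, ?_⟩
    · intro z hz
      exact Finset.mem_erase.2 ⟨fun h => hvB (h ▸ hz), hBS hz⟩
    · intro B' hB' 
      exact hBmax B' (hB'.trans (Finset.erase_subset _ _))

lemma pc_iff (G : SimpleGraph V) (S : Finset V) :
    (G.induce (S : Set V)).Preconnected ↔ PC G S := by
  constructor
  · intro h A hA hne hneq
    by_contra hcon
    push Not at hcon
    obtain ⟨a, ha⟩ := hne
    apply hneq
    apply Finset.Subset.antisymm hA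
    intro b hb
    obtain ⟨p⟩ := h ⟨a, hA ha⟩ ⟨b, hb⟩
    have key : ∀ (x y : (S : Set V)), (G.induce (S : Set V)).Walk x y → x.1 ∈ A → y.1 ∈ A := by
      intro x y p
      induction p with
      | nil => exact id
      | cons hxy _ ih =>
        intro hx
        apply ih
        by_contra hy
        exact hcon _ hx _ (Subtype.property _) hy hxy
    exact key _ _ p ha
  · classical
    intro h x y
    by_contra hxy
    obtain ⟨a, ha, b, hb, hbA, hab⟩ := h
      (S.filter (fun z => ∃ hz : z ∈ (S : Set V), (G.induce (S : Set V)).Reachable x ⟨z, hz⟩))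
      (Finset.filter_subset _ _)
      ⟨x.1, Finset.mem_filter.2 ⟨x.2, x.2, SimpleGraph.Reachable.refl _⟩⟩
      (by
        intro h
        have hy := h.ge y.2
        obtain ⟨_, _, h3⟩ := Finset.mem_filter.1 hy
        exact hxy h3)
    obtain ⟨haS, _, hr⟩ := Finset.mem_filter.1 ha
    apply hbA
    refine Finset.mem_filter.2 ⟨hb, hb, hr.trans (SimpleGraph.Adj.reachable ?_)⟩
    exact hab

lemma conn_iff (G : SimpleGraph V) (S : Finset V) (hS : S.Nonempty) :
    (G.induce (S : Set V)).Connected ↔ PC G S := by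
  rw [SimpleGraph.connected_iff, pc_iff]
  obtain ⟨x, hx⟩ := hS
  exact ⟨fun h => h.1, fun h => ⟨h, ⟨⟨x, hx⟩⟩⟩⟩

lemma nc_iff (G : SimpleGraph V) (S : Finset V) : NoCutVertex G (S : Set V) ↔ NC G S := by
  classical
  unfold NoCutVertex NC
  refine forall₂_congr fun v hv => ?_
  rw [← pc_iff]
  have : ((S.erase v : Finset V) : Set V) = (S : Set V) \ {v} := by simp
  convert Iff.rfl using 2
  all_goals rw [← this]

end DegCh

/-- Degree-choosability theorem of Borodin and of Erdős, Rubin and Taylor: a connected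
graph with lists `ℓ v` of size at least `deg v` is colourable from the lists unless it
is a Gallai tree with `|ℓ v| = deg v` for every `v`. -/
theorem degree_choosable_unless_gallai [Fintype V] (G : SimpleGraph V)
    [DecidableRel G.Adj] (hconn : G.Connected)
    (ℓ : V → Finset ℕ) (hdeg : ∀ v, G.degree v ≤ (ℓ v).card) :
    (∃ c : V → ℕ, (∀ v, c v ∈ ℓ v) ∧ ∀ u v : V, G.Adj u v → c u ≠ c v) ∨
      (GallaiTree G ∧ ∀ v, (ℓ v).card = G.degree v) := by
  classical
  by_cases hcol : ∃ c : V → ℕ, (∀ v, c v ∈ ℓ v) ∧ ∀ u v : V, G.Adj u v → c u ≠ c v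
  · exact Or.inl hcol
  right
  have hdg : ∀ v, DegCh.dg G Finset.univ v = G.degree v := by
    intro v
    rw [← SimpleGraph.card_neighborFinset_eq_degree]
    unfold DegCh.dg
    congr 1
    ext u
    simp
  have huniv : DegCh.PC G Finset.univ := by
    intro A _ hne hneq
    by_contra hcon
    push Not at hcon
    obtain ⟨a, ha⟩ := hne
    apply hneq
    apply Finset.eq_univ_of_forall
    intro b
    obtain ⟨p⟩ := hconn.preconnected a b
    have key : ∀ x y : V, G.Walk x y → x ∈ A → y ∈ A := by
      intro x y p
      induction p with
      | nil => exact id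
      | cons hxy _ ih =>
        intro hx
        apply ih
        by_contra hy
        exact hcon _ hx _ (Finset.mem_univ _) hy hxy
    exact key _ _ p ha
  obtain ⟨h1, h2⟩ := DegCh.main G _ Finset.univ ℓ rfl huniv ⟨fun v _ => by rw [hdg]; exact hdeg v, by
    rintro ⟨c, hc, hc2⟩
    exact hcol ⟨c, fun v => hc v (Finset.mem_univ v),
      fun u v huv => hc2 u (Finset.mem_univ u) v (Finset.mem_univ v) huv⟩⟩
  refine ⟨⟨hconn, ?_⟩, fun v => by rw [h1 v (Finset.mem_univ v), hdg]⟩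
  intro B₀ hB
  obtain ⟨B, rfl⟩ : ∃ B : Finset V, (B : Set V) = B₀ := ⟨B₀.toFinset, by simp⟩
  obtain ⟨hne, hc, hnc, hmax⟩ := hB
  have hne' : B.Nonempty := by simpa using hne
  have hset : ∀ v, {u | u ∈ (B : Set V) ∧ G.Adj v u}.ncard = DegCh.dg G B v := by
    intro v
    unfold DegCh.dg
    rw [← Set.ncard_coe_finset]
    congr 1
    ext u
    simp
  have hblk : DegCh.Blk G Finset.univ B := by
    refine ⟨Finset.subset_univ _, hne', (DegCh.conn_iff G B hne').1 hc, (DegCh.nc_iff G B).1 hnc, ?_⟩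
    intro B' _ hBB' hpc hnc'
    have := hmax (B' : Set V) (by exact_mod_cast hBB')
      ((DegCh.conn_iff G B' (hne'.mono hBB')).2 hpc) ((DegCh.nc_iff G B').2 hnc')
    exact_mod_cast this
  rcases h2 B hblk with h | h
  · left
    intro u hu v hv huv
    by_contra hadj
    have h3 := h u hu
    have hsub : B.filter (fun w => G.Adj u w) ⊆ (B.erase u).erase v := by
      intro w hw
      rw [Finset.mem_filter] at hw
      refine Finset.mem_erase.2 ⟨?_, Finset.mem_erase.2 ⟨hw.2.ne.symm, hw.1⟩⟩
      rintro rfl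
      exact hadj hw.2
    have h4 := Finset.card_le_card hsub
    have h5 : ((B.erase u).erase v).card + 1 = (B.erase u).card :=
      Finset.card_erase_add_one (Finset.mem_erase.2 ⟨huv.symm, hv⟩)
    have h6 : (B.erase u).card + 1 = B.card := Finset.card_erase_add_one hu
    have h7 : DegCh.dg G B u = (B.filter (fun w => G.Adj u w)).card := by
      unfold DegCh.dg
      congr!
    omega
  · right
    refine ⟨?_, ?_, hc, ?_⟩
    · rw [Set.ncard_coe_finset]; exact h.1
    · rw [Set.ncard_coe_finset]; exact h.2.1
    · intro v hv
      rw [hset]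
      exact h.2.2.2 v hv
end
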